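/- arXiv:1107.2735 — 9 statements merged into one kernel-verified Lean document; each statement's English description precedes it below -/
import Mathlib

section
/- Let n ≥ 3 be an integer, let η > 0, and let m, α, β satisfy 0 < m < (n−2)/n, β > 0, and α = 2β/(1−m). Let v be a radial solution of (E) on [0,∞). Then lim_{r→∞} r²·v(r)^{1−m} / log r = 2(n−1)(n−2−nm) / (β(1−m)). -/
open Real Set Filter

/-- `v` is a radial solution of the elliptic equation
`((n-1)/m)·((v^m)'' + ((n-1)/r)(v^m)') + α v + β r v' = 0` on `[0, ∞)`
with `v > 0`, `v(0) = η`, `v'(0) = 0`. -/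
def IsRadialSol (n : ℕ) (m α β η : ℝ) (v : ℝ → ℝ) : Prop :=
  (∀ r ∈ Set.Ici (0:ℝ), 0 < v r) ∧
  ContinuousOn v (Set.Ici (0:ℝ)) ∧
  ContDiffOn ℝ 2 v (Set.Ioi (0:ℝ)) ∧
  HasDerivWithinAt v 0 (Set.Ici (0:ℝ)) 0 ∧
  v 0 = η ∧
  ∀ r ∈ Set.Ioi (0:ℝ),
    (((n : ℝ) - 1) / m) * (deriv (deriv (fun s => v s ^ m)) r
      + (((n : ℝ) - 1) / r) * deriv (fun s => v s ^ m) r)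
    + α * v r + β * r * deriv v r = 0

lemma aux_barrier (f f' : ℝ → ℝ) (δ s₁ : ℝ) (hf : ∀ s, HasDerivAt f (f' s) s)
    (h1 : δ ≤ f s₁) (hb : ∀ s, s₁ ≤ s → f s = δ → 0 < f' s) : ∀ s, s₁ ≤ s → δ ≤ f s := by
  intro s hs
  have := image_le_of_deriv_right_lt_deriv_boundary (f := fun x => - f x) (f' := fun x => - f' x)
    (a := s₁) (b := s) (B := fun _ => -δ) (B' := fun _ => 0)
    (fun x _ => ((hf x).neg.continuousAt).continuousWithinAt)
    (fun x _ => (hf x).neg.hasDerivWithinAt) (by simpa using h1)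
    (fun x => hasDerivAt_const x _)
    (by
      intro x hx hx2
      have := hb x hx.1 (by linarith)
      linarith)
    (x := s) ⟨hs, le_refl _⟩
  linarith

lemma aux_grow (f f' : ℝ → ℝ) (ε s₁ : ℝ) (hf : ∀ s, HasDerivAt f (f' s) s)
    (h1 : ∀ s, s₁ ≤ s → ε ≤ f' s) : ∀ s, s₁ ≤ s → f s₁ + ε * (s - s₁) ≤ f s := by
  intro s hs
  have := Convex.mul_sub_le_image_sub_of_le_deriv (convex_Ici s₁) (f := f)
    (fun x _ => (hf x).continuousAt.continuousWithinAt)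
    (fun x _ => (hf x).differentiableAt.differentiableWithinAt) (C := ε)
    (by
      intro x hx
      rw [(hf x).deriv]
      rw [interior_Ici] at hx
      exact h1 x hx.le) s₁ (by simp) s (by simpa using hs) hs
  linarith

lemma aux_event (f f' : ℝ → ℝ) (δ ε : ℝ) (hε : 0 < ε) (hf : ∀ s, HasDerivAt f (f' s) s)
    (h : ∀ᶠ s in atTop, f s ≤ δ → ε ≤ f' s) : ∀ᶠ s in atTop, δ ≤ f s := by
  obtain ⟨s₀, hs₀⟩ := eventually_atTop.1 h
  have : ∃ s₁, s₀ ≤ s₁ ∧ δ ≤ f s₁ := by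
    by_contra! hc
    have hg := aux_grow f f' ε s₀ hf (fun s hs => hs₀ s hs (hc s hs).le)
    have h0 := hc s₀ le_rfl
    have hp : 0 ≤ (δ - f s₀) / ε := div_nonneg (by linarith) hε.le
    have h2 := hg (s₀ + (δ - f s₀) / ε) (by linarith)
    have h3 := hc (s₀ + (δ - f s₀) / ε) (by linarith)
    have h4 : ε * (s₀ + (δ - f s₀) / ε - s₀) = δ - f s₀ := by field_simp; ring
    linarith
  obtain ⟨s₁, h1, h2⟩ := this
  filter_upwards [eventually_ge_atTop s₁] with s hs
  exact aux_barrier f f' δ s₁ hf h2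
    (fun x hx he => hε.trans_le (hs₀ x (h1.trans hx) he.le)) s hs

lemma aux_event' (f f' : ℝ → ℝ) (δ ε : ℝ) (hε : 0 < ε) (hf : ∀ s, HasDerivAt f (f' s) s)
    (h : ∀ᶠ s in atTop, δ ≤ f s → f' s ≤ -ε) : ∀ᶠ s in atTop, f s ≤ δ := by
  have := aux_event (fun x => - f x) (fun x => - f' x) (-δ) ε hε (fun s => (hf s).neg)
    (h.mono fun s hs h1 => by have := hs (by linarith); linarith)
  exact this.mono fun s hs => by linarith

lemma aux_main (w g : ℝ → ℝ) (q K b C : ℝ) (hq : 0 < q) (hK : 0 < K) (hC : 0 < C)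
    (hw : ∀ s, 0 < w s) (hw' : ∀ s, HasDerivAt w (q * w s * g s) s)
    (hg' : ∀ s, HasDerivAt g (K - b * g s - g s ^ 2 - C * w s * g s) s)
    (hbot : Tendsto w atBot (nhds 0)) :
    Tendsto (fun s => w s / s) atTop (nhds (q * K / C)) := by
  have hg0 : ∀ s, 0 ≤ g s := by
    intro s₀
    by_contra! hneg
    have h1 : ∀ s, s ≤ s₀ → g s < 0 := by
      intro s hs
      by_contra! hc
      have := aux_barrier g _ 0 s hg' hc (fun x _ he => by simpa [he] using hK) s₀ hs
      linarith
    have h2 : ∀ s, s ≤ s₀ → w s₀ ≤ w s := by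
      intro s hs
      have := antitoneOn_of_deriv_nonpos (convex_Iic s₀) (f := w)
        (fun x _ => (hw' x).continuousAt.continuousWithinAt)
        (fun x _ => (hw' x).differentiableAt.differentiableWithinAt)
        (by
          intro x hx
          rw [(hw' x).deriv]
          rw [interior_Iic] at hx
          have := h1 x (le_of_lt hx)
          exact mul_nonpos_of_nonneg_of_nonpos (mul_pos hq (hw x)).le this.le)
      exact this hs (by simp) hs
    have := ge_of_tendsto hbot ((eventually_le_atBot s₀).mono h2)
    linarith [hw s₀]
  have hmono : Monotone w := monotone_of_deriv_nonneg (fun x => (hw' x).differentiableAt)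
    (fun x => by
      rw [(hw' x).deriv]
      exact mul_nonneg (mul_pos hq (hw x)).le (hg0 x))
  have hwtop : Tendsto w atTop atTop := by
    rcases tendsto_atTop_of_monotone hmono with h | ⟨L, hL⟩
    · exact h
    exfalso
    have hle : ∀ s, w s ≤ L := fun s => hmono.ge_of_tendsto hL s
    have hL0 : 0 < L := (hw 0).trans_le (hle 0)
    set M := |b| + 1 + C * L with hM
    have hMp : 0 < M := by positivity
    set δ := min 1 (K / (2 * M)) with hδ
    have hδp : 0 < δ := by positivity
    have e1 := aux_event g _ δ (K / 2) (by positivity) hg' (Eventually.of_forall (by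
      intro s hs
      have h1 : g s ≤ 1 := hs.trans (min_le_left _ _)
      have h2 : g s ≤ K / (2 * M) := hs.trans (min_le_right _ _)
      have h3 : M * g s ≤ K / 2 := by
        have := mul_le_mul_of_nonneg_left h2 hMp.le
        have e : M * (K / (2 * M)) = K / 2 := by field_simp
        linarith
      have h4 : b * g s ≤ |b| * g s := mul_le_mul_of_nonneg_right (le_abs_self b) (hg0 s)
      have h5 : g s ^ 2 ≤ 1 * g s := by nlinarith [hg0 s]
      have h6 : C * w s * g s ≤ C * L * g s :=
        mul_le_mul_of_nonneg_right (mul_le_mul_of_nonneg_left (hle s) hC.le) (hg0 s)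
      rw [hM] at h3
      nlinarith))
    have e2 := aux_event w _ (L + 1) (q * w 0 * δ) (by have := hw 0; positivity) hw' (by
      filter_upwards [e1, eventually_ge_atTop 0] with s hs h0 _
      have := hmono h0
      have := hw 0
      have := hw s
      gcongr)
    obtain ⟨s, hs⟩ := e2.exists
    linarith [hle s]
  have hgt : Tendsto g atTop (nhds 0) := by
    rw [tendsto_order]
    refine ⟨fun a ha => Eventually.of_forall fun s => ha.trans_le (hg0 s), fun a ha => ?_⟩
    have e := aux_event' g _ (a / 2) 1 one_pos hg' (by
      filter_upwards [hwtop.eventually_ge_atTop (((K + 1) / (a / 2) - b) / C),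
        hwtop.eventually_ge_atTop (- b / C)] with s hs _ hga
      have h1 : (K + 1) / (a / 2) ≤ b + C * w s := by
        rw [div_le_iff₀ hC] at hs
        linarith
      rw [div_le_iff₀ (by positivity)] at h1
      have h2 : 0 ≤ b + C * w s := by
        by_contra! hc
        nlinarith
      nlinarith [mul_le_mul_of_nonneg_left hga h2, sq_nonneg (g s)])
    exact e.mono fun s hs => by linarith
  have hh' : ∀ s, HasDerivAt (fun s => w s * g s)
      (w s * (K - C * (w s * g s) + (- b * g s + (q - 1) * g s ^ 2))) s := by
    intro s
    exact ((hw' s).mul (hg' s)).congr_deriv (by ring)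
  have het : Tendsto (fun s => - b * g s + (q - 1) * g s ^ 2) atTop (nhds 0) := by
    have := (hgt.const_mul (-b)).add ((hgt.pow 2).const_mul (q - 1))
    simpa using this
  have hht : Tendsto (fun s => w s * g s) atTop (nhds (K / C)) := by
    have key : ∀ a, C * (K / C + a) = K + C * a := fun a => by field_simp
    rw [Metric.tendsto_nhds]
    intro ε hε
    have hup := aux_event' _ _ (K / C + ε / 2) (C * ε / 4) (by positivity) hh' (by
      filter_upwards [hwtop.eventually_ge_atTop 1,
        het.eventually_le_const (show (0:ℝ) < C * ε / 4 by positivity)] with s h1 h2 h3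
      have h4 := mul_le_mul_of_nonneg_left h3 hC.le
      rw [key] at h4
      have h5 : K - C * (w s * g s) + (- b * g s + (q - 1) * g s ^ 2) ≤ - (C * ε / 4) := by
        linarith
      have : 0 < C * ε / 4 := by positivity
      nlinarith)
    have hlo := aux_event _ _ (K / C + -(ε / 2)) (C * ε / 4) (by positivity) hh' (by
      filter_upwards [hwtop.eventually_ge_atTop 1,
        het.eventually_const_le (show -(C * ε / 4) < (0:ℝ) by
          have : 0 < C * ε / 4 := by positivity
          linarith)] with s h1 h2 h3
      have h4 := mul_le_mul_of_nonneg_left h3 hC.le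
      rw [key] at h4
      have h5 : (C * ε / 4) ≤ K - C * (w s * g s) + (- b * g s + (q - 1) * g s ^ 2) := by
        linarith
      have : 0 < C * ε / 4 := by positivity
      nlinarith)
    filter_upwards [hup, hlo] with s h1 h2
    rw [Real.dist_eq, abs_lt]
    constructor <;> linarith
  have hwd : Tendsto (fun s => q * w s * g s) atTop (nhds (q * K / C)) := by
    have := hht.const_mul q
    convert this using 1
    · ext s; ring
    · rw [mul_div_assoc]
  set A := q * K / C
  rw [Metric.tendsto_nhds]
  intro ε hε
  have hup := aux_event' (fun s => w s - (A + ε / 2) * s) _ 0 (ε / 4) (by positivity)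
    (fun s => (hw' s).sub ((hasDerivAt_id s).const_mul (A + ε / 2))) (by
      filter_upwards [hwd.eventually_le_const (show A < A + ε / 4 by linarith)] with s hs _
      linarith)
  have hlo := aux_event (fun s => w s - (A - ε / 2) * s) _ 0 (ε / 4) (by positivity)
    (fun s => (hw' s).sub ((hasDerivAt_id s).const_mul (A - ε / 2))) (by
      filter_upwards [hwd.eventually_const_le (show A - ε / 4 < A by linarith)] with s hs _
      linarith)
  filter_upwards [hup, hlo, eventually_gt_atTop 0] with s h1 h2 h3
  have h4 : w s / s ≤ A + ε / 2 := by rw [div_le_iff₀ h3]; linarith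
  have h5 : A - ε / 2 ≤ w s / s := by rw [le_div_iff₀ h3]; linarith
  rw [Real.dist_eq, abs_lt]
  constructor <;> linarith

theorem stmt5 (n : ℕ) (hn : 3 ≤ n) (m α β η : ℝ) (hη : 0 < η)
    (hm : 0 < m) (hm' : m < ((n : ℝ) - 2) / n)
    (hβ : 0 < β) (hα : α = 2 * β / (1 - m))
    (v : ℝ → ℝ) (hv : IsRadialSol n m α β η v) :
    Tendsto (fun r : ℝ => r ^ 2 * v r ^ (1 - m) / Real.log r) atTop
      (nhds (2 * ((n : ℝ) - 1) * ((n : ℝ) - 2 - n * m) / (β * (1 - m)))) := by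
  obtain ⟨hpos, hcont, hC2, -, -, hode⟩ := hv
  have hn3 : (3:ℝ) ≤ n := by exact_mod_cast hn
  have hn0 : (0:ℝ) < n := by linarith
  have hm1 : m < 1 := hm'.trans (by rw [div_lt_one hn0]; linarith)
  have hnm : 0 < (n:ℝ) - 2 - n * m := by
    rw [lt_div_iff₀ hn0] at hm'
    linarith
  have h1m : 0 < 1 - m := by linarith
  have hN : 0 < (n:ℝ) - 1 := by linarith
  -- the function U = v^m
  set U : ℝ → ℝ := fun s => v s ^ m with hU
  have hUC2 : ContDiffOn ℝ 2 U (Ioi 0) :=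
    hC2.rpow_const_of_ne (fun x hx => (hpos x (Set.mem_Ici.2 (le_of_lt (Set.mem_Ioi.1 hx)))).ne')
  have hvd : ∀ r, 0 < r → HasDerivAt v (deriv v r) r := fun r hr =>
    ((hC2.differentiableOn (by norm_num)).differentiableAt (Ioi_mem_nhds hr)).hasDerivAt
  have hUd : ∀ r, 0 < r → HasDerivAt U (deriv U r) r := fun r hr =>
    ((hUC2.differentiableOn (by norm_num)).differentiableAt (Ioi_mem_nhds hr)).hasDerivAt
  have hUdd : ∀ r, 0 < r → HasDerivAt (deriv U) (deriv (deriv U) r) r := fun r hr => by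
    have h1 : ContDiffOn ℝ 1 (deriv U) (Ioi 0) :=
      hUC2.deriv_of_isOpen isOpen_Ioi (by norm_num)
    exact ((h1.differentiableOn (by norm_num)).differentiableAt (Ioi_mem_nhds hr)).hasDerivAt
  have hUpos : ∀ r, 0 < r → 0 < U r := fun r hr => Real.rpow_pos_of_pos (hpos r hr.le) _
  have hUv : ∀ r, 0 < r → v r ^ (1 - m) * U r = v r := fun r hr => by
    rw [hU]
    simp only
    rw [← Real.rpow_add (hpos r hr.le)]
    simp
  have hU1 : ∀ r, 0 < r → deriv U r * v r = m * U r * deriv v r := fun r hr => by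
    have h := (hvd r hr).rpow_const (p := m) (Or.inl (hpos r hr.le).ne')
    have e : deriv U r = _ := h.deriv
    rw [e, Real.rpow_sub_one (hpos r hr.le).ne']
    have := (hpos r hr.le).ne'
    rw [hU]
    field_simp
  set a := 2 / (1 - m) with ha
  have ha1 : a * (1 - m) = 2 := by rw [ha]; field_simp
  let w : ℝ → ℝ := fun s => exp s ^ 2 * v (exp s) ^ (1 - m)
  let g : ℝ → ℝ := fun s => a * m + exp s * deriv U (exp s) / U (exp s)
  have main := aux_main w g ((1 - m) / m) (a * m * (n - 2 - a * m)) (n - 2 - 2 * (a * m))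
    (β / (n - 1)) (by positivity)
    (by
      have : (n:ℝ) - 2 - a * m = (n - 2 - n * m) / (1 - m) := by
        rw [ha]; field_simp; ring
      rw [this]; positivity)
    (by positivity)
    (fun s => by
      have := hpos (exp s) (exp_pos s).le
      positivity)
    (by
      intro s
      have hr := exp_pos s
      have hvp := hpos _ hr.le
      have h1 := ((hvd _ hr).rpow_const (p := 1 - m) (Or.inl hvp.ne')).comp s (Real.hasDerivAt_exp s)
      have h2 := ((Real.hasDerivAt_exp s).pow 2).mul h1
      refine h2.congr_deriv ?_
      simp only [w, g, Function.comp, Pi.pow_apply]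
      have e1 : deriv U (exp s) / U (exp s) = m * deriv v (exp s) / v (exp s) := by
        rw [div_eq_div_iff (hUpos _ hr).ne' hvp.ne', hU1 _ hr]; ring
      rw [mul_div_assoc, e1, Real.rpow_sub_one hvp.ne']
      generalize v (exp s) ^ (1 - m) = X
      generalize deriv v (exp s) = Y at *
      generalize v (exp s) = Z at *
      rw [ha]
      field_simp
      ring)
    (by
      intro s
      have hr := exp_pos s
      have hvp := hpos _ hr.le
      have hup := hUpos _ hr
      have h1 := (hUdd _ hr).comp s (Real.hasDerivAt_exp s)
      have h2 := (hUd _ hr).comp s (Real.hasDerivAt_exp s)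
      have h3 := ((((Real.hasDerivAt_exp s).mul h1).div h2 hup.ne')).const_add (a * m)
      refine h3.congr_deriv ?_
      have ho := hode (exp s) hr
      have hu1 := hU1 _ hr
      have huv := hUv _ hr
      simp only [w, g, Function.comp, Pi.mul_apply]
      generalize v (exp s) ^ (1 - m) = X at *
      change ((n:ℝ) - 1) / m * (deriv (deriv U) (exp s) + ((n:ℝ) - 1) / exp s * deriv U (exp s)) + _
        + _ = 0 at ho
      generalize deriv (deriv U) (exp s) = U2 at *
      generalize deriv U (exp s) = U1 at *
      generalize U (exp s) = U0 at *
      generalize deriv v (exp s) = Y at *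
      generalize v (exp s) = Z at *
      generalize exp s = r at *
      subst huv
      have hY : Y = U1 * X / m := by
        field_simp
        have : U0 * (Y * m) = U0 * (U1 * X) := by linarith
        have := mul_left_cancel₀ hup.ne' this
        linarith
      subst hY
      have hal : α = a * β := by rw [hα, ha]; ring
      subst hal
      have hU2 : U2 = -(n - 1) / r * U1 - m / (n - 1) * (a * β * (X * U0) + β * r * (U1 * X / m)) := by
        field_simp
        field_simp at ho
        linarith
      subst hU2
      field_simp
      ring)
    (by
      have h1 : Tendsto (fun s => exp s) atBot (nhds 0) := Real.tendsto_exp_atBot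
      have h2 : Tendsto v (nhdsWithin 0 (Ici 0)) (nhds (v 0)) := hcont 0 (by simp)
      have h3 : Tendsto (fun s => v (exp s)) atBot (nhds (v 0)) :=
        h2.comp (tendsto_nhdsWithin_iff.2 ⟨h1, Eventually.of_forall fun s => (exp_pos s).le⟩)
      have h4 := (h1.pow 2).mul (h3.rpow_const (p := 1 - m) (Or.inl (hpos 0 (by simp)).ne'))
      simpa using h4)
  have hfin := main.comp Real.tendsto_log_atTop
  have hc : (1 - m) / m * (a * m * (n - 2 - a * m)) / (β / (n - 1))
      = 2 * ((n : ℝ) - 1) * ((n : ℝ) - 2 - n * m) / (β * (1 - m)) := by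
    rw [ha]; field_simp; ring
  rw [hc] at hfin
  refine hfin.congr' ?_
  filter_upwards [eventually_gt_atTop 0] with r hr
  simp only [Function.comp, w, Real.exp_log hr]
end

section
/- Let n ≥ 3 be an integer, let η > 0, let m = (n−2)/(n+2), let β > 0, and let α = 2β/(1−m) (equivalently α = (n+2)β/2). Let v be a radial solution of (E) on [0,∞). Then lim_{r→∞} r²·v(r)^{1−m} / log r = (n−1)(n−2)/β. (This gives the exact decay rate of a radially symmetric locally conformally flat gradient steady Yamabe soliton metric g = v^{4/(n+2)}·dx² on ℝⁿ.) -/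
open Real Set Filter

/-- A barrier lemma: `h` cannot go below `A` afterwards. -/
lemma aux_barrier_s6 (h h' : ℝ → ℝ) (A s1 : ℝ) (hd : ∀ s, HasDerivAt h (h' s) s)
    (h1 : A ≤ h s1) (hb : ∀ s, s1 ≤ s → h s = A → 0 < h' s) (s : ℝ) (hs : s1 ≤ s) : A ≤ h s := by
  have key := image_le_of_deriv_right_lt_deriv_boundary' (f := fun t => - h t)
    (f' := fun t => - h' t) (a := s1) (b := s) (B := fun _ => -A) (B' := fun _ => 0)
    (fun t _ => (hd t).neg.continuousAt.continuousWithinAt)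
    (fun t _ => (hd t).neg.hasDerivWithinAt) (by simpa using h1) continuousOn_const
    (fun t _ => hasDerivWithinAt_const _ _ _)
    (fun t ht hh => by
      have := hb t ht.1 (by simpa using hh)
      simpa using this)
  have := key (x := s) ⟨hs, le_rfl⟩
  simpa using this

lemma aux_ev (h h' : ℝ → ℝ) (A δ : ℝ) (hδ : 0 < δ) (hd : ∀ s, HasDerivAt h (h' s) s)
    (hb : ∀ᶠ s in atTop, h s ≤ A → δ ≤ h' s) : ∀ᶠ s in atTop, A ≤ h s := by
  obtain ⟨S, hS⟩ := eventually_atTop.1 hb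
  have hex : ∃ s1, S ≤ s1 ∧ A ≤ h s1 := by
    by_contra! hcon
    have hm : MonotoneOn (fun s => h s - δ * s) (Set.Ici S) := by
      have hd2 : ∀ s, HasDerivAt (fun s => h s - δ * s) (h' s - δ) s := fun s => by
        simpa using (hd s).fun_sub ((hasDerivAt_id s).const_mul δ)
      apply monotoneOn_of_deriv_nonneg (convex_Ici S)
      · exact fun s _ => (hd2 s).continuousAt.continuousWithinAt
      · exact fun s _ => (hd2 s).differentiableAt.differentiableWithinAt
      · intro s hs
        rw [interior_Ici] at hs
        have hs' : S ≤ s := le_of_lt hs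
        rw [(hd2 s).deriv]
        linarith [hS s hs' (hcon s hs').le]
    have h0 := hcon S le_rfl
    set T := S + (A - h S) / δ with hT
    have hST : S ≤ T := by
      have : 0 ≤ (A - h S) / δ := div_nonneg (by linarith) hδ.le
      linarith
    have h2 := hm (Set.mem_Ici.2 le_rfl) (Set.mem_Ici.2 hST) hST
    have h3 := hcon T hST
    have h4 : δ * T = δ * S + (A - h S) := by rw [hT]; field_simp
    simp only at h2
    linarith
  obtain ⟨s1, hs1, hA⟩ := hex
  filter_upwards [eventually_ge_atTop s1] with s hs
  exact aux_barrier_s6 h h' A s1 hd hA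
    (fun t ht hh => lt_of_lt_of_le hδ (hS t (hs1.trans ht) hh.le)) s hs

lemma aux_ev_le (h h' : ℝ → ℝ) (A δ : ℝ) (hδ : 0 < δ) (hd : ∀ s, HasDerivAt h (h' s) s)
    (hb : ∀ᶠ s in atTop, A ≤ h s → h' s ≤ -δ) : ∀ᶠ s in atTop, h s ≤ A := by
  have := aux_ev (fun s => - h s) (fun s => - h' s) (-A) δ hδ (fun s => (hd s).neg)
    (by
      filter_upwards [hb] with s hs h1
      have := hs (by linarith)
      linarith)
  filter_upwards [this] with s hs
  linarith

lemma aux_core (q z : ℝ → ℝ) (b c k : ℝ) (hb : 0 < b) (hc : 0 < c) (hk : 0 < k)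
    (hq : ∀ s, 0 < q s) (hqd : ∀ s, HasDerivAt q (c * q s * z s) s)
    (hzd : ∀ s, HasDerivAt z (k ^ 2 - z s ^ 2 - b * q s * z s) s)
    (s0 : ℝ) (hz0 : 0 < z s0) :
    Tendsto (fun s => q s / s) atTop (nhds (c * k ^ 2 / b)) := by
  have hk2 : 0 < k ^ 2 := by positivity
  have hz : ∀ s, s0 ≤ s → 0 ≤ z s := aux_barrier_s6 z _ 0 s0 hzd hz0.le (by
    intro s _ h; rw [h]; simpa using hk2)
  have hmono : MonotoneOn q (Set.Ici s0) := by
    apply monotoneOn_of_deriv_nonneg (convex_Ici s0)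
    · exact fun s _ => (hqd s).continuousAt.continuousWithinAt
    · exact fun s _ => (hqd s).differentiableAt.differentiableWithinAt
    · intro s hs
      rw [interior_Ici] at hs
      rw [(hqd s).deriv]
      exact mul_nonneg (mul_pos hc (hq s)).le (hz s (le_of_lt hs))
  have hzev : ∀ᶠ s in atTop, 0 ≤ z s := (eventually_ge_atTop s0).mono hz
  have hqtop : Tendsto q atTop atTop := by
    rw [tendsto_atTop]
    intro M
    by_cases hex : ∃ s1, s0 ≤ s1 ∧ M ≤ q s1
    · obtain ⟨s1, h1, h2⟩ := hex
      filter_upwards [eventually_ge_atTop s1] with s hs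
      exact h2.trans (hmono h1 (h1.trans hs) hs)
    · push Not at hex
      have hM : 0 < M := (hq s0).trans (hex s0 le_rfl)
      obtain ⟨d, hd0, hd1, hd2⟩ : ∃ d : ℝ, 0 < d ∧ d ≤ 1 ∧ d * (1 + b * M) ≤ k ^ 2 / 2 := by
        have hp : 0 < 1 + b * M := by positivity
        refine ⟨min 1 (k ^ 2 / 2 / (1 + b * M)), lt_min one_pos (by positivity),
          min_le_left _ _, ?_⟩
        calc _ ≤ (k ^ 2 / 2 / (1 + b * M)) * (1 + b * M) := by
              gcongr; exact min_le_right _ _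
          _ = _ := by field_simp
      have hzd' : ∀ᶠ s in atTop, d ≤ z s := by
        apply aux_ev z _ d (k ^ 2 / 2) (by positivity) hzd
        filter_upwards [eventually_ge_atTop s0] with s hs hle
        have h0 := hz s hs
        have h1 := hex s hs
        have h2 : z s ^ 2 ≤ d := by nlinarith
        have h3 : b * q s * z s ≤ b * M * d := by
          have := (hq s).le
          gcongr
        nlinarith
      apply aux_ev q _ M (c * q s0 * d) (mul_pos (mul_pos hc (hq s0)) hd0) hqd
      filter_upwards [hzd', eventually_ge_atTop s0] with s h1 hs _
      have h2 := hmono (Set.mem_Ici.2 le_rfl) (Set.mem_Ici.2 hs) hs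
      have h3 := (hq s0).le
      have h4 := (hq s).le
      gcongr
  -- z is eventually at most one
  have hzsmall : ∀ᶠ s in atTop, z s ≤ 1 := by
    apply aux_ev_le z _ 1 1 one_pos hzd
    filter_upwards [hqtop.eventually_ge_atTop ((k ^ 2 + 1) / b)] with s h1 h2
    have h3 : k ^ 2 + 1 ≤ b * q s := by
      rw [div_le_iff₀ hb] at h1; linarith
    nlinarith [mul_le_mul h3 h2 zero_le_one (by linarith), sq_nonneg (z s)]
  set L := k ^ 2 / b with hL
  have hLpos : 0 < L := by positivity
  have hbL : b * L = k ^ 2 := by rw [hL]; field_simp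
  have hgd : ∀ s, HasDerivAt (fun s => q s * z s)
      (q s * (k ^ 2 - b * (q s * z s)) + (c - 1) * (q s * z s) * z s) s := fun s => by
    refine ((hqd s).fun_mul (hzd s)).congr_deriv ?_
    ring
  have hglow : ∀ ε > 0, ∀ᶠ s in atTop, L - ε ≤ q s * z s := by
    intro ε hε
    apply aux_ev _ _ (L - ε) 1 one_pos hgd
    filter_upwards [hzev, hzsmall, hqtop.eventually_ge_atTop ((1 + |c - 1| * L) / (b * ε))]
      with s h0 h1 h2 h3
    rw [div_le_iff₀ (by positivity)] at h2
    have hg0 : 0 ≤ q s * z s := mul_nonneg (hq s).le h0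
    have h4 : |(c - 1) * (q s * z s) * z s| ≤ |c - 1| * L := by
      rw [abs_mul, abs_mul, abs_of_nonneg hg0, abs_of_nonneg h0]
      calc _ ≤ |c - 1| * L * 1 := by
            gcongr
            linarith
        _ = _ := by ring
    have h5 := (abs_le.1 h4).1
    have h6 : q s * (b * ε) ≤ q s * (k ^ 2 - b * (q s * z s)) := by
      have := (hq s).le
      gcongr
      nlinarith
    linarith
  have hgup : ∀ ε > 0, ∀ᶠ s in atTop, q s * z s ≤ L + ε := by
    intro ε hε
    apply aux_ev_le _ _ (L + ε) 1 one_pos hgd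
    filter_upwards [hzev, hzsmall,
      hqtop.eventually_ge_atTop ((1 + |c - 1| * (L + ε)) / (b * ε)),
      hqtop.eventually_ge_atTop (|c - 1| / b)]
      with s h0 h1 h2 h2' h3
    rw [div_le_iff₀ (by positivity)] at h2
    rw [div_le_iff₀ (by positivity)] at h2'
    have h4 : |(c - 1) * z s| ≤ |c - 1| := by
      rw [abs_mul, abs_of_nonneg h0]
      exact mul_le_of_le_one_right (abs_nonneg _) h1
    have h5 := (abs_le.1 h4).2
    have h6 : 0 ≤ b * q s - (c - 1) * z s := by linarith
    have h7 := mul_le_mul_of_nonneg_right h3 h6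
    have h8 : (L + ε) * ((c - 1) * z s) ≤ (L + ε) * |c - 1| := by
      gcongr
    have h9 : L * (b * q s) = q s * k ^ 2 := by rw [← hbL]; ring
    nlinarith
  have hfin : ∀ ε > 0, ∀ᶠ s in atTop, |q s / s - c * k ^ 2 / b| ≤ ε := by
    intro ε hε
    have hcL : c * k ^ 2 / b = c * L := by rw [hL]; ring
    have he : 0 < ε / (2 * c) := by positivity
    have hee : c * (ε / (2 * c)) = ε / 2 := by field_simp
    have hA : ∀ᶠ s in atTop, 0 ≤ q s - (c * L - ε) * s := by
      apply aux_ev _ (fun s => c * q s * z s - (c * L - ε)) 0 (ε / 2) (by positivity)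
      · intro s
        simpa using (hqd s).fun_sub ((hasDerivAt_id s).const_mul (c * L - ε))
      · filter_upwards [hglow _ he] with s hs _
        have := mul_le_mul_of_nonneg_left hs hc.le
        nlinarith
    have hB : ∀ᶠ s in atTop, q s - (c * L + ε) * s ≤ 0 := by
      apply aux_ev_le _ (fun s => c * q s * z s - (c * L + ε)) 0 (ε / 2) (by positivity)
      · intro s
        simpa using (hqd s).fun_sub ((hasDerivAt_id s).const_mul (c * L + ε))
      · filter_upwards [hgup _ he] with s hs _
        have := mul_le_mul_of_nonneg_left hs hc.le
        nlinarith
    filter_upwards [hA, hB, eventually_gt_atTop 0] with s h1 h2 h3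
    rw [hcL, abs_le]
    constructor
    · have : c * L - ε ≤ q s / s := by rw [le_div_iff₀ h3]; linarith
      linarith
    · have : q s / s ≤ c * L + ε := by rw [div_le_iff₀ h3]; linarith
      linarith
  rw [Metric.tendsto_nhds]
  intro ε hε
  filter_upwards [hfin (ε / 2) (by positivity)] with s hs
  rw [Real.dist_eq]
  linarith

theorem stmt6 (n : ℕ) (hn : 3 ≤ n) (m α β η : ℝ) (hη : 0 < η)
    (hm : m = ((n : ℝ) - 2) / ((n : ℝ) + 2))
    (hβ : 0 < β) (hα : α = 2 * β / (1 - m))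
    (v : ℝ → ℝ) (hv : IsRadialSol n m α β η v) :
    Tendsto (fun r : ℝ => r ^ 2 * v r ^ (1 - m) / Real.log r) atTop
      (nhds (((n : ℝ) - 1) * ((n : ℝ) - 2) / β)) := by
  obtain ⟨hpos, hcont, hC2, -, -, hode⟩ := hv
  have hn3 : (3 : ℝ) ≤ n := by exact_mod_cast hn
  generalize hN : (n : ℝ) = N at *
  have hm0 : 0 < m := by rw [hm]; apply div_pos <;> linarith
  have hm1 : 1 - m = 4 / (N + 2) := by
    rw [hm]; have : N + 2 ≠ 0 := by positivity
    field_simp; ring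
  have hm1' : 0 < 1 - m := by rw [hm1]; positivity
  have hα' : α = (N + 2) * β / 2 := by
    rw [hα, hm1]; have : N + 2 ≠ 0 := by positivity
    field_simp; ring
  have hmN : m * (N + 2) = N - 2 := by
    rw [hm]; have : N + 2 ≠ 0 := by positivity
    field_simp
  -- derivatives of v
  have hvd : ∀ r, 0 < r → HasDerivAt v (deriv v r) r := fun r hr =>
    ((hC2.contDiffAt (Ioi_mem_nhds hr)).differentiableAt (by norm_num)).hasDerivAt
  have hv2 : ∀ r, 0 < r → HasDerivAt (deriv v) (deriv (deriv v) r) r := fun r hr => by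
    have h1 : ContDiffOn ℝ 1 (deriv v) (Set.Ioi 0) :=
      hC2.deriv_of_isOpen isOpen_Ioi (by norm_num)
    exact ((h1.contDiffAt (Ioi_mem_nhds hr)).differentiableAt (by norm_num)).hasDerivAt
  have hFd : ∀ r, 0 < r → HasDerivAt (fun s => v s ^ m) (deriv v r * m * v r ^ (m - 1)) r :=
    fun r hr => (hvd r hr).rpow_const (Or.inl (hpos r hr.le).ne')
  have hFdd : ∀ r, 0 < r → deriv (deriv (fun s => v s ^ m)) r =
      deriv (deriv v) r * m * v r ^ (m - 1)
        + deriv v r * m * (deriv v r * (m - 1) * v r ^ (m - 1 - 1)) := by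
    intro r hr
    have he : deriv (fun s => v s ^ m) =ᶠ[nhds r] fun s => deriv v s * m * v s ^ (m - 1) := by
      filter_upwards [Ioi_mem_nhds hr] with s hs
      exact (hFd s hs).deriv
    rw [he.deriv_eq]
    exact (((hv2 r hr).mul_const m).mul
      ((hvd r hr).rpow_const (Or.inl (hpos r hr.le).ne'))).deriv
  -- the equation in terms of v
  have hode2 : ∀ r, 0 < r → (N - 1) * (deriv (deriv v) r * v r
        + (m - 1) * deriv v r ^ 2 + (N - 1) / r * deriv v r * v r)
      + (α * v r + β * r * deriv v r) * (v r * v r ^ (1 - m)) = 0 := by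
    intro r hr
    have h := hode r hr
    have hp := hpos r hr.le
    rw [hFdd r hr, (hFd r hr).deriv] at h
    have e1 : v r ^ (m - 1) = v r ^ (m - 1 - 1) * v r := by
      rw [← Real.rpow_add_one hp.ne']; congr 1; ring
    have e2 : v r ^ (m - 1 - 1) * (v r * v r ^ (1 - m)) = 1 := by
      rw [← mul_assoc, ← e1, ← Real.rpow_add hp]; simp
    rw [e1] at h
    have h' := congrArg (fun t => t * (v r * v r ^ (1 - m))) h
    simp only [zero_mul] at h'
    rw [← h']
    have hm0' := hm0.ne'
    generalize v r ^ (m - 1 - 1) = W at *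
    generalize v r ^ (1 - m) = Z at *
    have : (N - 1) / m * (deriv (deriv v) r * m * (W * v r) + deriv v r * m * (deriv v r * (m - 1) * W)
         + (N - 1) / r * (deriv v r * m * (W * v r)))
        = (N - 1) * (deriv (deriv v) r * v r
        + (m - 1) * deriv v r ^ 2 + (N - 1) / r * deriv v r * v r) * W := by
      field_simp
    rw [this]
    linear_combination (-(N - 1) * (deriv (deriv v) r * v r
        + (m - 1) * deriv v r ^ 2 + (N - 1) / r * deriv v r * v r)) * e2
  -- derivative of q in r
  have hQr : ∀ r, 0 < r → HasDerivAt (fun r => r ^ 2 * v r ^ (1 - m))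
      (2 * r * v r ^ (1 - m) + r ^ 2 * (deriv v r * (1 - m) * v r ^ (1 - m - 1))) r := by
    intro r hr
    have := (hasDerivAt_pow 2 r).fun_mul
      ((hvd r hr).rpow_const (p := 1 - m) (Or.inl (hpos r hr.le).ne'))
    simpa using this
  have hpw : ∀ r, 0 < r → v r ^ (1 - m - 1) = v r ^ (1 - m) / v r := fun r hr => by
    rw [Real.rpow_sub_one (hpos r hr.le).ne']
  have hN2 : N - 2 ≠ 0 := by linarith
  have hN1 : N - 1 ≠ 0 := by linarith
  have hNp : N + 2 ≠ 0 := by linarith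
  -- a point with positive derivative
  obtain ⟨ξ, hξ0, hξ⟩ : ∃ ξ, 0 < ξ ∧ 0 < 2 * ξ * v ξ ^ (1 - m)
      + ξ ^ 2 * (deriv v ξ * (1 - m) * v ξ ^ (1 - m - 1)) := by
    obtain ⟨c, hc, hc'⟩ := exists_hasDerivAt_eq_slope (fun r => r ^ 2 * v r ^ (1 - m)) _
      (zero_lt_one (α := ℝ))
      ((continuousOn_pow 2).mul ((hcont.mono Icc_subset_Ici_self).rpow_const
        (fun x hx => Or.inl (hpos x hx.1).ne'))) (fun x hx => hQr x hx.1)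
    refine ⟨c, hc.1, ?_⟩
    rw [hc']
    have := Real.rpow_pos_of_pos (hpos 1 (Set.mem_Ici.2 zero_le_one)) (1 - m)
    simpa using this
  have hmain := aux_core (fun s => exp s ^ 2 * v (exp s) ^ (1 - m))
    (fun s => (N - 2) / 2 + m * (exp s * deriv v (exp s) / v (exp s)))
    (β / (N - 1)) (4 / (N - 2)) ((N - 2) / 2)
    (div_pos hβ (by linarith)) (div_pos (by norm_num) (by linarith)) (by linarith)
    (fun s => mul_pos (by positivity) (Real.rpow_pos_of_pos (hpos _ (exp_pos s).le) _))
    (fun s => by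
      have h := (hQr _ (exp_pos s)).comp s (Real.hasDerivAt_exp s)
      refine h.congr_deriv ?_
      have hp := hpos _ (exp_pos s).le
      rw [hpw _ (exp_pos s)]
      generalize v (exp s) ^ (1 - m) = Z
      rw [hm]
      field_simp
      ring)
    (fun s => by
      have hp := hpos _ (exp_pos s).le
      have hE := exp_pos s
      have h1 := (hv2 _ hE).comp s (Real.hasDerivAt_exp s)
      have h2 := (hvd _ hE).comp s (Real.hasDerivAt_exp s)
      have h := ((((Real.hasDerivAt_exp s).mul h1).div h2 hp.ne').const_mul m).const_add ((N - 2) / 2)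
      refine h.congr_deriv ?_
      have ho := hode2 _ hE
      simp only [Function.comp, Pi.mul_apply]
      rw [hα'] at ho
      generalize v (exp s) ^ (1 - m) = Z at *
      generalize v (exp s) = V at *
      generalize deriv (deriv v) (exp s) = V2 at *
      generalize deriv v (exp s) = V1 at *
      generalize exp s = E at *
      rw [hm] at ho ⊢
      field_simp at ho ⊢
      linear_combination 2 * E * ho)
    (Real.log ξ) (by
      have hp := hpos _ hξ0.le
      rw [hpw _ hξ0] at hξ
      have hZ := Real.rpow_pos_of_pos hp (1 - m)
      simp only [Real.exp_log hξ0]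
      have : 2 * ξ * v ξ ^ (1 - m) + ξ ^ 2 * (deriv v ξ * (1 - m) * (v ξ ^ (1 - m) / v ξ))
        = (ξ * v ξ ^ (1 - m) * (4 / (N - 2))) * ((N - 2) / 2 + m * (ξ * deriv v ξ / v ξ)) := by
        generalize v ξ ^ (1 - m) = Z
        rw [hm]
        field_simp
        ring
      rw [this] at hξ
      refine (pos_iff_pos_of_mul_pos hξ).1 ?_
      have : 0 < N - 2 := by linarith
      positivity)
  have h2 := hmain.comp Real.tendsto_log_atTop
  have e : 4 / (N - 2) * ((N - 2) / 2) ^ 2 / (β / (N - 1)) = (N - 1) * (N - 2) / β := by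
    field_simp; ring
  rw [e] at h2
  refine h2.congr' ?_
  filter_upwards [eventually_gt_atTop 0] with r hr
  simp [Real.exp_log hr]
end

section
/- Let n ≥ 3 be an integer, let η > 0 and β > 0. For each m ∈ (0, (n−2)/n), set α_m = 2β/(1−m) and let v^{(m)} be the radial solution of (E) on [0,∞) with parameters (m, α_m, β). Then the two iterated limits of r²·v^{(m)}(r)^{1−m}/log r agree: (i) for each m ∈ (0,(n−2)/n), L(m) := lim_{r→∞} r²·v^{(m)}(r)^{1−m}/log r exists, and lim_{m→0⁺} L(m) = 2(n−1)(n−2)/β; and (ii) for each r > 1, ℓ(r) := lim_{m→0⁺} r²·v^{(m)}(r)^{1−m}/log r exists, and lim_{r→∞} ℓ(r) = 2(n−1)(n−2)/β. -/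
open Real Set Filter

/-- The logarithmic first order system satisfied by `y = (1-m) log v` and `q = -r y'`. -/
structure RSys (κ a b y0 : ℝ) (y q : ℝ → ℝ) : Prop where
  hκ : 1 ≤ κ
  ha : 0 ≤ a
  haκ : 2 * a < κ
  hb : 0 < b
  dy : ∀ r : ℝ, 0 < r → HasDerivAt y (-q r / r) r
  dq : ∀ r : ℝ, 0 < r → HasDerivAt q
    ((-κ * q r + a * q r ^ 2 + b * r ^ 2 * Real.exp (y r) * (2 - q r)) / r) r
  lim : Tendsto y (nhdsWithin (0:ℝ) (Set.Ioi 0)) (nhds y0)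

lemma anti_Ioi {f f' : ℝ → ℝ} (h : ∀ r : ℝ, 0 < r → HasDerivAt f (f' r) r)
    (h' : ∀ r : ℝ, 0 < r → f' r ≤ 0) : AntitoneOn f (Set.Ioi 0) := by
  apply antitoneOn_of_deriv_nonpos (convex_Ioi 0)
  · intro x hx
    exact (h x hx).continuousAt.continuousWithinAt
  · intro x hx
    rw [interior_Ioi] at hx
    exact (h x hx).differentiableAt.differentiableWithinAt
  · intro x hx
    rw [interior_Ioi] at hx
    rw [(h x hx).deriv]
    exact h' x hx

lemma mono_Ioi {f f' : ℝ → ℝ} (h : ∀ r : ℝ, 0 < r → HasDerivAt f (f' r) r)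
    (h' : ∀ r : ℝ, 0 < r → 0 ≤ f' r) : MonotoneOn f (Set.Ioi 0) := by
  apply monotoneOn_of_deriv_nonneg (convex_Ioi 0)
  · intro x hx
    exact (h x hx).continuousAt.continuousWithinAt
  · intro x hx
    rw [interior_Ioi] at hx
    exact (h x hx).differentiableAt.differentiableWithinAt
  · intro x hx
    rw [interior_Ioi] at hx
    rw [(h x hx).deriv]
    exact h' x hx

lemma anti_le_lim {f : ℝ → ℝ} {l r : ℝ} (h : AntitoneOn f (Set.Ioi 0))
    (hl : Tendsto f (nhdsWithin (0:ℝ) (Set.Ioi 0)) (nhds l)) (hr : 0 < r) : f r ≤ l := by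
  apply ge_of_tendsto hl
  filter_upwards [Ioo_mem_nhdsGT hr] with x hx
  exact h hx.1 hr hx.2.le

lemma mono_ge_lim {f : ℝ → ℝ} {l r : ℝ} (h : MonotoneOn f (Set.Ioi 0))
    (hl : Tendsto f (nhdsWithin (0:ℝ) (Set.Ioi 0)) (nhds l)) (hr : 0 < r) : l ≤ f r := by
  apply le_of_tendsto hl
  filter_upwards [Ioo_mem_nhdsGT hr] with x hx
  exact h hx.1 hr hx.2.le

lemma barrier {f f' : ℝ → ℝ} {x0 r c : ℝ} (h0 : 0 < x0) (hr : x0 ≤ r)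
    (h : ∀ r : ℝ, 0 < r → HasDerivAt f (f' r) r) (hx : f x0 ≤ c)
    (hb : ∀ x, 0 < x → f x = c → f' x < 0) : f r ≤ c := by
  refine image_le_of_deriv_right_lt_deriv_boundary' (f := f) (f' := f') (B := fun _ => c)
    (B' := fun _ => 0) (a := x0) (b := r) ?_ ?_ hx continuousOn_const ?_ ?_ (right_mem_Icc.2 hr)
  · intro x hx
    exact (h x (h0.trans_le hx.1)).continuousAt.continuousWithinAt
  · intro x hx
    exact (h x (h0.trans_le hx.1)).hasDerivWithinAt
  · intro x hx
    exact hasDerivWithinAt_const _ _ _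
  · intro x hx h1
    exact hb x (h0.trans_le hx.1) h1

namespace RSys
variable {κ a b y0 : ℝ} {y q : ℝ → ℝ}

lemma freq (S : RSys κ a b y0 y q) (ε : ℝ) (hε : 0 < ε) :
    ∃ x, 0 < x ∧ x < ε ∧ |q x| < ε := by
  have h1 := S.lim.eventually (Metric.ball_mem_nhds y0 (show 0 < ε / 4 by positivity))
  rw [eventually_nhdsWithin_iff, Metric.eventually_nhds_iff] at h1
  obtain ⟨d, hd, h1⟩ := h1
  set r := min d ε / 2 with hr
  have hr0 : 0 < r := by positivity
  have hrd : r < d := by have := min_le_left d ε; linarith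
  have hrε : r < ε := by have := min_le_right d ε; linarith
  have A : ∀ x, 0 < x → x ≤ r → |y x - y0| < ε / 4 := by
    intro x hx hxr
    have := @h1 x (by rw [Real.dist_eq, sub_zero, abs_of_pos hx]; linarith) hx
    rwa [Real.dist_eq] at this
  obtain ⟨c, hc, hce⟩ := exists_hasDerivAt_eq_slope y (fun r => -q r / r) (a := r / 2) (b := r)
    (by linarith)
    (fun x hx => (S.dy x (by linarith [hx.1])).continuousAt.continuousWithinAt)
    (fun x hx => S.dy x (by linarith [hx.1]))
  have hc0 : 0 < c := by linarith [hc.1]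
  refine ⟨c, hc0, by linarith [hc.2], ?_⟩
  have B1 := A r hr0 le_rfl
  have B2 := A (r/2) (by linarith) (by linarith)
  have e : q c = - (c / (r/2)) * (y r - y (r/2)) := by
    have hr' : r - r/2 = r/2 := by ring
    rw [hr'] at hce
    have : q c = - c * (-q c / c) := by field_simp
    rw [this, hce]; ring
  have hcr : c / (r/2) ≤ 2 := by
    rw [div_le_iff₀ (by positivity)]; linarith [hc.2]
  have hcr0 : 0 ≤ c / (r/2) := by positivity
  rw [e, abs_mul, abs_neg, abs_of_nonneg hcr0]
  have : |y r - y (r/2)| < ε / 2 := by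
    rw [abs_lt] at *
    constructor <;> linarith
  nlinarith [abs_nonneg (y r - y (r/2))]

lemma q_nonneg (S : RSys κ a b y0 y q) {r : ℝ} (hr : 0 < r) : 0 ≤ q r := by
  apply le_of_forall_pos_le_add
  intro ε hε
  obtain ⟨x, hx0, hx, hq⟩ := S.freq (min ε r) (by positivity)
  have hxr : x < r := hx.trans_le (min_le_right _ _)
  have hqε : |q x| < ε := hq.trans_le (min_le_left _ _)
  have := barrier (f := fun r => - q r) (c := ε) hx0 hxr.le (fun r hr => (S.dq r hr).neg)
    (by have := (abs_lt.1 hqε).1; linarith) (by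
      intro x hx h
      have hq : q x = -ε := by linarith
      rw [hq]
      have h1 := S.hκ
      have h2 := S.ha
      have h3 := S.hb
      have : 0 < (-κ * -ε + a * (-ε)^2 + b * x^2 * Real.exp (y x) * (2 - -ε)) / x := by
        have e1 : -κ * -ε = κ * ε := by ring
        have e2 : (2:ℝ) - -ε = 2 + ε := by ring
        rw [e1, e2]
        positivity
      linarith)
  linarith

lemma q_le_two (S : RSys κ a b y0 y q) {r : ℝ} (hr : 0 < r) : q r ≤ 2 := by
  obtain ⟨x, hx0, hx, hq⟩ := S.freq (min 2 r) (by positivity)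
  have hxr : x < r := hx.trans_le (min_le_right _ _)
  have hqε : |q x| < 2 := hq.trans_le (min_le_left _ _)
  refine barrier (f := q) (c := 2) hx0 hxr.le S.dq (abs_lt.1 hqε).2.le ?_
  intro x hx h
  rw [h]
  have := S.haκ
  apply div_neg_of_neg_of_pos _ hx
  linarith

lemma y_le (S : RSys κ a b y0 y q) {r : ℝ} (hr : 0 < r) : y r ≤ y0 := by
  refine anti_le_lim (anti_Ioi S.dy ?_) S.lim hr
  intro x hx
  have := S.q_nonneg hx
  apply div_nonpos_of_nonpos_of_nonneg <;> linarith

lemma q_le (S : RSys κ a b y0 y q) {r : ℝ} (hr : 0 < r) : q r ≤ b * Real.exp y0 * r ^ 2 := by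
  have hb := S.hb
  have hanti : AntitoneOn (fun r => q r - b * Real.exp y0 * r ^ 2) (Set.Ioi 0) := by
    refine anti_Ioi (f' := fun r => (-κ * q r + a * q r ^ 2 +
      b * r ^ 2 * Real.exp (y r) * (2 - q r)) / r - b * Real.exp y0 * (2 * r)) ?_ ?_
    · intro x hx
      have := ((hasDerivAt_pow 2 x).const_mul (b * Real.exp y0))
      refine HasDerivAt.congr_deriv ((S.dq x hx).fun_sub this) ?_
      simp
    · intro x hx
      rw [sub_nonpos, div_le_iff₀ hx]
      have h1 := S.q_nonneg hx
      have h2 := S.q_le_two hx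
      have h3 := S.haκ
      have h5 := S.ha
      have h4 : Real.exp (y x) ≤ Real.exp y0 := Real.exp_le_exp.2 (S.y_le hx)
      have h6 : a * q x ≤ κ := by nlinarith
      have h7 : a * q x ^ 2 ≤ κ * q x := by nlinarith
      have h8 : b * x ^ 2 * Real.exp (y x) * (2 - q x) ≤ b * x ^ 2 * Real.exp y0 * 2 := by
        have := Real.exp_pos (y x)
        gcongr
        linarith
      linarith
  have : q r - b * Real.exp y0 * r ^ 2 ≤ 0 := by
    apply le_of_forall_pos_le_add
    intro ε hε
    obtain ⟨x, hx0, hx, hq⟩ := S.freq (min ε r) (by positivity)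
    have hxr : x < r := hx.trans_le (min_le_right _ _)
    have hqε : |q x| < ε := hq.trans_le (min_le_left _ _)
    have h1 := hanti hx0 hr hxr.le
    have h2 := (abs_lt.1 hqε).2
    have : 0 ≤ b * Real.exp y0 * x ^ 2 := by positivity
    simp only at h1
    linarith
  linarith

lemma q_lim (S : RSys κ a b y0 y q) :
    Tendsto q (nhdsWithin (0:ℝ) (Set.Ioi 0)) (nhds 0) := by
  have h : Tendsto (fun r : ℝ => b * Real.exp y0 * r ^ 2) (nhdsWithin (0:ℝ) (Set.Ioi 0))
      (nhds 0) := by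
    have : ContinuousAt (fun r : ℝ => b * Real.exp y0 * r ^ 2) 0 := by fun_prop
    have := this.tendsto
    simp only [ne_eq, OfNat.ofNat_ne_zero, not_false_eq_true, zero_pow, mul_zero] at this
    exact this.mono_left nhdsWithin_le_nhds
  refine tendsto_of_tendsto_of_tendsto_of_le_of_le' tendsto_const_nhds h ?_ ?_
  · filter_upwards [self_mem_nhdsWithin] with x hx using S.q_nonneg hx
  · filter_upwards [self_mem_nhdsWithin] with x hx using S.q_le hx

lemma y_one_ge (S : RSys κ a b y0 y q) : y0 - b * Real.exp y0 ≤ y 1 := by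
  have hb := S.hb
  have hm : MonotoneOn (fun r => y r + b * Real.exp y0 * r ^ 2) (Set.Ioi 0) := by
    refine mono_Ioi (f' := fun r => -q r / r + b * Real.exp y0 * (2 * r)) ?_ ?_
    · intro x hx
      have := ((hasDerivAt_pow 2 x).const_mul (b * Real.exp y0))
      refine HasDerivAt.congr_deriv ((S.dy x hx).fun_add this) ?_
      simp
    · intro x hx
      have := S.q_le hx
      have h2 : q x / x ≤ b * Real.exp y0 * x := by
        rw [div_le_iff₀ hx]; linarith
      have h3 : 0 ≤ b * Real.exp y0 * x := by positivity
      rw [neg_div]; linarith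
  have h : Tendsto (fun r : ℝ => b * Real.exp y0 * r ^ 2) (nhdsWithin (0:ℝ) (Set.Ioi 0))
      (nhds 0) := by
    have : ContinuousAt (fun r : ℝ => b * Real.exp y0 * r ^ 2) 0 := by fun_prop
    have := this.tendsto
    simp only [ne_eq, OfNat.ofNat_ne_zero, not_false_eq_true, zero_pow, mul_zero] at this
    exact this.mono_left nhdsWithin_le_nhds
  have := mono_ge_lim hm (S.lim.add h) one_pos
  simp only [one_pow, mul_one, add_zero] at this
  linarith

lemma growth (S : RSys κ a b y0 y q) {B : ℝ} (hB : |y 1| ≤ B) {r : ℝ} (hr : 1 ≤ r) :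
    |b * (r ^ 2 * Real.exp (y r)) - 2 * (κ - 2 * a) * Real.log r| ≤
      (2 + b * Real.exp B + 2 * κ * B) + 2 * κ * Real.sqrt (r ^ 2 * Real.exp (y r)) := by
  have hb := S.hb
  have ha := S.ha
  have hκ := S.hκ
  have haκ := S.haκ
  have hr0 : 0 < r := by linarith
  have hmem1 : (1:ℝ) ∈ Set.Ioi (0:ℝ) := Set.mem_Ioi.2 zero_lt_one
  have dx : ∀ r : ℝ, 0 < r → HasDerivAt (fun r => 2 * Real.log r + y r) ((2 - q r) / r) r := by
    intro x hx
    refine HasDerivAt.congr_deriv (((Real.hasDerivAt_log hx.ne').const_mul 2).fun_add (S.dy x hx)) ?_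
    field_simp
    ring
  have hx : MonotoneOn (fun r => 2 * Real.log r + y r) (Set.Ioi 0) :=
    mono_Ioi dx (fun x hx => div_nonneg (by linarith [S.q_le_two hx]) hx.le)
  have dw : ∀ r : ℝ, 0 < r → HasDerivAt (fun r => b * (r ^ 2 * Real.exp (y r)))
      (b * r ^ 2 * Real.exp (y r) * (2 - q r) / r) r := by
    intro x hx
    refine HasDerivAt.congr_deriv (((hasDerivAt_pow 2 x).fun_mul (S.dy x hx).exp).const_mul b) ?_
    field_simp
    ring
  have dΦ : ∀ (k : ℝ) (r : ℝ), 0 < r → HasDerivAt (fun r => (2 - q r)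
      + b * (r ^ 2 * Real.exp (y r)) + k * (2 * Real.log r + y r)
      - 2 * (κ - 2 * a) * Real.log r)
      ((κ * q r - a * q r ^ 2 + k * (2 - q r) - 2 * (κ - 2 * a)) / r) r := by
    intro k x hx
    refine HasDerivAt.congr_deriv (((((S.dq x hx).const_sub 2).fun_add (dw x hx)).fun_add ((dx x hx).const_mul k)).fun_sub
      ((Real.hasDerivAt_log hx.ne').const_mul (2 * (κ - 2 * a)))) ?_
    field_simp
    ring
  have hΦ := anti_Ioi (dΦ (κ - 4 * a)) (by
    intro x hx
    apply div_nonpos_of_nonpos_of_nonneg _ hx.le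
    nlinarith [mul_nonneg ha (sq_nonneg (2 - q x))]) hmem1 hr0 hr
  have hΨ := mono_Ioi (dΦ (κ - 2 * a)) (by
    intro x hx
    apply div_nonneg _ hx.le
    nlinarith [mul_nonneg ha (mul_nonneg (S.q_nonneg hx) (sub_nonneg.2 (S.q_le_two hx)))])
    hmem1 hr0 hr
  have hx1 := hx hmem1 hr0 hr
  simp only [Real.log_one, mul_zero, zero_add, one_pow, one_mul, sub_zero] at hΦ hΨ hx1
  set x := 2 * Real.log r + y r with hxdef
  have hW : r ^ 2 * Real.exp (y r) = Real.exp x := by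
    rw [hxdef, Real.exp_add, two_mul, Real.exp_add, Real.exp_log hr0]; ring
  rw [hW] at hΦ hΨ ⊢
  have hsq : Real.sqrt (Real.exp x) = Real.exp (x / 2) := (Real.exp_half x).symm
  rw [hsq]
  have hxs : x ≤ 2 * Real.exp (x / 2) := by linarith [Real.add_one_le_exp (x / 2)]
  have hes := Real.exp_pos (x / 2)
  obtain ⟨hB1, hB2⟩ := abs_le.1 hB
  have hB0 : 0 ≤ B := (abs_nonneg _).trans hB
  have hxabs : |x| ≤ B + 2 * Real.exp (x / 2) := by
    rw [abs_le]; constructor <;> linarith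
  have hE1 : Real.exp (y 1) ≤ Real.exp B := Real.exp_le_exp.2 hB2
  have hE2 : b * Real.exp (y 1) ≤ b * Real.exp B := by gcongr
  have hE3 : 0 ≤ b * Real.exp (y 1) := by positivity
  have hk : ∀ k z : ℝ, |k| ≤ κ → |k * z| ≤ κ * |z| := by
    intro k z h; rw [abs_mul]; gcongr
  have k1 : |κ - 4 * a| ≤ κ := by rw [abs_le]; constructor <;> linarith
  have k2 : |κ - 2 * a| ≤ κ := by rw [abs_le]; constructor <;> linarith
  have f1 := abs_le.1 (hk _ x k1)
  have f2 := abs_le.1 (hk _ x k2)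
  have f3 := abs_le.1 (hk _ (y 1) k1)
  have f4 := abs_le.1 (hk _ (y 1) k2)
  have g1 : κ * |x| ≤ κ * (B + 2 * Real.exp (x / 2)) := by gcongr
  have g2 : κ * |y 1| ≤ κ * B := by gcongr
  have q1 := S.q_nonneg hr0
  have q2 := S.q_le_two hr0
  have q3 := S.q_nonneg one_pos
  have q4 := S.q_le_two one_pos
  rw [abs_le]
  constructor <;> linarith [f1.1, f1.2, f2.1, f2.2, f3.1, f3.2, f4.1, f4.2]

end RSys
lemma exp_sub_abs_le {x y N : ℝ} (hx : x ≤ N) (hy : y ≤ N) :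
    |Real.exp x - Real.exp y| ≤ Real.exp N * |x - y| := by
  have key : ∀ x y : ℝ, x ≤ y → y ≤ N →
      Real.exp y - Real.exp x ≤ Real.exp N * (y - x) := by
    intro x y h hy
    have h1 : Real.exp x = Real.exp y * Real.exp (x - y) := by
      rw [← Real.exp_add]; congr 1; ring
    have h2 := Real.add_one_le_exp (x - y)
    have h3 := Real.exp_pos y
    have h4 : Real.exp y ≤ Real.exp N := Real.exp_le_exp.2 hy
    have h5 : Real.exp y * (x - y + 1) ≤ Real.exp y * Real.exp (x - y) := by gcongr
    have h6 : Real.exp y * (y - x) ≤ Real.exp N * (y - x) := by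
      apply mul_le_mul_of_nonneg_right h4; linarith
    rw [h1]; linarith
  rcases le_total x y with h | h
  · rw [abs_sub_comm, abs_of_nonneg (sub_nonneg.2 (Real.exp_le_exp.2 h)), abs_sub_comm x y,
      abs_of_nonneg (sub_nonneg.2 h)]
    exact key x y h hy
  · rw [abs_of_nonneg (sub_nonneg.2 (Real.exp_le_exp.2 h)), abs_of_nonneg (sub_nonneg.2 h)]
    exact key y x h hx

lemma RSys.compare {κ b a1 a2 u1 u2 N : ℝ} {y1 q1 y2 q2 : ℝ → ℝ}
    (S1 : RSys κ a1 b u1 y1 q1) (S2 : RSys κ a2 b u2 y2 q2) (h1 : u1 ≤ N) (h2 : u2 ≤ N)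
    {r : ℝ} (hr : 0 < r) :
    (y1 r - y2 r) ^ 2 ≤ 2 * Real.exp (4 * (b * Real.exp N * (κ + 3)) * r ^ 2) *
      ((κ * (u1 - u2)) ^ 2 + (a1 - a2) ^ 2) := by
  have hb := S1.hb
  have hκ := S1.hκ
  set M := Real.exp N with hM
  have hM0 : 0 < M := Real.exp_pos N
  set C := b * M * (κ + 3) with hC
  have hC0 : 0 < C := by positivity
  set T : ℝ → ℝ := fun r => (a1 * q1 r ^ 2 - a2 * q2 r ^ 2) + b * r ^ 2 *
    (Real.exp (y1 r) * (2 - q1 r) - Real.exp (y2 r) * (2 - q2 r)) with hT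
  set Z : ℝ → ℝ := fun r => κ * (y1 r - y2 r) - (q1 r - q2 r) with hZ
  set Q : ℝ → ℝ := fun r => q1 r - q2 r with hQ
  have dQ : ∀ r, 0 < r → HasDerivAt Q ((-κ * Q r + T r) / r) r := by
    intro x hx
    refine HasDerivAt.congr_deriv ((S1.dq x hx).fun_sub (S2.dq x hx)) ?_
    simp only [hQ, hT]
    field_simp
    ring
  have dZ : ∀ r, 0 < r → HasDerivAt Z (- T r / r) r := by
    intro x hx
    refine HasDerivAt.congr_deriv ((((S1.dy x hx).fun_sub (S2.dy x hx)).const_mul κ).fun_sub (dQ x hx)) ?_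
    simp only [hQ, hT]
    field_simp
    ring
  have hY : ∀ r, |y1 r - y2 r| ≤ |Z r| + |Q r| := by
    intro r
    have e : κ * (y1 r - y2 r) = Z r + Q r := by simp only [hZ, hQ]; ring
    calc |y1 r - y2 r| ≤ κ * |y1 r - y2 r| := le_mul_of_one_le_left (abs_nonneg _) hκ
      _ = |Z r + Q r| := by rw [← e, abs_mul, abs_of_nonneg (by linarith : 0 ≤ κ)]
      _ ≤ _ := abs_add_le _ _
  have hTb : ∀ r, 0 < r → |T r| ≤ C * r ^ 2 * (|a1 - a2| + (|Z r| + |Q r|)) := by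
    intro x hx
    have A1 := S1.q_nonneg hx
    have A2 := S2.q_nonneg hx
    have B1 := S1.q_le_two hx
    have B2 := S2.q_le_two hx
    have E1 : Real.exp u1 ≤ M := Real.exp_le_exp.2 h1
    have E2 : Real.exp u2 ≤ M := Real.exp_le_exp.2 h2
    have D1 : q1 x ≤ b * M * x ^ 2 := (S1.q_le hx).trans (by gcongr)
    have D2 : q2 x ≤ b * M * x ^ 2 := (S2.q_le hx).trans (by gcongr)
    have F1 : y1 x ≤ N := (S1.y_le hx).trans h1
    have F2 : y2 x ≤ N := (S2.y_le hx).trans h2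
    have G2 : Real.exp (y2 x) ≤ M := Real.exp_le_exp.2 F2
    have H := exp_sub_abs_le F1 F2
    have e : T x = (a1 - a2) * q1 x ^ 2 + a2 * (q1 x + q2 x) * Q x +
        b * x ^ 2 * ((Real.exp (y1 x) - Real.exp (y2 x)) * (2 - q1 x)) +
        b * x ^ 2 * (- (Real.exp (y2 x) * Q x)) := by
      simp only [hT, hQ]; ring
    have t1 : |(a1 - a2) * q1 x ^ 2| ≤ |a1 - a2| * (2 * (b * M * x ^ 2)) := by
      rw [abs_mul, abs_of_nonneg (sq_nonneg (q1 x))]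
      gcongr
      nlinarith
    have t2 : |a2 * (q1 x + q2 x) * Q x| ≤ κ * (b * M * x ^ 2) * |Q x| := by
      have ha := S2.ha
      have haκ := S2.haκ
      rw [abs_mul, abs_of_nonneg (by positivity : 0 ≤ a2 * (q1 x + q2 x))]
      have : a2 * (q1 x + q2 x) ≤ (κ / 2) * (b * M * x ^ 2 + b * M * x ^ 2) := by
        gcongr
        linarith
      apply mul_le_mul_of_nonneg_right _ (abs_nonneg _)
      linarith
    have t3 : |b * x ^ 2 * ((Real.exp (y1 x) - Real.exp (y2 x)) * (2 - q1 x))| ≤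
        b * x ^ 2 * (M * (|Z x| + |Q x|) * 2) := by
      rw [abs_mul (b * x ^ 2), abs_of_nonneg (by positivity : 0 ≤ b * x ^ 2), abs_mul,
        abs_of_nonneg (by linarith : 0 ≤ 2 - q1 x)]
      have := hY x
      have h3 : |Real.exp (y1 x) - Real.exp (y2 x)| ≤ M * (|Z x| + |Q x|) :=
        H.trans (by gcongr)
      gcongr
      linarith
    have t4 : |b * x ^ 2 * (- (Real.exp (y2 x) * Q x))| ≤ b * x ^ 2 * (M * |Q x|) := by
      rw [abs_mul (b * x ^ 2), abs_neg, abs_of_nonneg (by positivity : 0 ≤ b * x ^ 2), abs_mul, Real.abs_exp]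
      gcongr
    have tt : |T x| ≤ |a1 - a2| * (2 * (b * M * x ^ 2)) + κ * (b * M * x ^ 2) * |Q x| +
        b * x ^ 2 * (M * (|Z x| + |Q x|) * 2) + b * x ^ 2 * (M * |Q x|) := by
      rw [e]
      refine (abs_add_le _ _).trans (add_le_add ((abs_add_le _ _).trans (add_le_add
        ((abs_add_le _ _).trans (add_le_add t1 t2)) t3)) t4)
    refine tt.trans ?_
    have z1 := abs_nonneg (Z x)
    have z2 := abs_nonneg (a1 - a2)
    have z3 := abs_nonneg (Q x)
    have : 0 ≤ b * M * x ^ 2 * ((κ + 1) * |a1 - a2| + (κ + 1) * |Z x|) := by positivity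
    simp only [hC]
    linarith
  have dF : ∀ r, 0 < r → HasDerivAt
      (fun r => (Z r ^ 2 + Q r ^ 2 + (a1 - a2) ^ 2) * Real.exp (-(4 * C * r ^ 2)))
      (((2 * Z r * (- T r / r) + 2 * Q r * ((-κ * Q r + T r) / r)) -
        8 * C * r * (Z r ^ 2 + Q r ^ 2 + (a1 - a2) ^ 2)) * Real.exp (-(4 * C * r ^ 2))) r := by
    intro x hx
    have d1 := (((dZ x hx).fun_pow 2).fun_add ((dQ x hx).fun_pow 2)).add_const ((a1 - a2) ^ 2)
    have d2 := (((hasDerivAt_pow 2 x).const_mul (4 * C)).fun_neg).exp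
    refine HasDerivAt.congr_deriv (d1.fun_mul d2) ?_
    push_cast
    ring
  have hF := anti_Ioi dF (by
    intro x hx
    apply mul_nonpos_of_nonpos_of_nonneg _ (Real.exp_pos _).le
    rw [sub_nonpos]
    have e : 2 * Z x * (- T x / x) + 2 * Q x * ((-κ * Q x + T x) / x) =
      (2 * (T x * (Q x - Z x)) - 2 * κ * Q x ^ 2) / x := by field_simp; ring
    rw [e, div_le_iff₀ hx]
    have h3 : T x * (Q x - Z x) ≤
        C * x ^ 2 * (|a1 - a2| + (|Z x| + |Q x|)) * (|Z x| + |Q x|) := by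
      refine (le_abs_self _).trans ?_
      rw [abs_mul]
      have : |Q x - Z x| ≤ |Z x| + |Q x| := by
        have := abs_sub (Q x) (Z x); linarith
      have := hTb x hx
      gcongr
    have h4 : (|a1 - a2| + (|Z x| + |Q x|)) * (|Z x| + |Q x|) ≤
        4 * (Z x ^ 2 + Q x ^ 2 + (a1 - a2) ^ 2) := by
      rw [← sq_abs (Z x), ← sq_abs (Q x), ← sq_abs (a1 - a2)]
      nlinarith [sq_nonneg (|Z x| - |Q x|), sq_nonneg (|a1 - a2| - (|Z x| + |Q x|)),
        sq_nonneg (|a1 - a2|), sq_nonneg (|Z x|), sq_nonneg (|Q x|)]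
    have h5 : C * x ^ 2 * ((|a1 - a2| + (|Z x| + |Q x|)) * (|Z x| + |Q x|)) ≤ C * x ^ 2 *
        (4 * (Z x ^ 2 + Q x ^ 2 + (a1 - a2) ^ 2)) := by gcongr
    have h6 : 0 ≤ κ * Q x ^ 2 := by positivity
    linarith)
  have lF : Tendsto (fun r => (Z r ^ 2 + Q r ^ 2 + (a1 - a2) ^ 2) *
      Real.exp (-(4 * C * r ^ 2))) (nhdsWithin (0:ℝ) (Set.Ioi 0))
      (nhds (((κ * (u1 - u2) - (0 - 0)) ^ 2 + (0 - 0) ^ 2 + (a1 - a2) ^ 2) * 1)) := by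
    have lQ := S1.q_lim.sub S2.q_lim
    have lZ := ((S1.lim.sub S2.lim).const_mul κ).sub lQ
    refine (((lZ.pow 2).add (lQ.pow 2)).add_const _).mul ?_
    have : ContinuousAt (fun r : ℝ => Real.exp (-(4 * C * r ^ 2))) 0 := by fun_prop
    have := this.tendsto
    simp only [ne_eq, OfNat.ofNat_ne_zero, not_false_eq_true, zero_pow, mul_zero, neg_zero,
      Real.exp_zero] at this
    exact this.mono_left nhdsWithin_le_nhds
  have main := anti_le_lim hF lF hr
  simp only [sub_zero, mul_one, ne_eq, OfNat.ofNat_ne_zero, not_false_eq_true, zero_pow,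
    add_zero] at main
  have hexp : Real.exp (4 * C * r ^ 2) * Real.exp (-(4 * C * r ^ 2)) = 1 := by
    rw [← Real.exp_add, add_neg_cancel, Real.exp_zero]
  have main2 : Z r ^ 2 + Q r ^ 2 + (a1 - a2) ^ 2 ≤ Real.exp (4 * C * r ^ 2) *
      ((κ * (u1 - u2)) ^ 2 + (a1 - a2) ^ 2) := by
    calc Z r ^ 2 + Q r ^ 2 + (a1 - a2) ^ 2
        = Real.exp (4 * C * r ^ 2) * ((Z r ^ 2 + Q r ^ 2 + (a1 - a2) ^ 2) *
        Real.exp (-(4 * C * r ^ 2))) := by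
          linear_combination (-(Z r ^ 2 + Q r ^ 2 + (a1 - a2) ^ 2)) * hexp
      _ ≤ _ := by gcongr
  have h7 : (y1 r - y2 r) ^ 2 ≤ 2 * (Z r ^ 2 + Q r ^ 2) := by
    have := hY r
    rw [← sq_abs (Z r), ← sq_abs (Q r), ← sq_abs (y1 r - y2 r)]
    have h0 := abs_nonneg (y1 r - y2 r)
    nlinarith [sq_nonneg (|Z r| - |Q r|)]
  nlinarith [sq_nonneg (a1 - a2)]
lemma IsRadialSol.toSys {n : ℕ} (hn : 3 ≤ n) {m β η : ℝ} {v : ℝ → ℝ} (hβ : 0 < β)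
    (hm : m ∈ Set.Ioo (0:ℝ) (((n : ℝ) - 2) / n))
    (h : IsRadialSol n m (2 * β / (1 - m)) β η v) :
    RSys ((n : ℝ) - 2) (m / (1 - m)) (β / ((n : ℝ) - 1)) ((1 - m) * Real.log η)
      (fun r => (1 - m) * Real.log (v r)) (fun r => -(1 - m) * (r * deriv v r / v r)) := by
  obtain ⟨hpos, hcont, hC2, -, h0, hode⟩ := h
  have hn' : (3:ℝ) ≤ n := by exact_mod_cast hn
  have hn0 : (0:ℝ) < n := by linarith
  obtain ⟨hm0, hm1⟩ := hm
  rw [lt_div_iff₀ hn0] at hm1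
  have hm1' : m < 1 := by nlinarith
  have h1m : 0 < 1 - m := by linarith
  have hη : 0 < η := by rw [← h0]; exact hpos 0 (Set.mem_Ici.2 le_rfl)
  have hvpos : ∀ r, 0 < r → 0 < v r := fun r hr => hpos r (Set.mem_Ici.2 hr.le)
  have dv : ∀ r, 0 < r → HasDerivAt v (deriv v r) r := by
    intro r hr
    exact ((hC2.differentiableOn (by norm_num)).differentiableAt (Ioi_mem_nhds hr)).hasDerivAt
  have ddv : ∀ r, 0 < r → HasDerivAt (deriv v) (deriv (deriv v) r) r := by
    intro r hr
    have h2 : ContDiffOn ℝ 1 (deriv v) (Set.Ioi 0) :=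
      hC2.deriv_of_isOpen isOpen_Ioi (by norm_num)
    exact ((h2.differentiableOn (by norm_num)).differentiableAt (Ioi_mem_nhds hr)).hasDerivAt
  refine ⟨by linarith, by positivity, ?_, by apply div_pos hβ; linarith, ?_, ?_, ?_⟩
  · rw [← mul_div_assoc, div_lt_iff₀ h1m]
    nlinarith
  · intro r hr
    have hv := hvpos r hr
    refine HasDerivAt.congr_deriv (((dv r hr).log hv.ne').const_mul (1 - m)) ?_
    field_simp
  · intro r hr
    have hv := hvpos r hr
    have d1 := ((((hasDerivAt_id r).fun_mul (ddv r hr)).fun_div (dv r hr) hv.ne').const_mul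
      (-(1 - m)))
    refine HasDerivAt.congr_deriv d1 ?_
    have o := hode r hr
    have e1 : ∀ s, 0 < s → deriv (fun s => v s ^ m) s = m * v s ^ (m - 1) * deriv v s := by
      intro s hs
      have := (dv s hs).rpow_const (p := m) (Or.inl (hvpos s hs).ne')
      rw [this.deriv]; ring
    have e2 : deriv (deriv (fun s => v s ^ m)) r =
        m * ((m - 1) * (v r ^ (m - 1) / v r) * deriv v r * deriv v r +
          v r ^ (m - 1) * deriv (deriv v) r) := by
      have : deriv (fun s => v s ^ m) =ᶠ[nhds r]
          fun s => m * v s ^ (m - 1) * deriv v s := by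
        filter_upwards [Ioi_mem_nhds hr] with s hs using e1 s hs
      rw [this.deriv_eq]
      have d2 := (((dv r hr).rpow_const (p := m - 1) (Or.inl hv.ne')).const_mul m).fun_mul
        (ddv r hr)
      rw [d2.deriv, Real.rpow_sub_one hv.ne' (m - 1)]
      ring
    rw [e2, e1 r hr] at o
    have hE : Real.exp ((1 - m) * Real.log (v r)) = (v r ^ (m - 1))⁻¹ := by
      rw [Real.rpow_def_of_pos hv, ← Real.exp_neg]
      congr 1; ring
    simp only [hE, id]
    have hP : 0 < v r ^ (m - 1) := Real.rpow_pos_of_pos hv _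
    generalize v r ^ (m - 1) = P at *
    generalize deriv (deriv v) r = v2 at *
    generalize deriv v r = v1 at *
    generalize v r = v0 at *
    have hn1 : ((n:ℝ) - 1) ≠ 0 := by linarith
    have hr' : r ≠ 0 := hr.ne'
    have hm' : m ≠ 0 := hm0.ne'
    have h1m' : 1 - m ≠ 0 := h1m.ne'
    have hv' : v0 ≠ 0 := hv.ne'
    have hP' : P ≠ 0 := hP.ne'
    have hv2 : v2 = -(((m - 1) * v1 ^ 2 / v0 + (n - 1) / r * v1)
        + (2 * β / (1 - m) * v0 + β * r * v1) / ((n - 1) * P)) := by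
      field_simp
      field_simp at o
      linear_combination o
    rw [hv2]
    field_simp
    ring
  · have hc : Tendsto v (nhdsWithin (0:ℝ) (Set.Ioi 0)) (nhds η) := by
      have := (hcont 0 (Set.mem_Ici.2 le_rfl)).tendsto
      rw [h0] at this
      exact this.mono_left (nhdsWithin_mono _ Set.Ioi_subset_Ici_self)
    exact ((hc.log hη.ne')).const_mul _

lemma unif_rate {κ b N : ℝ} (hN : 0 ≤ N) (hκ : 1 ≤ κ) (hb : 0 < b) : ∃ K : ℝ,
    ∀ (a y0 : ℝ) (y q : ℝ → ℝ), RSys κ a b y0 y q → |y0| ≤ N → ∀ r, Real.exp 1 ≤ r →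
      |r ^ 2 * Real.exp (y r) / Real.log r - 2 * (κ - 2 * a) / b| ≤ K / Real.sqrt (Real.log r) := by
  set B := N + b * Real.exp N with hBdef
  have hB0 : 0 ≤ B := by positivity
  set C := 2 + b * Real.exp B + 2 * κ * B with hC
  have hC0 : 0 ≤ C := by positivity
  set D := (2 * (C + 2 * κ ^ 2 / b) + 4 * κ) / b with hD
  have hD0 : 0 ≤ D := by positivity
  refine ⟨(C + 2 * κ * Real.sqrt D) / b, ?_⟩
  intro a y0 y q S hy0 r hr
  obtain ⟨n1, n2⟩ := abs_le.1 hy0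
  have hr1 : 1 ≤ r := by
    have := Real.add_one_le_exp (1:ℝ); linarith
  have hr0 : 0 < r := by linarith
  have hy1 : |y 1| ≤ B := by
    have h1 := S.y_one_ge
    have h2 := S.y_le one_pos
    have h3 : b * Real.exp y0 ≤ b * Real.exp N := by gcongr
    have h4 : 0 ≤ b * Real.exp N := by positivity
    rw [abs_le]; constructor <;> linarith
  have G := S.growth hy1 hr1
  have hS : 1 ≤ Real.log r := by rwa [Real.le_log_iff_exp_le hr0]
  set L := Real.log r with hL
  set W := r ^ 2 * Real.exp (y r) with hW
  have hW0 : 0 ≤ W := by positivity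
  have ha := S.ha
  have haκ := S.haκ
  have sW := Real.sq_sqrt hW0
  have hWle : W ≤ D * L := by
    have g := (abs_le.1 G).2
    have e : 2 * κ * Real.sqrt W ≤ b * W / 2 + 2 * κ ^ 2 / b := by
      have : b * W / 2 + 2 * κ ^ 2 / b - 2 * κ * Real.sqrt W =
          b / 2 * (Real.sqrt W - 2 * κ / b) ^ 2 := by
        nth_rw 1 [← sW]
        field_simp
        ring
      have h2 : 0 ≤ b / 2 * (Real.sqrt W - 2 * κ / b) ^ 2 := by positivity
      linarith
    have h3 : 2 * (κ - 2 * a) * L ≤ 2 * κ * L := by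
      apply mul_le_mul_of_nonneg_right <;> linarith
    have h4 : b * W ≤ 2 * (C + 2 * κ ^ 2 / b) + 4 * κ * L := by linarith
    have h5 : 2 * (C + 2 * κ ^ 2 / b) ≤ 2 * (C + 2 * κ ^ 2 / b) * L :=
      le_mul_of_one_le_right (by positivity) hS
    rw [hD, div_mul_eq_mul_div, le_div_iff₀ hb]
    linarith
  have hsW : Real.sqrt W ≤ Real.sqrt D * Real.sqrt L := by
    rw [← Real.sqrt_mul hD0]
    exact Real.sqrt_le_sqrt hWle
  have hsL : 1 ≤ Real.sqrt L := by rw [Real.one_le_sqrt]; exact hS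
  have sL := Real.sq_sqrt (by linarith : 0 ≤ L)
  have e : W / L - 2 * (κ - 2 * a) / b = (b * W - 2 * (κ - 2 * a) * L) / (b * L) := by
    have : L ≠ 0 := by linarith
    field_simp
  have hbL : 0 < b * L := by positivity
  rw [e, abs_div, abs_of_pos hbL, div_le_div_iff₀ hbL (by linarith)]
  have h6 : |b * W - 2 * (κ - 2 * a) * L| ≤ (C + 2 * κ * Real.sqrt D) * Real.sqrt L := by
    have t1 : C ≤ C * Real.sqrt L := le_mul_of_one_le_right hC0 hsL
    have t2 : 2 * κ * Real.sqrt W ≤ 2 * κ * (Real.sqrt D * Real.sqrt L) := by gcongr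
    linarith
  calc |b * W - 2 * (κ - 2 * a) * L| * Real.sqrt L
      ≤ ((C + 2 * κ * Real.sqrt D) * Real.sqrt L) * Real.sqrt L := by gcongr
    _ = (C + 2 * κ * Real.sqrt D) * (Real.sqrt L ^ 2) := by ring
    _ = (C + 2 * κ * Real.sqrt D) * L := by rw [sL]
    _ = (C + 2 * κ * Real.sqrt D) / b * (b * L) := by field_simp

theorem stmt7 (n : ℕ) (hn : 3 ≤ n) (β η : ℝ) (hη : 0 < η) (hβ : 0 < β)
    (V : ℝ → ℝ → ℝ)
    (hV : ∀ m ∈ Set.Ioo (0:ℝ) (((n : ℝ) - 2) / n),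
      IsRadialSol n m (2 * β / (1 - m)) β η (V m)) :
    (∃ L : ℝ → ℝ,
      (∀ m ∈ Set.Ioo (0:ℝ) (((n : ℝ) - 2) / n),
        Tendsto (fun r : ℝ => r ^ 2 * V m r ^ (1 - m) / Real.log r) atTop
          (nhds (L m))) ∧
      Tendsto L (nhdsWithin (0:ℝ) (Set.Ioi (0:ℝ)))
        (nhds (2 * ((n : ℝ) - 1) * ((n : ℝ) - 2) / β))) ∧
    (∃ l : ℝ → ℝ,
      (∀ r : ℝ, 1 < r →
        Tendsto (fun m : ℝ => r ^ 2 * V m r ^ (1 - m) / Real.log r)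
          (nhdsWithin (0:ℝ) (Set.Ioi (0:ℝ))) (nhds (l r))) ∧
      Tendsto l atTop (nhds (2 * ((n : ℝ) - 1) * ((n : ℝ) - 2) / β))) := by
  have hn' : (3:ℝ) ≤ n := by exact_mod_cast hn
  have hn0 : (0:ℝ) < n := by linarith
  have hκ : (1:ℝ) ≤ (n:ℝ) - 2 := by linarith
  have hb : 0 < β / ((n:ℝ) - 1) := div_pos hβ (by linarith)
  set κ : ℝ := (n:ℝ) - 2 with hκd
  set b : ℝ := β / ((n:ℝ) - 1) with hbd
  set I := Set.Ioo (0:ℝ) (κ / n) with hI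
  have hI1 : ∀ m ∈ I, 0 < m ∧ 2 / (n:ℝ) < 1 - m := by
    intro m hm
    refine ⟨hm.1, ?_⟩
    have h1 := hm.2
    rw [hκd, sub_div, div_self hn0.ne'] at h1
    linarith
  have h2n : 0 < 2 / (n:ℝ) := by positivity
  have hIm : ∀ᶠ m in nhdsWithin (0:ℝ) (Set.Ioi (0:ℝ)), m ∈ I :=
    Ioo_mem_nhdsGT (by positivity)
  have S := fun m hm => (hV m hm).toSys hn hβ hm
  have hN : (0:ℝ) ≤ |Real.log η| := abs_nonneg _
  have hy0 : ∀ m ∈ I, |(1 - m) * Real.log η| ≤ |Real.log η| := by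
    intro m hm
    have := hI1 m hm
    rw [abs_mul, abs_of_nonneg (by linarith)]
    exact mul_le_of_le_one_left hN (by linarith)
  have hVpos : ∀ m ∈ I, ∀ r, 0 < r → 0 < V m r := fun m hm r hr =>
    (hV m hm).1 r (Set.mem_Ici.2 hr.le)
  have hexp : ∀ m ∈ I, ∀ r, 0 < r →
      Real.exp ((1 - m) * Real.log (V m r)) = V m r ^ (1 - m) := by
    intro m hm r hr
    rw [Real.rpow_def_of_pos (hVpos m hm r hr), mul_comm]
  obtain ⟨K, hK⟩ := unif_rate hN hκ hb
  have rate : ∀ m ∈ I, ∀ r, Real.exp 1 ≤ r →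
      |r ^ 2 * V m r ^ (1 - m) / Real.log r - 2 * (κ - 2 * (m / (1 - m))) / b| ≤
        K / Real.sqrt (Real.log r) := by
    intro m hm r hr
    have := hK _ _ _ _ (S m hm) (hy0 m hm) r hr
    rwa [hexp m hm r ((Real.exp_pos 1).trans_le hr)] at this
  have hε : Tendsto (fun r : ℝ => K / Real.sqrt (Real.log r)) atTop (nhds 0) :=
    tendsto_const_nhds.div_atTop (Real.tendsto_sqrt_atTop.comp Real.tendsto_log_atTop)
  have hL : Tendsto (fun m : ℝ => 2 * (κ - 2 * (m / (1 - m))) / b)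
      (nhdsWithin (0:ℝ) (Set.Ioi (0:ℝ))) (nhds (2 * ((n : ℝ) - 1) * κ / β)) := by
    have : ContinuousAt (fun m : ℝ => 2 * (κ - 2 * (m / (1 - m))) / b) 0 := by
      have : ContinuousAt (fun m : ℝ => m / (1 - m)) 0 :=
        continuousAt_id.div (by fun_prop) (by norm_num)
      fun_prop
    have := this.tendsto
    have e : 2 * (κ - 2 * ((0:ℝ) / (1 - 0))) / b = 2 * ((n : ℝ) - 1) * κ / β := by
      have h1 : (n:ℝ) - 1 ≠ 0 := by linarith
      rw [hbd]
      field_simp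
      ring
    rw [e] at this
    exact this.mono_left nhdsWithin_le_nhds
  refine ⟨⟨fun m => 2 * (κ - 2 * (m / (1 - m))) / b, ?_, hL⟩, ?_⟩
  · intro m hm
    rw [tendsto_iff_norm_sub_tendsto_zero]
    refine squeeze_zero' (Eventually.of_forall fun _ => norm_nonneg _) ?_ hε
    filter_upwards [eventually_ge_atTop (Real.exp 1)] with r hr
    exact rate m hm r hr
  · have key : ∀ r : ℝ, 1 < r → ∃ l : ℝ,
        Tendsto (fun m : ℝ => r ^ 2 * V m r ^ (1 - m) / Real.log r)
          (nhdsWithin (0:ℝ) (Set.Ioi (0:ℝ))) (nhds l) := by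
      intro r hr
      have hr0 : 0 < r := by linarith
      set A := 2 * Real.exp (4 * (b * Real.exp |Real.log η| * (κ + 3)) * r ^ 2) with hA
      have hA0 : 0 < A := by positivity
      have lip : LipschitzOnWith
          (Real.toNNReal (Real.sqrt (A * ((κ * Real.log η) ^ 2 + ((n:ℝ) ^ 2 / 4) ^ 2))))
          (fun m => (1 - m) * Real.log (V m r)) I := by
        apply LipschitzOnWith.of_dist_le_mul
        intro m1 hm1 m2 hm2
        rw [Real.coe_toNNReal _ (Real.sqrt_nonneg _), Real.dist_eq, Real.dist_eq]
        have c := (S m1 hm1).compare (S m2 hm2) ((le_abs_self _).trans (hy0 m1 hm1))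
          ((le_abs_self _).trans (hy0 m2 hm2)) hr0
        rw [← Real.sqrt_sq (abs_nonneg (m1 - m2)), ← Real.sqrt_mul (by positivity)]
        apply Real.abs_le_sqrt
        refine c.trans ?_
        rw [← hκd, ← hbd, ← hA, mul_assoc A]
        apply mul_le_mul_of_nonneg_left _ hA0.le
        rw [sq_abs, add_mul]
        obtain ⟨-, i1⟩ := hI1 m1 hm1
        obtain ⟨-, i2⟩ := hI1 m2 hm2
        have p1 : 0 < 1 - m1 := by linarith
        have p2 : 0 < 1 - m2 := by linarith
        have e1 : m1 / (1 - m1) - m2 / (1 - m2) = (1 / ((1 - m1) * (1 - m2))) * (m1 - m2) := by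
          field_simp
          ring
        have e2 : 1 / ((1 - m1) * (1 - m2)) ≤ (n:ℝ) ^ 2 / 4 := by
          have h3 : 2 / (n:ℝ) * (2 / n) ≤ (1 - m1) * (1 - m2) := by gcongr
          calc 1 / ((1 - m1) * (1 - m2)) ≤ 1 / (2 / (n:ℝ) * (2 / n)) := by gcongr
            _ = (n:ℝ) ^ 2 / 4 := by field_simp; norm_num
        have e3 : 0 ≤ 1 / ((1 - m1) * (1 - m2)) := by positivity
        rw [e1, mul_pow (1 / ((1 - m1) * (1 - m2)))]
        apply add_le_add
        · apply le_of_eq; ring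
        · gcongr
      obtain ⟨g, hg, hgI⟩ := lip.extend_real
      have hg0 : Tendsto g (nhdsWithin (0:ℝ) (Set.Ioi (0:ℝ))) (nhds (g 0)) :=
        (hg.continuous.tendsto 0).mono_left nhdsWithin_le_nhds
      refine ⟨r ^ 2 * Real.exp (g 0) / Real.log r, ?_⟩
      have : Tendsto (fun m => r ^ 2 * Real.exp (g m) / Real.log r)
          (nhdsWithin (0:ℝ) (Set.Ioi (0:ℝ))) (nhds (r ^ 2 * Real.exp (g 0) / Real.log r)) :=
        (((Real.continuous_exp.tendsto _).comp hg0).const_mul _).div_const _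
      refine this.congr' ?_
      filter_upwards [hIm] with m hm
      rw [← hgI hm, hexp m hm r hr0]
    choose! l hl using key
    refine ⟨l, hl, ?_⟩
    rw [tendsto_iff_norm_sub_tendsto_zero]
    refine squeeze_zero' (Eventually.of_forall fun _ => norm_nonneg _) ?_ hε
    filter_upwards [eventually_ge_atTop (Real.exp 1)] with r hr
    have hr1 : 1 < r := by
      have := Real.add_one_le_exp (1:ℝ); linarith
    have h1 := ((hl r hr1).sub hL).norm
    refine le_of_tendsto h1 ?_
    filter_upwards [hIm] with m hm
    exact rate m hm r hr
end

section
/- Let n ≥ 3 be an integer, let η > 0, and let m, α, β satisfy 0 < m < (n−2)/n and 2β/(1−m) > max(α, 0). Let v be a radial solution of (E) on [0,∞). Then there exists a constant A > 0 such that lim_{r→∞} r^{α/β}·v(r) = A. -/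
open Real Set Filter

/-- Riccati form of the equation for the logarithmic derivative. -/
lemma riccati (n : ℕ) (hn : 3 ≤ n) (m α β η : ℝ) (hm : 0 < m)
    (v : ℝ → ℝ) (hv : IsRadialSol n m α β η v) (r : ℝ) (hr : 0 < r) :
    HasDerivAt v (deriv v r) r ∧ ∃ L' : ℝ, HasDerivAt (fun s => s * deriv v s / v s) L' r ∧
      r * L' = - m * (r * deriv v r / v r) ^ 2 - ((n : ℝ) - 2) * (r * deriv v r / v r)
        - (r ^ 2 * v r ^ (1 - m)) / ((n : ℝ) - 1) * (α + β * (r * deriv v r / v r)) := by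
  obtain ⟨hpos, -, hC, -, -, heq⟩ := hv
  have hd : ∀ s, 0 < s → HasDerivAt v (deriv v s) s := by
    intro s hs
    have := (hC.differentiableOn (by norm_num)).differentiableAt (Ioi_mem_nhds hs)
    exact this.hasDerivAt
  have hC1 : ContDiffOn ℝ 1 (deriv v) (Set.Ioi (0:ℝ)) :=
    hC.deriv_of_isOpen isOpen_Ioi (by norm_num)
  have hd2 : HasDerivAt (deriv v) (deriv (deriv v) r) r :=
    ((hC1.differentiableOn (by norm_num)).differentiableAt (Ioi_mem_nhds hr)).hasDerivAt
  have hvr : 0 < v r := hpos r hr.le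
  have hw : ∀ s, 0 < s → HasDerivAt (fun s => v s ^ m) (deriv v s * m * v s ^ (m - 1)) s := by
    intro s hs
    exact (hd s hs).rpow_const (Or.inl (hpos s hs.le).ne')
  have hw1 : deriv (fun s => v s ^ m) =ᶠ[nhds r] fun s => deriv v s * m * v s ^ (m - 1) := by
    filter_upwards [Ioi_mem_nhds hr] with s hs
    exact (hw s hs).deriv
  have hw2 : deriv (deriv (fun s => v s ^ m)) r
      = deriv (deriv v) r * m * v r ^ (m - 1)
        + deriv v r * m * (deriv v r * (m - 1) * v r ^ (m - 1 - 1)) := by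
    rw [hw1.deriv_eq]
    exact ((hd2.mul_const m).mul ((hd r hr).rpow_const (Or.inl hvr.ne'))).deriv
  refine ⟨hd r hr, _, (((hasDerivAt_id r).mul hd2).div (hd r hr) hvr.ne'), ?_⟩
  have h := heq r hr
  rw [hw2, (hw r hr).deriv, Real.rpow_sub_one hvr.ne' (m - 1)] at h
  have hX : v r ^ (1 - m) = (v r ^ (m - 1))⁻¹ := by
    rw [← Real.rpow_neg hvr.le]; congr 1; ring
  have hXpos : 0 < v r ^ (m - 1) := Real.rpow_pos_of_pos hvr _
  rw [hX]
  simp only [Pi.mul_apply, id]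
  have hn1 : (0:ℝ) < (n:ℝ) - 1 := by
    have : (3:ℝ) ≤ n := by exact_mod_cast hn
    linarith
  generalize v r ^ (m - 1) = X at *
  generalize deriv (deriv v) r = v2 at *
  generalize deriv v r = v1 at *
  generalize v r = v0 at *
  generalize (n:ℝ) = N at *
  have hr' := hr.ne'
  have hv' := hvr.ne'
  have hX' := hXpos.ne'
  have hn' := hn1.ne'
  have hm1 := hm.ne'
  field_simp at h ⊢
  linear_combination h

/-- If `r^δ v` has nonpositive derivative near `0`, contradiction. -/
lemma no_blowup (v : ℝ → ℝ) (hpos : ∀ r ∈ Set.Ici (0:ℝ), 0 < v r)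
    (hc : ContinuousOn v (Set.Ici (0:ℝ)))
    (hd : ∀ r, 0 < r → HasDerivAt v (deriv v r) r)
    (δ r0 : ℝ) (hδ : 0 < δ) (hr0 : 0 < r0)
    (h : ∀ r ∈ Set.Ioc 0 r0, r * deriv v r / v r ≤ - δ) : False := by
  have hcont : ContinuousOn (fun r => r ^ δ * v r) (Set.Icc 0 r0) :=
    ((Real.continuous_rpow_const hδ.le).continuousOn).mul (hc.mono (fun x hx => hx.1))
  have hanti : AntitoneOn (fun r => r ^ δ * v r) (Set.Icc 0 r0) := by
    apply antitoneOn_of_hasDerivWithinAt_nonpos (convex_Icc 0 r0) hcont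
      (f' := fun r => (1 * δ * r ^ (δ - 1)) * v r + r ^ δ * deriv v r)
    · intro x hx
      rw [interior_Icc] at hx
      exact (((hasDerivAt_id x).rpow_const (Or.inl hx.1.ne')).mul (hd x hx.1)).hasDerivWithinAt
    · intro x hx
      rw [interior_Icc] at hx
      have h1 := h x ⟨hx.1, hx.2.le⟩
      have hvx := hpos x hx.1.le
      rw [div_le_iff₀ hvx] at h1
      have h2 : 0 < x ^ (δ - 1) := Real.rpow_pos_of_pos hx.1 _
      have h3 : x ^ δ = x ^ (δ - 1) * x := by
        rw [Real.rpow_sub_one hx.1.ne']; field_simp [hx.1.ne']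
      show (1 * δ * x ^ (δ - 1)) * v x + x ^ δ * deriv v x ≤ 0
      rw [h3]
      nlinarith
  have := hanti (left_mem_Icc.2 hr0.le) (right_mem_Icc.2 hr0.le) hr0.le
  simp only [Real.zero_rpow hδ.ne', zero_mul] at this
  have h2 := mul_pos (Real.rpow_pos_of_pos hr0 δ) (hpos r0 hr0.le)
  linarith

/-- Strict forward barrier: a function with positive derivative at its zeros stays nonnegative. -/
lemma barrier_pos (f f' : ℝ → ℝ) (hf : ∀ r, 0 < r → HasDerivAt f (f' r) r)
    (h0 : ∀ r, 0 < r → f r = 0 → 0 < f' r) (a b : ℝ) (ha : 0 < a) (hab : a ≤ b)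
    (hfa : 0 ≤ f a) : 0 ≤ f b := by
  have := image_le_of_deriv_right_lt_deriv_boundary' (f := fun x => - f x) (f' := fun x => - f' x)
    (a := a) (b := b) (B := fun _ => 0) (B' := fun _ => 0)
    (fun x hx => ((hf x (ha.trans_le hx.1)).neg.continuousAt).continuousWithinAt)
    (fun x hx => (hf x (ha.trans_le hx.1)).neg.hasDerivWithinAt)
    (by simpa using hfa) continuousOn_const
    (fun x hx => (hasDerivWithinAt_const _ _ _))
    (fun x hx hx0 => by
      have := h0 x (ha.trans_le hx.1) (by simpa using hx0)
      simpa using this)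
    (right_mem_Icc.2 hab)
  simpa using this

/-- Non-strict version. -/
lemma barrier_mono (f f' : ℝ → ℝ) (hf : ∀ r, 0 < r → HasDerivAt f (f' r) r)
    (h0 : ∀ r, 0 < r → f r < 0 → 0 ≤ f' r) (a b : ℝ) (ha : 0 < a) (hab : a ≤ b)
    (hfb : f b < 0) : f a ≤ f b := by
  by_contra hcon
  push Not at hcon
  have hab' : a < b := lt_of_le_of_ne hab (by rintro rfl; exact lt_irrefl _ hcon)
  set c := max (- f a) (- f b / 2) with hc
  have hcpos : 0 < c := lt_max_of_lt_right (by linarith)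
  have hcb : c < - f b := max_lt (by linarith) (by linarith)
  set ε := (- f b - c) / (2 * (b - a)) with hε
  have hεpos : 0 < ε := div_pos (by linarith) (by linarith)
  have := image_le_of_deriv_right_lt_deriv_boundary' (f := fun x => - f x) (f' := fun x => - f' x)
    (a := a) (b := b) (B := fun x => c + (x - a) * ε) (B' := fun _ => 1 * ε)
    (fun x hx => ((hf x (ha.trans_le hx.1)).neg.continuousAt).continuousWithinAt)
    (fun x hx => (hf x (ha.trans_le hx.1)).neg.hasDerivWithinAt)
    (by simp [hc]) (by fun_prop)
    (fun x hx => ((((hasDerivAt_id x).sub_const a).mul_const ε).const_add c).hasDerivWithinAt)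
    (fun x hx hx0 => by
      have h1 : 0 ≤ (x - a) * ε := mul_nonneg (by linarith [hx.1]) hεpos.le
      have := h0 x (ha.trans_le hx.1) (by linarith)
      linarith)
    (right_mem_Icc.2 hab)
  have h2 : (b - a) * ε = (- f b - c) / 2 := by
    rw [hε]; field_simp [(sub_pos.2 hab').ne']
  linarith

/-- Decay of the Riccati variable. -/
lemma decay (p p' E : ℝ → ℝ) (m a b K M k σ : ℝ) (hm : 0 < m) (hK : 0 < K)
    (hk : 0 < k) (hσ : 0 < σ)
    (hp : ∀ r, 0 < r → HasDerivAt p (p' r) r)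
    (heq : ∀ r, 0 < r → r * p' r = - m * p r ^ 2 - a * p r + b - K * E r * p r)
    (hM : ∀ r, 0 < r → - M ≤ p r) (hE : ∀ r, 1 ≤ r → k * r ^ σ ≤ E r) :
    ∃ r0 C : ℝ, 0 < r0 ∧ 0 < C ∧ ∀ r, r0 ≤ r → |p r| ≤ C * r ^ (-(σ / 2)) := by
  have hKk : 0 < K * k := mul_pos hK hk
  obtain ⟨r0, h1, hr0⟩ : ∃ r0 : ℝ, 1 ≤ r0 ∧ ∀ r, r0 ≤ r →
      (σ + 2 * m * M + 1 - 2 * a) / (K * k) ≤ r ^ σ := by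
    have := (tendsto_rpow_atTop hσ).eventually_ge_atTop
      ((σ + 2 * m * M + 1 - 2 * a) / (K * k))
    obtain ⟨x, hx⟩ := eventually_atTop.1 this
    exact ⟨max x 1, le_max_right _ _, fun r hr => hx r ((le_max_left _ _).trans hr)⟩
  set B := max (r0 ^ σ * p r0 ^ 2) (b ^ 2 / (K * k) + 1) with hB
  have hBpos : 0 < B := lt_max_of_lt_right (by positivity)
  have hZ : ∀ r, r0 ≤ r → r ^ σ * p r ^ 2 ≤ B := by
    intro R hR
    have hder : ∀ x, 0 < x → HasDerivAt (fun x => x ^ σ * p x ^ 2)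
        (1 * σ * x ^ (σ - 1) * p x ^ 2 + x ^ σ * ((2:ℕ) * p x ^ (2 - 1) * p' x)) x := fun x hx =>
      ((hasDerivAt_id x).rpow_const (Or.inl hx.ne')).mul ((hp x hx).pow 2)
    have := image_le_of_deriv_right_lt_deriv_boundary' (f := fun x => x ^ σ * p x ^ 2)
      (f' := fun x => 1 * σ * x ^ (σ - 1) * p x ^ 2 + x ^ σ * ((2:ℕ) * p x ^ (2 - 1) * p' x))
      (a := r0) (b := R) (B := fun _ => B) (B' := fun _ => 0)
      (fun x hx => (hder x (by linarith [hx.1])).continuousAt.continuousWithinAt)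
      (fun x hx => (hder x (by linarith [hx.1])).hasDerivWithinAt)
      (le_max_left _ _) continuousOn_const
      (fun x hx => (hasDerivWithinAt_const _ _ _))
      (fun x hx hx0 => by
        have hx1 : 0 < x := by linarith [hx.1]
        have e1 := heq x hx1
        have e2 := hM x hx1
        have e3 := hE x (h1.trans hx.1)
        have e4 := hr0 x hx.1
        rw [div_le_iff₀ hKk] at e4
        have e5 : x ^ (σ - 1) * x = x ^ σ := by
          rw [Real.rpow_sub_one hx1.ne']; field_simp [hx1.ne']
        have e6 : 0 < x ^ σ := Real.rpow_pos_of_pos hx1 _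
        have e7 : b ^ 2 < K * k * B := by
          have : b ^ 2 / (K * k) < B := lt_of_lt_of_le (by linarith) (le_max_right _ _)
          rw [div_lt_iff₀ hKk] at this; linarith
        have key : x * (1 * σ * x ^ (σ - 1) * p x ^ 2
            + x ^ σ * ((2:ℕ) * p x ^ (2 - 1) * p' x)) < 0 := by
          have : x * (1 * σ * x ^ (σ - 1) * p x ^ 2
            + x ^ σ * ((2:ℕ) * p x ^ (2 - 1) * p' x)) = x ^ σ * (σ * p x ^ 2 +
              2 * p x * (- m * p x ^ 2 - a * p x + b - K * E x * p x)) := by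
            rw [← e1, ← e5]; push_cast; ring
          rw [this]
          generalize x ^ σ = X at *
          generalize p x = y at *
          have f1 : 0 ≤ m * y ^ 2 * (y + M) := by
            have : 0 ≤ y + M := by linarith
            positivity
          have f2 : K * y ^ 2 * (k * X) ≤ K * y ^ 2 * E x :=
            mul_le_mul_of_nonneg_left e3 (by positivity)
          have f3 : y ^ 2 * (σ + 2 * m * M + 1 - 2 * a) ≤ y ^ 2 * (X * (K * k)) :=
            mul_le_mul_of_nonneg_left e4 (by positivity)
          have f4 : K * k * B = K * k * (X * y ^ 2) := by rw [hx0]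
          apply mul_neg_of_pos_of_neg e6
          nlinarith [sq_nonneg (y - b)]
        exact neg_of_mul_neg_right key hx1.le)
      (right_mem_Icc.2 hR)
    exact this
  refine ⟨r0, √B, by linarith, Real.sqrt_pos.2 hBpos, fun r hr => ?_⟩
  have hr1 : 0 < r := by linarith
  have h2 : 0 < r ^ (-(σ / 2)) := Real.rpow_pos_of_pos hr1 _
  refine abs_le_of_sq_le_sq ?_ (by positivity)
  have h4 : (r ^ (-(σ / 2))) ^ 2 * r ^ σ = 1 := by
    rw [← Real.rpow_natCast, ← Real.rpow_mul hr1.le, ← Real.rpow_add hr1]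
    rw [show -(σ / 2) * ((2:ℕ):ℝ) + σ = 0 by push_cast; ring, Real.rpow_zero]
  rw [mul_pow, Real.sq_sqrt hBpos.le]
  have h5 := mul_le_mul_of_nonneg_left (hZ r hr) (sq_nonneg (r ^ (-(σ / 2))))
  nlinarith

/-- Convergence from an integrable logarithmic derivative. -/
lemma conv (q p : ℝ → ℝ) (r0 C s : ℝ) (hr0 : 0 < r0) (hs : 0 < s)
    (hq : ∀ r, 0 < r → 0 < q r) (hd : ∀ r, 0 < r → HasDerivAt (fun x => log (q x)) (p r / r) r)
    (hp : ∀ r, r0 ≤ r → |p r| ≤ C * r ^ (-s)) :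
    ∃ A : ℝ, 0 < A ∧ Tendsto q atTop (nhds A) := by
  have hdr : ∀ x, 0 < x → HasDerivAt (fun x : ℝ => (C / s) * x ^ (-s)) (- (C * x ^ (-s)) / x) x := by
    intro x hx
    have := ((hasDerivAt_id x).rpow_const (p := -s) (Or.inl hx.ne')).const_mul (C / s)
    refine HasDerivAt.congr_deriv this ?_
    simp only [id]
    rw [Real.rpow_sub_one hx.ne']
    field_simp
  have hmono : MonotoneOn (fun x => log (q x) - (C / s) * x ^ (-s)) (Set.Ici r0) := by
    apply monotoneOn_of_hasDerivWithinAt_nonneg (convex_Ici r0)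
      (f' := fun x => p x / x - - (C * x ^ (-s)) / x)
    · intro x hx
      have hx : r0 ≤ x := hx
      exact ((hd x (by linarith)).sub (hdr x (by linarith))).continuousAt.continuousWithinAt
    · intro x hx
      rw [interior_Ici] at hx
      have hx : r0 < x := hx
      exact ((hd x (by linarith)).sub (hdr x (by linarith))).hasDerivWithinAt
    · intro x hx
      rw [interior_Ici] at hx
      have hx : r0 < x := hx
      have := abs_le.1 (hp x hx.le)
      rw [← sub_div]
      exact div_nonneg (by linarith [this.1]) (by linarith)
  have hanti : AntitoneOn (fun x => log (q x) + (C / s) * x ^ (-s)) (Set.Ici r0) := by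
    apply antitoneOn_of_hasDerivWithinAt_nonpos (convex_Ici r0)
      (f' := fun x => p x / x + - (C * x ^ (-s)) / x)
    · intro x hx
      have hx : r0 ≤ x := hx
      exact ((hd x (by linarith)).add (hdr x (by linarith))).continuousAt.continuousWithinAt
    · intro x hx
      rw [interior_Ici] at hx
      have hx : r0 < x := hx
      exact ((hd x (by linarith)).add (hdr x (by linarith))).hasDerivWithinAt
    · intro x hx
      rw [interior_Ici] at hx
      have hx : r0 < x := hx
      have := abs_le.1 (hp x hx.le)
      rw [← add_div]
      exact div_nonpos_of_nonpos_of_nonneg (by linarith [this.2]) (by linarith)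
  have hC : 0 ≤ C := by
    have h1 := (abs_nonneg _).trans (hp r0 le_rfl)
    exact nonneg_of_mul_nonneg_left h1 (Real.rpow_pos_of_pos hr0 _)
  -- extend to a monotone function on the line
  have hM : Monotone (fun x => log (q (max x r0)) - (C / s) * (max x r0) ^ (-s)) := by
    intro x y hxy
    exact hmono (le_max_right x r0) (le_max_right y r0) (max_le_max_right r0 hxy)
  have hbdd : BddAbove (Set.range
      (fun x => log (q (max x r0)) - (C / s) * (max x r0) ^ (-s))) := by
    refine ⟨log (q r0) + (C / s) * r0 ^ (-s), ?_⟩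
    rintro _ ⟨x, rfl⟩
    have := hanti Set.self_mem_Ici (le_max_right x r0 : max x r0 ∈ Set.Ici r0) (le_max_right x r0)
    simp only at this ⊢
    have h2 : 0 ≤ C / s * (max x r0) ^ (-s) :=
      mul_nonneg (by positivity)
        (Real.rpow_pos_of_pos (hr0.trans_le (le_max_right x r0)) _).le
    linarith
  have hlim := tendsto_atTop_ciSup hM hbdd
  set l := ⨆ i, (fun x => log (q (max x r0)) - (C / s) * (max x r0) ^ (-s)) i with hl
  refine ⟨Real.exp l, Real.exp_pos _, ?_⟩
  have h0 : Tendsto (fun x : ℝ => (C / s) * x ^ (-s)) atTop (nhds 0) := by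
    simpa using (tendsto_rpow_neg_atTop hs).const_mul (C / s)
  have h1 : Tendsto (fun x => log (q x) - (C / s) * x ^ (-s)) atTop (nhds l) := by
    refine hlim.congr' ?_
    filter_upwards [eventually_ge_atTop r0] with x hx
    rw [max_eq_left hx]
  have h2 : Tendsto (fun x => log (q x)) atTop (nhds l) := by
    have := h1.add h0
    simpa using this
  have h3 := (Real.continuous_exp.tendsto l).comp h2
  refine h3.congr' ?_
  filter_upwards [eventually_gt_atTop 0] with x hx
  exact Real.exp_log (hq x hx)

theorem stmt8 (n : ℕ) (hn : 3 ≤ n) (m α β η : ℝ) (hη : 0 < η)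
    (hm : 0 < m) (hm' : m < ((n : ℝ) - 2) / n)
    (hαβ : max α 0 < 2 * β / (1 - m))
    (v : ℝ → ℝ) (hv : IsRadialSol n m α β η v) :
    ∃ A : ℝ, 0 < A ∧
      Tendsto (fun r : ℝ => r ^ (α / β) * v r) atTop (nhds A) := by
  have hric := riccati n hn m α β η hm v hv
  obtain ⟨hpos, hc, -, -, -, -⟩ := hv
  have hN : (3:ℝ) ≤ n := by exact_mod_cast hn
  have hd : ∀ r, 0 < r → HasDerivAt v (deriv v r) r := fun r hr => (hric r hr).1
  have hmn : m * n < n - 2 := by rwa [lt_div_iff₀ (by linarith)] at hm'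
  have hm1 : m < 1 := by nlinarith
  have hβ : 0 < β := by
    have := (le_max_right α 0).trans_lt hαβ
    have h2 : 0 < 2 * β := by
      rcases div_pos_iff.1 this with h | h
      · exact h.1
      · linarith [h.2]
    linarith
  have hα : α * (1 - m) < 2 * β := by
    have := (le_max_left α 0).trans_lt hαβ
    rwa [lt_div_iff₀ (by linarith)] at this
  set γ := α / β with hγ
  have hγβ : γ * β = α := by rw [hγ]; field_simp
  have hγm : γ * (1 - m) < 2 := by
    have : γ * (1 - m) * β < 2 * β := by rw [← hγβ] at hα; linarith
    exact lt_of_mul_lt_mul_right this hβ.le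
  set K := β / ((n:ℝ) - 1) with hK
  have hKpos : 0 < K := div_pos hβ (by linarith)
  have hex : ∀ r, ∃ L' : ℝ, 0 < r → HasDerivAt (fun s => s * deriv v s / v s) L' r ∧
      r * L' = - m * (r * deriv v r / v r) ^ 2 - ((n : ℝ) - 2) * (r * deriv v r / v r)
        - (r ^ 2 * v r ^ (1 - m)) / ((n : ℝ) - 1) * (α + β * (r * deriv v r / v r)) := by
    intro r
    by_cases hr : 0 < r
    · obtain ⟨L', hL'⟩ := (hric r hr).2
      exact ⟨L', fun _ => hL'⟩
    · exact ⟨0, fun h => absurd h hr⟩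
  choose p' hp' using hex
  set L : ℝ → ℝ := fun s => s * deriv v s / v s with hL
  set E : ℝ → ℝ := fun r => r ^ 2 * v r ^ (1 - m) with hE
  have hEpos : ∀ r, 0 < r → 0 < E r := fun r hr =>
    mul_pos (by positivity) (Real.rpow_pos_of_pos (hpos r hr.le) _)
  have hLd : ∀ r, 0 < r → HasDerivAt L (p' r) r := fun r hr => (hp' r hr).1
  have hLe : ∀ r, 0 < r → r * p' r = - m * L r ^ 2 - ((n : ℝ) - 2) * L r
      - E r / ((n : ℝ) - 1) * (α + β * L r) := fun r hr => (hp' r hr).2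
  have hpd : ∀ r, 0 < r → HasDerivAt (fun s => L s + γ) (p' r) r := fun r hr =>
    (hLd r hr).add_const γ
  have hpe : ∀ r, 0 < r → r * p' r = - m * (L r + γ) ^ 2 - ((n:ℝ) - 2 - 2 * m * γ) * (L r + γ)
      + γ * ((n:ℝ) - 2 - m * γ) - K * E r * (L r + γ) := by
    intro r hr
    rw [hLe r hr, hK, ← hγβ]; ring
  have hq : ∀ r, 0 < r → 0 < r ^ γ * v r := fun r hr =>
    mul_pos (Real.rpow_pos_of_pos hr _) (hpos r hr.le)
  have hvd : ∀ r, 0 < r → r * deriv v r = L r * v r := fun r hr => by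
    simp only [hL]; field_simp [(hpos r hr.le).ne']
  have hqd : ∀ r, 0 < r → HasDerivAt (fun x => x ^ γ * v x) (r ^ γ * v r * (L r + γ) / r) r := by
    intro r hr
    have := ((hasDerivAt_id r).rpow_const (p := γ) (Or.inl hr.ne')).mul (hd r hr)
    refine HasDerivAt.congr_deriv this ?_
    simp only [id]
    rw [Real.rpow_sub_one hr.ne']
    field_simp
    linear_combination hvd r hr
  have hlogd : ∀ r, 0 < r → HasDerivAt (fun x => log (x ^ γ * v x)) ((L r + γ) / r) r := by
    intro r hr
    have := (hqd r hr).log (hq r hr).ne'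
    convert this using 1
    rw [div_right_comm, mul_div_cancel_left₀ _ (hq r hr).ne']
  have main : ∃ M k σ : ℝ, 0 < k ∧ 0 < σ ∧ (∀ r, 0 < r → - M ≤ L r + γ) ∧
      ∀ r, 1 ≤ r → k * r ^ σ ≤ E r := by
    rcases le_or_gt α 0 with hα0 | hα0
    · -- α ≤ 0
      have hLnn : ∀ r, 0 < r → 0 ≤ L r := by
        intro r0 hr0
        by_contra hneg
        push Not at hneg
        have hGd : ∀ r, 0 < r → HasDerivAt (fun s => s ^ (n - 2) * v s ^ m * L s)
            (((n - 2 : ℕ) * r ^ (n - 2 - 1)) * v r ^ m * L r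
              + r ^ (n - 2) * (deriv v r * m * v r ^ (m - 1)) * L r
              + r ^ (n - 2) * v r ^ m * p' r) r := by
          intro r hr
          have := ((hasDerivAt_pow (n - 2) r).mul
            ((hd r hr).rpow_const (p := m) (Or.inl (hpos r hr.le).ne'))).mul (hLd r hr)
          refine HasDerivAt.congr_deriv this ?_
          simp only [Pi.mul_apply]
          ring
        have hbar := barrier_mono _ _ hGd
        have hG := fun a ha hab => hbar (by
          intro r hr hneg
          have hvr := hpos r hr.le
          have h1 : 0 < r ^ (n - 2) * v r ^ m := by positivity
          have hL0 : L r < 0 := neg_of_mul_neg_right hneg h1.le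
          have h2 : ((n - 2 : ℕ) : ℝ) = n - 2 := by
            rw [Nat.cast_sub (by omega)]; norm_num
          have h3 : r ^ (n - 2 - 1) * r = r ^ (n - 2) := by
            rw [← pow_succ]; congr 1; omega
          have h4 : v r ^ (m - 1) * v r = v r ^ m := by
            rw [Real.rpow_sub_one hvr.ne']; field_simp
          have h5 : r * (((n - 2 : ℕ) * r ^ (n - 2 - 1)) * v r ^ m * L r
              + r ^ (n - 2) * (deriv v r * m * v r ^ (m - 1)) * L r
              + r ^ (n - 2) * v r ^ m * p' r)
              = r ^ (n - 2) * v r ^ m * (- (E r / ((n:ℝ) - 1) * (α + β * L r))) := by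
            have h6 := hLe r hr
            have h7 := hvd r hr
            rw [h2]
            calc _ = ((n:ℝ) - 2) * (r ^ (n - 2 - 1) * r) * v r ^ m * L r
                  + r ^ (n - 2) * ((r * deriv v r) * m * v r ^ (m - 1)) * L r
                  + r ^ (n - 2) * v r ^ m * (r * p' r) := by ring
              _ = ((n:ℝ) - 2) * r ^ (n - 2) * v r ^ m * L r
                  + r ^ (n - 2) * (L r * m * (v r ^ (m - 1) * v r)) * L r
                  + r ^ (n - 2) * v r ^ m * (r * p' r) := by rw [h7, h3]; ring
              _ = _ := by rw [h4, h6]; ring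
          have h8 : α + β * L r ≤ 0 := by nlinarith
          have h9 : 0 ≤ E r / ((n:ℝ) - 1) := div_nonneg (hEpos r hr).le (by linarith)
          refine nonneg_of_mul_nonneg_right (a := r) ?_ hr
          rw [h5]
          apply mul_nonneg h1.le
          nlinarith) a r0 ha hab
          (mul_neg_of_pos_of_neg (by have := hpos r0 hr0.le; positivity) hneg)
        obtain ⟨x, hx, hxmax⟩ := isCompact_Icc.exists_isMaxOn
          (nonempty_Icc.2 hr0.le) (hc.mono (fun x (hx : x ∈ Set.Icc 0 r0) => hx.1))
        set V := v x
        have hV : 0 < V := hpos x hx.1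
        have hvr0 := hpos r0 hr0.le
        set D := r0 ^ (n - 2) * v r0 ^ m * (- L r0) with hD
        have hDpos : 0 < D := mul_pos (by positivity) (by linarith)
        set S := r0 ^ (n - 2) * V ^ m with hS
        have hSpos : 0 < S := by positivity
        refine no_blowup v hpos hc hd (D / S) r0 (div_pos hDpos hSpos) hr0 ?_
        intro r hr
        have hg := hG r hr.1 hr.2
        show L r ≤ - (D / S)
        have hvr := hpos r hr.1.le
        have hT : r ^ (n - 2) * v r ^ m ≤ S := by
          have h1 : v r ≤ V := hxmax ⟨hr.1.le, hr.2⟩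
          have h2 := hr.1.le
          exact mul_le_mul (pow_le_pow_left₀ h2 hr.2 _)
            (Real.rpow_le_rpow hvr.le h1 hm.le) (by positivity) (by positivity)
        have hT0 : 0 < r ^ (n - 2) * v r ^ m := by
          have := hr.1
          positivity
        have hg2 : r ^ (n - 2) * v r ^ m * L r ≤ - D := by rw [hD]; linarith
        have hLneg : L r < 0 := by
          by_contra h
          push Not at h
          nlinarith [mul_nonneg hT0.le h]
        rw [← neg_div, le_div_iff₀ hSpos]
        nlinarith
      refine ⟨-γ, v 1 ^ (1 - m), 2, Real.rpow_pos_of_pos (hpos 1 (by simp)) _, by norm_num,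
        fun r hr => by linarith [hLnn r hr], ?_⟩
      have hmono : MonotoneOn v (Set.Ioi 0) := by
        apply monotoneOn_of_hasDerivWithinAt_nonneg (convex_Ioi 0) (f' := deriv v)
          (hc.mono Ioi_subset_Ici_self)
        · intro x hx
          rw [interior_Ioi] at hx
          exact (hd x hx).hasDerivWithinAt
        · intro x hx
          rw [interior_Ioi] at hx
          have hx : 0 < x := hx
          refine nonneg_of_mul_nonneg_right (a := x) ?_ hx
          rw [hvd x hx]
          exact mul_nonneg (hLnn x hx) (hpos x hx.le).le
      intro r hr
      have h1 := hmono (by simp : (1:ℝ) ∈ Set.Ioi 0) (by simp; linarith : r ∈ Set.Ioi (0:ℝ)) hr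
      have h2 := Real.rpow_le_rpow (hpos 1 (by simp)).le h1 (by linarith : 0 ≤ 1 - m)
      simp only [hE]
      rw [Real.rpow_two]
      nlinarith [sq_nonneg r]
    · -- α > 0
      have hγpos : 0 < γ := div_pos hα0 hβ
      have hb : 0 < γ * ((n:ℝ) - 2 - m * γ) := by
        apply mul_pos hγpos
        have h1 : (1 - m) * (m * γ) < (1 - m) * ((n:ℝ) - 2) := by nlinarith
        have := lt_of_mul_lt_mul_left h1 (by linarith)
        linarith
      have hpnn : ∀ r, 0 < r → 0 ≤ L r + γ := by
        intro r0 hr0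
        by_contra hneg
        have hall : ∀ r, 0 < r → r ≤ r0 → L r + γ < 0 := by
          intro r hr hrr
          by_contra h
          push Not at h
          refine hneg (barrier_pos _ _ hpd ?_ r r0 hr hrr h)
          intro s hs hs0
          have := hpe s hs
          rw [hs0] at this
          refine pos_of_mul_pos_right (a := s) ?_ hs.le
          rw [this]; linarith
        exact no_blowup v hpos hc hd γ r0 hγpos hr0
          (fun r hr => by have := hall r hr.1 hr.2; simp only [hL] at this; linarith)
      refine ⟨0, (1 ^ γ * v 1) ^ (1 - m), 2 - γ * (1 - m),
        Real.rpow_pos_of_pos (hq 1 one_pos) _, by linarith,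
        fun r hr => by linarith [hpnn r hr], ?_⟩
      have hmono : MonotoneOn (fun x => x ^ γ * v x) (Set.Ioi 0) := by
        apply monotoneOn_of_hasDerivWithinAt_nonneg (convex_Ioi 0)
          (f' := fun r => r ^ γ * v r * (L r + γ) / r)
        · intro x hx
          exact (hqd x hx).continuousAt.continuousWithinAt
        · intro x hx
          rw [interior_Ioi] at hx
          exact (hqd x hx).hasDerivWithinAt
        · intro x hx
          rw [interior_Ioi] at hx
          have hx : 0 < x := hx
          exact div_nonneg (mul_nonneg (hq x hx).le (hpnn x hx)) hx.le
      intro r hr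
      have hr0 : 0 < r := by linarith
      have h1 := hmono (by simp : (1:ℝ) ∈ Set.Ioi 0) (by simpa using hr0 : r ∈ Set.Ioi (0:ℝ)) hr
      have h2 := Real.rpow_le_rpow (hq 1 one_pos).le h1 (by linarith : 0 ≤ 1 - m)
      simp only at h2
      have h3 : E r = (r ^ γ * v r) ^ (1 - m) * r ^ (2 - γ * (1 - m)) := by
        rw [Real.mul_rpow (Real.rpow_pos_of_pos hr0 _).le (hpos r hr0.le).le,
          ← Real.rpow_mul hr0.le, Real.rpow_sub hr0, Real.rpow_two]
        have := (Real.rpow_pos_of_pos hr0 (γ * (1 - m))).ne'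
        simp only [hE]
        field_simp
      rw [h3]
      exact mul_le_mul_of_nonneg_right h2 (Real.rpow_pos_of_pos hr0 _).le
  obtain ⟨M, k, σ, hk, hσ, hM, hEk⟩ := main
  obtain ⟨r0, C, hr0, hC, hdec⟩ := decay (fun s => L s + γ) p' E m ((n:ℝ) - 2 - 2 * m * γ)
    (γ * ((n:ℝ) - 2 - m * γ)) K M k σ hm hKpos hk hσ hpd hpe hM hEk
  exact conv _ (fun s => L s + γ) r0 C (σ / 2) hr0 (by linarith) hq hlogd hdec
end

section
/- Let n ≥ 3 be an integer, let η > 0, let m ∈ (0,1), and let α, β be real numbers with α = 2β/(1−m). Let v be a radial solution of (E) on [0,∞). Then the function u : ℝⁿ × ℝ → ℝ defined by u(x,t) = e^{−αt}·v(|x|·e^{−βt}) is positive and satisfies ∂u/∂t = ((n−1)/m)·Δₓ(u^m) at every point of ℝⁿ × ℝ (an eternal solution), where Δₓ denotes the Laplacian in the space variables, i.e. the sum of the second partial derivatives with respect to the standard coordinates of ℝⁿ. -/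
open Real Set Filter

/-- The Laplacian of `f : ℝⁿ → ℝ` at `x`: the sum of the second partial
derivatives of `f` with respect to the standard coordinates of `ℝⁿ`. -/
noncomputable def lap (n : ℕ) (f : EuclideanSpace ℝ (Fin n) → ℝ)
    (x : EuclideanSpace ℝ (Fin n)) : ℝ :=
  ∑ i : Fin n,
    iteratedDeriv 2 (fun s : ℝ => f (x + s • EuclideanSpace.single i (1:ℝ))) 0

/-- The quotient `w'(r)/r` has the expected limit at the origin. -/
lemma aux_limit (w w1 w2 v v1 : ℝ → ℝ) (N : ℕ) (hN : 1 ≤ N) (k α β η : ℝ)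
    (hw : ∀ r, 0 < r → HasDerivAt w (w1 r) r)
    (hw1 : ∀ r, 0 < r → HasDerivAt w1 (w2 r) r)
    (hv : ∀ r, 0 < r → HasDerivAt v (v1 r) r)
    (hw0 : HasDerivWithinAt w 0 (Set.Ici (0:ℝ)) 0)
    (hv0 : Tendsto v (nhdsWithin 0 (Ioi 0)) (nhds η))
    (hode : ∀ r, 0 < r → w2 r + (N : ℝ) / r * w1 r = -k * (α * v r + β * r * v1 r)) :
    Tendsto (fun r => w1 r / r) (nhdsWithin 0 (Ioi 0)) (nhds (-k * α * η / (N + 1))) := by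
  set G : ℝ → ℝ := fun r => r ^ N * w1 r + k * β * (r ^ (N + 1) * v r) with hG
  set G' : ℝ → ℝ := fun r => -k * (α - (N + 1) * β) * (r ^ N * v r) with hG'
  have hNc : ((N - 1 : ℕ) : ℕ) + 1 = N := by omega
  have hGd : ∀ r, 0 < r → HasDerivAt G (G' r) r := by
    intro r hr
    have h1 := ((hasDerivAt_pow N r).mul (hw1 r hr)).add
      (((hasDerivAt_pow (N + 1) r).mul (hv r hr)).const_mul (k * β))
    refine h1.congr_deriv ?_
    have ho := hode r hr
    have hw2 : w2 r = -k * (α * v r + β * r * v1 r) - (N : ℝ) / r * w1 r := by linarith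
    have hp : r ^ N = r ^ (N - 1) * r := by rw [← pow_succ, hNc]
    simp only [hG', hw2, Nat.add_sub_cancel, pow_succ]
    rw [hp]
    push_cast
    field_simp
    ring
  have hid : Tendsto (fun r : ℝ => r) (nhdsWithin 0 (Ioi 0)) (nhds 0) :=
    tendsto_id.mono_left nhdsWithin_le_nhds
  have hpow : ∀ j : ℕ, 1 ≤ j → Tendsto (fun r : ℝ => r ^ j) (nhdsWithin 0 (Ioi 0)) (nhds 0) := by
    intro j hj
    have := hid.pow j
    rwa [zero_pow (by omega)] at this
  have hG'0 : Tendsto G' (nhdsWithin 0 (Ioi 0)) (nhds 0) := by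
    have := ((hpow N hN).mul hv0).const_mul (-k * (α - (N + 1) * β))
    rwa [zero_mul, mul_zero] at this
  have hpos : ∀ᶠ r : ℝ in nhdsWithin 0 (Ioi 0), 0 < r := self_mem_nhdsWithin
  -- mean value points
  have hmv : ∀ r : ℝ, ∃ c : ℝ, 0 < r → (0 < c ∧ c < r ∧ w1 c = (w r - w 0) / r) := by
    intro r
    by_cases hr : 0 < r
    · obtain ⟨c, hc, hc'⟩ := exists_hasDerivAt_eq_slope w w1 hr (by
        intro y hy
        rcases eq_or_lt_of_le hy.1 with h | h
        · rw [← h]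
          exact hw0.continuousWithinAt.mono (fun z hz => hz.1)
        · exact (hw y h).continuousAt.continuousWithinAt) (fun y hy => hw y hy.1)
      exact ⟨c, fun _ => ⟨hc.1, hc.2, by simpa using hc'⟩⟩
    · exact ⟨0, fun h => absurd h hr⟩
  choose c hc using hmv
  have hc0 : Tendsto c (nhdsWithin 0 (Ioi 0)) (nhdsWithin 0 (Ioi 0)) := by
    refine tendsto_nhdsWithin_iff.2 ⟨?_, ?_⟩
    · refine tendsto_of_tendsto_of_tendsto_of_le_of_le' tendsto_const_nhds hid ?_ ?_
      · filter_upwards [hpos] with r hr using (hc r hr).1.le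
      · filter_upwards [hpos] with r hr using (hc r hr).2.1.le
    · filter_upwards [hpos] with r hr using (hc r hr).1
  have hslope : Tendsto (fun r => w1 (c r)) (nhdsWithin 0 (Ioi 0)) (nhds 0) := by
    have h1 : HasDerivWithinAt w 0 (Ioi 0) 0 := hw0.mono Ioi_subset_Ici_self
    rw [hasDerivWithinAt_iff_tendsto_slope' (by simp)] at h1
    refine h1.congr' ?_
    filter_upwards [hpos] with r hr
    rw [(hc r hr).2.2, slope_def_field, sub_zero]
  have hGc : Tendsto (fun r => G (c r)) (nhdsWithin 0 (Ioi 0)) (nhds 0) := by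
    have := (((hpow N hN).comp hc0).mul hslope).add
      ((((hpow (N + 1) (by omega)).comp hc0).mul (hv0.comp hc0)).const_mul (k * β))
    simpa [hG, Function.comp_def] using this
  have hdiff : Tendsto (fun r => G r - G (c r)) (nhdsWithin 0 (Ioi 0)) (nhds 0) := by
    have hb : ∀ᶠ r in nhdsWithin 0 (Ioi 0), ‖G' r‖ ≤ 1 := by
      have := hG'0.norm
      simp only [norm_zero] at this
      exact (this.eventually (gt_mem_nhds (zero_lt_one))).mono fun _ h => le_of_lt h
    obtain ⟨δ, hδ, hδ'⟩ := mem_nhdsGT_iff_exists_Ioo_subset.1 hb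
    refine squeeze_zero_norm' ?_ hid
    filter_upwards [Ioo_mem_nhdsGT hδ] with r hr
    obtain ⟨h1, h2, -⟩ := hc r hr.1
    have := Convex.norm_image_sub_le_of_norm_hasDerivWithin_le (f := G) (f' := G')
      (s := Ioo 0 δ) (C := 1) (x := c r) (y := r)
      (fun y hy => (hGd y hy.1).hasDerivWithinAt) (fun y hy => hδ' hy) (convex_Ioo _ _)
      ⟨h1, h2.trans hr.2⟩ hr
    refine this.trans ?_
    rw [one_mul, Real.norm_eq_abs, abs_of_pos (by linarith)]
    linarith
  have hG0 : Tendsto G (nhdsWithin 0 (Ioi 0)) (nhds 0) := by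
    simpa using hdiff.add hGc
  have hLH : Tendsto (fun r => G r / r ^ (N + 1)) (nhdsWithin 0 (Ioi 0))
      (nhds (-k * (α - (N + 1) * β) / (N + 1) * η)) := by
    refine HasDerivAt.lhopital_zero_nhdsGT (f' := G') (g' := fun r => ((N : ℝ) + 1) * r ^ N)
      ?_ ?_ ?_ hG0 (hpow _ (by omega)) ?_
    · filter_upwards [hpos] with r hr using hGd r hr
    · filter_upwards with r
      simpa using hasDerivAt_pow (N + 1) r
    · filter_upwards [hpos] with r hr
      positivity
    · refine (hv0.const_mul (-k * (α - (N + 1) * β) / (N + 1))).congr' ?_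
      filter_upwards [hpos] with r hr
      simp only [hG']
      have : r ^ N ≠ 0 := by positivity
      field_simp
  have hfin := hLH.sub (hv0.const_mul (k * β))
  have e : -k * (α - (N + 1) * β) / (N + 1) * η - k * β * η = -k * α * η / (N + 1) := by
    have : (N : ℝ) + 1 ≠ 0 := by positivity
    field_simp
    ring
  rw [e] at hfin
  refine hfin.congr' ?_
  filter_upwards [hpos] with r hr
  simp only [hG, pow_succ]
  have : r ^ N ≠ 0 := by positivity
  field_simp
  ring

/-- Second derivative at the origin of an even profile. -/
lemma aux_zero (w w1 : ℝ → ℝ) (A b L : ℝ) (hb : 0 < b)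
    (hw : ∀ r, 0 < r → HasDerivAt w (w1 r) r)
    (hL : Tendsto (fun r => w1 r / r) (nhdsWithin 0 (Ioi 0)) (nhds L)) :
    iteratedDeriv 2 (fun s : ℝ => A * w (|s| * b)) 0 = A * b ^ 2 * L := by
  set F : ℝ → ℝ := fun s => A * w (|s| * b) with hF
  have h0 : deriv F 0 = 0 := by
    have h1 : (fun s => F (-s)) = F := by
      funext s
      simp [hF]
    have h2 := deriv_comp_neg F 0
    rw [h1, neg_zero] at h2
    linarith
  have hd : ∀ s, s ≠ 0 → deriv F s / s = A * b ^ 2 * (w1 (|s| * b) / (|s| * b)) := by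
    intro s hs
    have hp : 0 < |s| * b := by positivity
    have h1 := ((hw _ hp).comp s ((hasDerivAt_abs hs).mul_const b)).const_mul A
    have h2 : deriv F s = _ := h1.deriv
    rw [h2]
    rcases lt_or_gt_of_ne hs with h | h
    · rw [sign_neg h, abs_of_neg h]
      simp only [SignType.coe_neg_one, SignType.coe_one]
      field_simp
    · rw [sign_pos h, abs_of_pos h]
      simp only [SignType.coe_neg_one, SignType.coe_one]
      field_simp
  rw [iteratedDeriv_succ, iteratedDeriv_one]
  apply HasDerivAt.deriv
  rw [hasDerivAt_iff_tendsto_slope]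
  have hg : Tendsto (fun s : ℝ => |s| * b) (nhdsWithin 0 {0}ᶜ) (nhdsWithin 0 (Ioi 0)) := by
    refine tendsto_nhdsWithin_iff.2 ⟨?_, ?_⟩
    · have : Continuous (fun s : ℝ => |s| * b) := by fun_prop
      have h := this.tendsto 0
      simp only [abs_zero, zero_mul] at h
      exact h.mono_left nhdsWithin_le_nhds
    · filter_upwards [self_mem_nhdsWithin] with s hs
      have : s ≠ 0 := hs
      exact mem_Ioi.2 (by positivity)
  refine ((hL.comp hg).const_mul (A * b ^ 2)).congr' ?_
  filter_upwards [self_mem_nhdsWithin] with s hs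
  rw [slope_def_field, h0, sub_zero, sub_zero, hd s hs]
  rfl

/-- Second directional derivative of a radial function away from the origin. -/
lemma aux_ne (n : ℕ) (w w1 w2 : ℝ → ℝ) (A b : ℝ) (hb : 0 < b)
    (hw : ∀ r, 0 < r → HasDerivAt w (w1 r) r)
    (hw1 : ∀ r, 0 < r → HasDerivAt w1 (w2 r) r)
    (x : EuclideanSpace ℝ (Fin n)) (hx : x ≠ 0) (i : Fin n) :
    iteratedDeriv 2 (fun s : ℝ => A * w (‖x + s • EuclideanSpace.single i (1:ℝ)‖ * b)) 0
      = A * (b ^ 2 * w2 (‖x‖ * b) * (x i / ‖x‖) ^ 2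
        + b * w1 (‖x‖ * b) * (1 / ‖x‖ - x i ^ 2 / ‖x‖ ^ 3)) := by
  set N : ℝ → ℝ := fun s => ‖x + s • EuclideanSpace.single i (1:ℝ)‖ with hNdef
  have hN0 : N 0 = ‖x‖ := by simp [hNdef]
  have hxp : 0 < ‖x‖ := norm_pos_iff.2 hx
  have hNc : Continuous N := by fun_prop
  have hNd : ∀ s, 0 < N s → HasDerivAt N ((x i + s) / N s) s := by
    intro s hs
    have h1 : HasDerivAt (fun s : ℝ => x + s • EuclideanSpace.single i (1:ℝ))
        (EuclideanSpace.single i (1:ℝ)) s := by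
      simpa using ((hasDerivAt_id s).smul_const (EuclideanSpace.single i (1:ℝ))).const_add x
    have h2 := h1.norm_sq
    have h3 := h2.sqrt (by
      have : 0 < N s := hs
      positivity)
    have e : (fun s : ℝ => √(‖x + s • EuclideanSpace.single i (1:ℝ)‖ ^ 2)) = N := by
      funext s
      exact Real.sqrt_sq (norm_nonneg _)
    rw [e] at h3
    refine h3.congr_deriv ?_
    rw [Real.sqrt_sq (norm_nonneg _)]
    change _ / (2 * N s) = _
    rw [EuclideanSpace.inner_single_right]
    simp
    field_simp
  have hev : ∀ᶠ s in nhds (0:ℝ), 0 < N s :=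
    hNc.continuousAt.eventually (lt_mem_nhds (by rw [hN0]; exact hxp))
  have hd1 : deriv (fun s : ℝ => A * w (N s * b)) =ᶠ[nhds 0]
      fun s => A * (w1 (N s * b) * ((x i + s) / N s * b)) := by
    filter_upwards [hev] with s hs
    exact (((hw _ (by positivity)).comp s ((hNd s hs).mul_const b)).const_mul A).deriv
  rw [iteratedDeriv_succ, iteratedDeriv_one, hd1.deriv_eq]
  have hp : 0 < N 0 := by rw [hN0]; exact hxp
  have h4 := ((hw1 (N 0 * b) (by positivity)).comp 0 ((hNd 0 hp).mul_const b)).mul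
    ((((hasDerivAt_id (0:ℝ)).const_add (x i)).div (hNd 0 hp) hp.ne').mul_const b)
  have h5 := (h4.const_mul A).deriv
  refine Eq.trans h5 ?_
  simp only [Function.comp, Pi.div_apply, hN0, id, add_zero]
  field_simp

theorem stmt11 (n : ℕ) (hn : 3 ≤ n) (m α β η : ℝ) (hη : 0 < η)
    (hm : 0 < m) (hm1 : m < 1) (hα : α = 2 * β / (1 - m))
    (v : ℝ → ℝ) (hv : IsRadialSol n m α β η v)
    (u : EuclideanSpace ℝ (Fin n) → ℝ → ℝ)
    (hu : ∀ (x : EuclideanSpace ℝ (Fin n)) (t : ℝ),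
      u x t = Real.exp (-α * t) * v (‖x‖ * Real.exp (-β * t))) :
    ∀ (x : EuclideanSpace ℝ (Fin n)) (t : ℝ),
      0 < u x t ∧
      deriv (fun τ : ℝ => u x τ) t
        = (((n : ℝ) - 1) / m) * lap n (fun y => u y t ^ m) x := by
  obtain ⟨hpos, hcont, hC2, hd0, hv00, hode⟩ := hv
  set w : ℝ → ℝ := fun s => v s ^ m with hwdef
  have hnR : (3:ℝ) ≤ (n:ℝ) := by exact_mod_cast hn
  have hn1 : (n:ℝ) - 1 ≠ 0 := by linarith
  have hvd : ∀ r, 0 < r → HasDerivAt v (deriv v r) r := fun r hr =>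
    ((hC2.differentiableOn (by norm_num)).differentiableAt (Ioi_mem_nhds hr)).hasDerivAt
  have hwC : ContDiffOn ℝ 2 w (Ioi 0) :=
    hC2.rpow_const_of_ne (fun r hr => (hpos r (mem_Ici.2 (le_of_lt (mem_Ioi.1 hr)))).ne')
  have hwd : ∀ r, 0 < r → HasDerivAt w (deriv w r) r := fun r hr =>
    ((hwC.differentiableOn (by norm_num)).differentiableAt (Ioi_mem_nhds hr)).hasDerivAt
  have hwC1 : ContDiffOn ℝ 1 (deriv w) (Ioi 0) :=
    hwC.deriv_of_isOpen isOpen_Ioi (by norm_num)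
  have hwd1 : ∀ r, 0 < r → HasDerivAt (deriv w) (deriv (deriv w) r) r := fun r hr =>
    ((hwC1.differentiableOn (by norm_num)).differentiableAt (Ioi_mem_nhds hr)).hasDerivAt
  have hw0 : HasDerivWithinAt w 0 (Ici 0) 0 := by
    have := hd0.rpow_const (p := m) (Or.inl (hpos 0 (by simp)).ne')
    simpa using this
  intro x t
  have hb : 0 < Real.exp (-β * t) := Real.exp_pos _
  refine ⟨by rw [hu]; exact mul_pos (Real.exp_pos _) (hpos _ (mem_Ici.2 (by positivity))), ?_⟩
  have hum : (fun y => u y t ^ m)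
      = fun y => Real.exp (-α * t) ^ m * w (‖y‖ * Real.exp (-β * t)) := by
    funext y
    rw [hu, Real.mul_rpow (Real.exp_pos _).le (hpos _ (mem_Ici.2 (by positivity))).le]
  have hAb : Real.exp (-α * t) ^ m * Real.exp (-β * t) ^ 2 = Real.exp (-α * t) := by
    rw [← Real.exp_mul, ← Real.exp_nat_mul, ← Real.exp_add]
    congr 1
    have h1m : 1 - m ≠ 0 := by linarith
    have : α * (1 - m) = 2 * β := by rw [hα]; field_simp
    push_cast
    linear_combination (-t) * (-this)
  rw [hum]
  have hut : (fun τ : ℝ => u x τ)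
      = fun τ => Real.exp (-α * τ) * v (‖x‖ * Real.exp (-β * τ)) := funext (hu x)
  rw [hut]
  set A := Real.exp (-α * t) ^ m with hA
  set b := Real.exp (-β * t) with hbdef
  have hexp : ∀ c : ℝ, HasDerivAt (fun τ : ℝ => Real.exp (-c * τ)) (-c * Real.exp (-c * t)) t := by
    intro c
    have := ((hasDerivAt_id t).const_mul (-c)).exp
    refine this.congr_deriv ?_
    simp [mul_comm]
  unfold lap
  by_cases hx : x = 0
  · subst hx
    have hlim := aux_limit w (deriv w) (deriv (deriv w)) v (deriv v) (n - 1) (by omega)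
      (m / ((n:ℝ) - 1)) α β η hwd hwd1 hvd hw0
      (by
        have h := (hd0.continuousWithinAt.mono (Ioi_subset_Ici_self))
        have h' : Tendsto v (nhdsWithin 0 (Ioi 0)) (nhds (v 0)) := h
        rwa [hv00] at h')
      (by
        intro r hr
        have := hode r hr
        rw [Nat.cast_sub (by omega), Nat.cast_one]
        have h2 : deriv (deriv w) r + ((n:ℝ) - 1) / r * deriv w r
            = m / ((n:ℝ) - 1) * (((n : ℝ) - 1) / m * (deriv (deriv w) r
              + ((n:ℝ) - 1) / r * deriv w r)) := by
          field_simp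
        rw [h2]
        linear_combination (m / ((n:ℝ) - 1)) * this)
    have hz := aux_zero w (deriv w) A b _ hb hwd hlim
    have hs : ∀ i : Fin n, (fun s : ℝ => A * w (‖(0 : EuclideanSpace ℝ (Fin n))
        + s • EuclideanSpace.single i (1:ℝ)‖ * b)) = fun s => A * w (|s| * b) := by
      intro i
      funext s
      simp [norm_smul]
    simp only [hs, hz, hAb, Finset.sum_const, Finset.card_univ, Fintype.card_fin, nsmul_eq_mul,
      norm_zero, zero_mul, hv00]
    rw [((hexp α).mul_const η).deriv, Nat.cast_sub (by omega), Nat.cast_one]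
    have : (n:ℝ) ≠ 0 := by linarith
    rw [sub_add_cancel]
    field_simp
  · have hxp : 0 < ‖x‖ := norm_pos_iff.2 hx
    have hr : 0 < ‖x‖ * b := by positivity
    have hne := aux_ne n w (deriv w) (deriv (deriv w)) A b hb hwd hwd1 x hx
    simp only [hne]
    have hsq : ∑ i : Fin n, x i ^ 2 = ‖x‖ ^ 2 := (EuclideanSpace.real_norm_sq_eq x).symm
    have hsum : ∑ i : Fin n, A * (b ^ 2 * deriv (deriv w) (‖x‖ * b) * (x i / ‖x‖) ^ 2
        + b * deriv w (‖x‖ * b) * (1 / ‖x‖ - x i ^ 2 / ‖x‖ ^ 3))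
        = A * b ^ 2 * (deriv (deriv w) (‖x‖ * b)
          + ((n:ℝ) - 1) / (‖x‖ * b) * deriv w (‖x‖ * b)) := by
      rw [← Finset.mul_sum, Finset.sum_add_distrib, ← Finset.mul_sum, ← Finset.mul_sum,
        Finset.sum_sub_distrib]
      simp only [div_pow]
      rw [← Finset.sum_div _ _ (‖x‖ ^ 2), ← Finset.sum_div _ _ (‖x‖ ^ 3), hsq]
      simp only [Finset.sum_const, Finset.card_univ, Fintype.card_fin, nsmul_eq_mul]
      field_simp
    rw [hsum, hAb]
    have hD := (hexp α).mul ((hvd _ hr).comp t ((hexp β).const_mul ‖x‖))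
    have hD' := hD.deriv
    refine Eq.trans hD' ?_
    have := hode _ hr
    simp only [Function.comp]
    rw [← hbdef]
    linear_combination (-Real.exp (-α * t)) * this
end

section
/- Let n ≥ 3 be an integer, let η > 0, and let m, α, β satisfy 0 < m ≤ (n−2)/n, β > 0, α > 0, and α ≤ β·(n−2)/m. Let v be a radial solution of (E) on [0,∞), and set C₁ = (2β + |α|/n)·max(1,η)² / (n−1). Then for every r₀ > 0 and all r₁, r₂ ∈ [0, r₀], |v(r₁) − v(r₂)| ≤ C₁·r₀·|r₁ − r₂|. -/
open Real Set Filter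

/-- A function with zero one-sided derivative at `0` cannot have `r ^ k * f' ≥ c > 0` near `0`. -/
lemma no_blow (f f' : ℝ → ℝ) (k : ℕ) (a c : ℝ) (ha : 0 < a) (hc : 0 < c)
    (hcont : ContinuousOn f (Set.Ici 0)) (h0 : HasDerivWithinAt f 0 (Set.Ici 0) 0)
    (hd : ∀ r, 0 < r → HasDerivAt f (f' r) r)
    (hge : ∀ r, 0 < r → r ≤ a → c ≤ r ^ k * f' r) : False := by
  set b := min a 1 with hb
  have hb0 : 0 < b := lt_min ha one_pos
  have key : ∀ r, 0 < r → r ≤ b → c ≤ f' r := by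
    intro r hr hrb
    have h1 := hge r hr (hrb.trans (min_le_left _ _))
    have h2 : r ^ k ≤ 1 := pow_le_one₀ hr.le (hrb.trans (min_le_right _ _))
    have h3 : 0 < r ^ k := pow_pos hr k
    have h4 : 0 < f' r := by
      by_contra h
      push Not at h
      nlinarith
    nlinarith
  have hmono : MonotoneOn (fun r => f r - c * r) (Set.Icc 0 b) := by
    apply monotoneOn_of_hasDerivWithinAt_nonneg (f' := fun r => f' r - c * 1) (convex_Icc 0 b)
    · exact (hcont.mono Set.Icc_subset_Ici_self).sub (by fun_prop)
    · intro x hx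
      rw [interior_Icc] at hx
      exact ((hd x hx.1).sub ((hasDerivAt_id x).const_mul c)).hasDerivWithinAt
    · intro x hx
      rw [interior_Icc] at hx
      have := key x hx.1 hx.2.le
      linarith
  have hlim := (hasDerivWithinAt_iff_tendsto_slope' (s := Set.Ioi (0:ℝ)) (by simp)).1
    (h0.mono Set.Ioi_subset_Ici_self)
  have hev : ∀ᶠ r in nhdsWithin (0:ℝ) (Set.Ioi 0), c ≤ slope f 0 r := by
    have : Set.Ioo 0 b ∈ nhdsWithin (0:ℝ) (Set.Ioi 0) := Ioo_mem_nhdsGT hb0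
    filter_upwards [this] with r hr
    have := hmono ⟨le_rfl, hb0.le⟩ ⟨hr.1.le, hr.2.le⟩ hr.1.le
    simp only at this
    rw [slope_def_field, le_div_iff₀ (by linarith [hr.1])]
    linarith
  have := ge_of_tendsto hlim hev
  linarith

theorem stmt13 (n : ℕ) (hn : 3 ≤ n) (m α β η : ℝ) (hη : 0 < η)
    (hm : 0 < m) (hm' : m ≤ ((n : ℝ) - 2) / n)
    (hβ : 0 < β) (hα : 0 < α) (hαβ : α ≤ β * ((n : ℝ) - 2) / m)
    (v : ℝ → ℝ) (hv : IsRadialSol n m α β η v)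
    (C₁ : ℝ) (hC₁ : C₁ = (2 * β + |α| / n) * (max 1 η) ^ 2 / ((n : ℝ) - 1)) :
    ∀ r₀ : ℝ, 0 < r₀ → ∀ r₁ ∈ Set.Icc (0:ℝ) r₀, ∀ r₂ ∈ Set.Icc (0:ℝ) r₀,
      |v r₁ - v r₂| ≤ C₁ * r₀ * |r₁ - r₂| := by
  obtain ⟨hpos, hcont, hC2, hd0, hv0, hode⟩ := hv
  obtain ⟨j, rfl⟩ : ∃ j, n = j + 3 := ⟨n - 3, by omega⟩
  clear hαβ
  have hm1 : m < 1 := by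
    refine lt_of_le_of_lt hm' ?_
    rw [div_lt_one (by positivity)]
    linarith
  clear hm' hn
  push_cast at hC₁ hode
  set N : ℝ := (j : ℝ) + 3 with hN
  have hj : (0:ℝ) ≤ j := Nat.cast_nonneg j
  have hN3 : 3 ≤ N := by linarith
  have hN1 : 0 < N - 1 := by linarith
  set W : ℝ → ℝ := fun s => v s ^ m with hW
  have hvd : ∀ r, 0 < r → HasDerivAt v (deriv v r) r := fun r hr =>
    ((hC2.contDiffAt (Ioi_mem_nhds hr)).differentiableAt (by norm_num)).hasDerivAt
  have hWC2 : ContDiffOn ℝ 2 W (Set.Ioi 0) := by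
    intro x hx
    exact (hC2 x hx).rpow_const_of_ne (hpos x (Set.Ioi_subset_Ici_self hx)).ne'
  have hWd : ∀ r, 0 < r → HasDerivAt W (deriv W r) r := fun r hr =>
    ((hWC2.contDiffAt (Ioi_mem_nhds hr)).differentiableAt (by norm_num)).hasDerivAt
  have hWdd : ∀ r, 0 < r → HasDerivAt (deriv W) (deriv (deriv W) r) r := by
    intro r hr
    have h1 : ContDiffOn ℝ 1 (deriv W) (Set.Ioi 0) :=
      ((contDiffOn_succ_iff_deriv_of_isOpen (n := 1) isOpen_Ioi).1 (by simpa [one_add_one_eq_two] using hWC2)).2.2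
    exact ((h1.contDiffAt (Ioi_mem_nhds hr)).differentiableAt (by norm_num)).hasDerivAt
  have hWcont : ContinuousOn W (Set.Ici 0) :=
    hcont.rpow_const (fun x hx => Or.inl (hpos x hx).ne')
  have hW0 : HasDerivWithinAt W 0 (Set.Ici 0) 0 := by
    have := hd0.rpow_const (p := m) (Or.inl (hpos 0 (by simp)).ne')
    simpa using this
  -- relation between the derivatives
  have hvW : ∀ r, 0 < r → m * deriv v r = v r ^ (1 - m) * deriv W r := by
    intro r hr
    have hp := hpos r hr.le
    have h := (hvd r hr).rpow_const (p := m) (Or.inl hp.ne')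
    have h' := h.deriv
    change deriv W r = _ at h'
    rw [h']
    have : v r ^ (1 - m) * v r ^ (m - 1) = 1 := by
      rw [← Real.rpow_add hp]; simp
    linear_combination (-(m * deriv v r)) * this
  -- G
  set G : ℝ → ℝ := fun r => r ^ (j + 2) * deriv W r with hG
  have hGd : ∀ r, 0 < r → HasDerivAt G
      (-(m / (N - 1)) * (r ^ (j + 2) * (α * v r + β * r * deriv v r))) r := by
    intro r hr
    have h := (hasDerivAt_pow (j + 2) r).mul (hWdd r hr)
    refine h.congr_deriv ?_
    have ho := hode r hr
    have e : deriv (deriv W) r + (N - 1) / r * deriv W r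
        = -(m / (N - 1)) * (α * v r + β * r * deriv v r) := by
      field_simp
      field_simp at ho
      linear_combination ho
    have e2 : r ^ (j + 2) * ((N - 1) / r * deriv W r) = (N - 1) * r ^ (j + 1) * deriv W r := by
      field_simp
      ring
    simp only [show j + 2 - 1 = j + 1 by omega]
    push_cast
    have e3 : (N - 1) = (j:ℝ) + 2 := by rw [hN]; ring
    rw [e3] at e2
    linear_combination r ^ (j + 2) * e - e2 + r ^ (j + 2) / r * deriv W r * e3
  -- integrating factor
  set q : ℝ → ℝ := fun s => β / (N - 1) * (s * v |s| ^ (1 - m)) with hq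
  have hqc : Continuous q := by
    have h1 : Continuous (fun s : ℝ => v |s|) :=
      hcont.comp_continuous continuous_abs (fun x => abs_nonneg x)
    have h2 : Continuous (fun s : ℝ => v |s| ^ (1 - m)) :=
      h1.rpow_const (fun x => Or.inl (hpos _ (abs_nonneg x)).ne')
    exact continuous_const.mul (continuous_id.mul h2)
  set P : ℝ → ℝ := fun r => ∫ s in (0:ℝ)..r, q s with hP
  have hPd : ∀ r, HasDerivAt P (q r) r := fun r => hqc.integral_hasStrictDerivAt 0 r |>.hasDerivAt
  have hqpos : ∀ r, 0 < r → 0 ≤ q r := by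
    intro r hr
    have := Real.rpow_pos_of_pos (hpos |r| (abs_nonneg r)) (1 - m)
    simp only [hq]
    positivity
  have hPmono : MonotoneOn P (Set.Ioi 0) := by
    apply monotoneOn_of_hasDerivWithinAt_nonneg (f' := q) (convex_Ioi 0)
    · exact fun x _ => (hPd x).continuousAt.continuousWithinAt
    · exact fun x _ => (hPd x).hasDerivWithinAt
    · intro x hx
      rw [interior_Ioi] at hx
      exact hqpos x hx
  have hEG : AntitoneOn (fun r => Real.exp (P r) * G r) (Set.Ioi 0) := by
    have hder : ∀ x, 0 < x → HasDerivAt (fun r => Real.exp (P r) * G r)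
        (-(Real.exp (P x) * (m / (N - 1) * (x ^ (j + 2) * (α * v x))))) x := by
      intro x hx
      refine ((hPd x).exp.mul (hGd x hx)).congr_deriv ?_
      have h := hvW x hx
      simp only [hq, hG, abs_of_pos hx]
      linear_combination (-Real.exp (P x) * x ^ (j + 2) * β * x / (N - 1)) * h
    apply antitoneOn_of_hasDerivWithinAt_nonpos (convex_Ioi 0)
    · exact fun x hx => (hder x hx).continuousAt.continuousWithinAt
    · intro x hx
      rw [interior_Ioi] at hx
      exact (hder x hx).hasDerivWithinAt
    · intro x hx
      rw [interior_Ioi] at hx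
      have hx' : 0 < x := hx
      have := hpos x hx'.le
      have : 0 ≤ Real.exp (P x) * (m / (N - 1) * (x ^ (j + 2) * (α * v x))) := by positivity
      linarith
  have hGnp : ∀ a, 0 < a → G a ≤ 0 := by
    intro a ha
    by_contra hcon
    push Not at hcon
    refine no_blow W (deriv W) (j + 2) a (G a) ha hcon hWcont hW0 hWd ?_
    intro r hr hra
    have h1 := hEG hr ha hra
    simp only at h1
    have h2 : Real.exp (P r) ≤ Real.exp (P a) := Real.exp_le_exp.2 (hPmono hr ha hra)
    have h3 := Real.exp_pos (P r)
    change G a ≤ G r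
    by_contra h
    push Not at h
    nlinarith
  have hv'np : ∀ r, 0 < r → deriv v r ≤ 0 := by
    intro r hr
    have h1 := hGnp r hr
    have h2 : deriv W r ≤ 0 := by
      by_contra h
      push Not at h
      have : 0 < G r := mul_pos (pow_pos hr _) h
      linarith
    have h3 := hvW r hr
    have h4 := Real.rpow_pos_of_pos (hpos r hr.le) (1 - m)
    by_contra h
    push Not at h
    nlinarith [mul_pos hm h]
  have hanti : AntitoneOn v (Set.Ici 0) := by
    apply antitoneOn_of_hasDerivWithinAt_nonpos (f' := deriv v) (convex_Ici 0) hcont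
    · intro x hx
      rw [interior_Ici] at hx
      exact (hvd x hx).hasDerivWithinAt
    · intro x hx
      rw [interior_Ici] at hx
      exact hv'np x hx
  have hvη : ∀ r, 0 ≤ r → v r ≤ η := by
    intro r hr
    rw [← hv0]
    exact hanti (by simp) hr hr
  -- lower bound
  set K : ℝ := (β + α / N) * η with hK
  set F : ℝ → ℝ := fun r => (N - 1) / m * G r + β * (r ^ (j + 3) * v r) + K * r ^ (j + 3) with hF
  have hFd : ∀ r, 0 < r → HasDerivAt F
      ((N * β - α) * (r ^ (j + 2) * v r) + K * (N * r ^ (j + 2))) r := by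
    intro r hr
    have hp := hasDerivAt_pow (j + 3) r
    have h := (((hGd r hr).const_mul ((N - 1) / m)).add
      ((hp.mul (hvd r hr)).const_mul β)).add (hp.const_mul K)
    refine h.congr_deriv ?_
    simp only [show j + 3 - 1 = j + 2 by omega]
    push_cast
    rw [← hN]
    have : (N - 1) / m * (m / (N - 1)) = 1 := by field_simp
    linear_combination (-(r ^ (j + 2) * (α * v r + β * r * deriv v r))) * this
  have hFmono : MonotoneOn F (Set.Ioi 0) := by
    apply monotoneOn_of_hasDerivWithinAt_nonneg (convex_Ioi 0)
    · exact fun x hx => (hFd x hx).continuousAt.continuousWithinAt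
    · intro x hx
      rw [interior_Ioi] at hx
      exact (hFd x hx).hasDerivWithinAt
    · intro x hx
      rw [interior_Ioi] at hx
      have hx' : 0 < x := hx
      have h1 := hpos x hx'.le
      have h2 := hvη x hx'.le
      have h3 : 0 < x ^ (j + 2) := pow_pos hx' _
      have e : K * N = (N * β + α) * η := by
        rw [hK]; field_simp
      have h4 : 0 ≤ (N * β - α) * v x + K * N := by
        rw [e]
        have : 0 < N * β * v x := by positivity
        have : 0 < N * β * η := by positivity
        nlinarith
      have := mul_nonneg h3.le h4
      linarith
  have hFnn : ∀ a, 0 < a → 0 ≤ F a := by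
    intro a ha
    by_contra hcon
    push Not at hcon
    refine no_blow (fun r => - W r) (fun r => - deriv W r) (j + 2) a (m / (N - 1) * (-F a)) ha
      (by have : 0 < -F a := by linarith
          positivity) hWcont.neg (hW0.neg.congr_deriv neg_zero) (fun r hr => (hWd r hr).neg) ?_
    intro r hr hra
    have h1 := hFmono hr ha hra
    have hvp := hpos r hr.le
    have h2 : 0 ≤ β * (r ^ (j + 3) * v r) + K * r ^ (j + 3) := by positivity
    have h3 : (N - 1) / m * G r ≤ F a := by
      simp only [hF] at h1 ⊢
      linarith
    have h4 : r ^ (j + 2) * -deriv W r = m / (N - 1) * (-((N - 1) / m * G r)) := by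
      simp only [hG]
      field_simp
    rw [h4]
    gcongr
  have hlow : ∀ r, 0 < r → -(C₁ * r) ≤ deriv v r := by
    intro r hr
    have h1 := hFnn r hr
    have hvp := hpos r hr.le
    have h2 := hvη r hr.le
    set M := max 1 η with hM
    have hM1 : 1 ≤ M := le_max_left _ _
    have hMη : η ≤ M := le_max_right _ _
    have h3 : v r ^ (1 - m) ≤ M :=
      calc v r ^ (1 - m) ≤ M ^ (1 - m) :=
            Real.rpow_le_rpow hvp.le (h2.trans hMη) (by linarith)
        _ ≤ M ^ (1:ℝ) := Real.rpow_le_rpow_of_exponent_le hM1 (by linarith)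
        _ = M := Real.rpow_one M
    have h4 := Real.rpow_pos_of_pos hvp (1 - m)
    have h5 := hvW r hr
    have h6 : 0 < r ^ (j + 2) := pow_pos hr _
    have h7 : F r = r ^ (j + 2) * ((N - 1) / m * deriv W r + r * (β * v r + K)) := by
      simp only [hF, hG]; ring
    have h8 : 0 ≤ (N - 1) / m * deriv W r + r * (β * v r + K) := by
      rw [h7] at h1
      exact nonneg_of_mul_nonneg_right h1 h6
    have h9 : (N - 1) * deriv v r = v r ^ (1 - m) * ((N - 1) / m * deriv W r) := by
      field_simp
      linear_combination h5
    have h10 : β * v r + K ≤ (2 * β + α / N) * M := by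
      have : 0 < α / N := by positivity
      rw [hK]
      nlinarith
    have h11 : 0 ≤ β * v r + K := by positivity
    have h12 : v r ^ (1 - m) * (r * (β * v r + K)) ≤ M * (r * ((2 * β + α / N) * M)) := by
      gcongr
    have h13 : (N - 1) * (C₁ * r) = M * (r * ((2 * β + α / N) * M)) := by
      rw [hC₁, abs_of_pos hα]
      field_simp
    have h14 := mul_nonneg h4.le h8
    have : 0 ≤ (N - 1) * (deriv v r + C₁ * r) := by
      rw [mul_add, h9, h13]; linarith
    have := nonneg_of_mul_nonneg_right this hN1
    linarith
  have hCpos : 0 ≤ C₁ := by rw [hC₁]; positivity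
  intro r₀ hr₀
  have hmono : MonotoneOn (fun r => v r + C₁ * r₀ * r) (Set.Icc 0 r₀) := by
    apply monotoneOn_of_hasDerivWithinAt_nonneg (f' := fun r => deriv v r + C₁ * r₀ * 1)
      (convex_Icc 0 r₀)
    · exact (hcont.mono Set.Icc_subset_Ici_self).add (by fun_prop)
    · intro x hx
      rw [interior_Icc] at hx
      exact ((hvd x hx.1).add ((hasDerivAt_id x).const_mul _)).hasDerivWithinAt
    · intro x hx
      rw [interior_Icc] at hx
      have := hlow x hx.1
      have := mul_le_mul_of_nonneg_left hx.2.le hCpos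
      linarith
  have main : ∀ a ∈ Set.Icc (0:ℝ) r₀, ∀ b ∈ Set.Icc (0:ℝ) r₀, a ≤ b →
      |v a - v b| ≤ C₁ * r₀ * |a - b| := by
    intro a ha b hb hab
    have h1 := hmono ha hb hab
    have h2 := hanti ha.1 hb.1 hab
    simp only at h1
    rw [abs_of_nonneg (by linarith), abs_of_nonpos (by linarith)]
    linarith
  intro r₁ h₁ r₂ h₂
  rcases le_total r₁ r₂ with h | h
  · exact main r₁ h₁ r₂ h₂ h
  · rw [abs_sub_comm, abs_sub_comm r₁]
    exact main r₂ h₂ r₁ h₁ h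
end

section
/- Let n ≥ 3 be an integer, let η > 0, and let m, α, β satisfy 0 < m ≤ (n−2)/n, β > 0, α > 0, and α ≤ β·(n−2)/m. Let v be a radial solution of (E) on [0,∞). Then v is strictly decreasing on (0,∞) and 0 < v(r) ≤ η for all r ≥ 0; moreover, with k = β/α, the lower bound v(r) ≥ (r₀²·v(r₀)^{2k} / r²)^{1/(2k)} holds for all r ≥ r₀ > 0 (i.e. r²·v(r)^{2k} is nondecreasing in r). -/
open Real Set Filter

lemma aux_seq (v : ℝ → ℝ) (hc : ContinuousOn v (Set.Ici (0:ℝ)))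
    (hd : ∀ r : ℝ, 0 < r → HasDerivAt v (deriv v r) r)
    (h0 : HasDerivWithinAt v 0 (Set.Ici (0:ℝ)) 0) :
    ∃ x : ℕ → ℝ, (∀ j, 0 < x j) ∧ Tendsto x atTop (nhds 0) ∧
      Tendsto (fun j => deriv v (x j)) atTop (nhds 0) := by
  have key : ∀ j : ℕ, ∃ ξ : ℝ, 0 < ξ ∧ ξ ≤ 1 / ((j : ℝ) + 1) ∧
      |deriv v ξ| ≤ 1 / ((j : ℝ) + 1) := by
    intro j
    have hε : (0 : ℝ) < 1 / ((j : ℝ) + 1) := by positivity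
    have h1 := (hasDerivWithinAt_iff_isLittleO.1 h0).def hε
    rw [eventually_nhdsWithin_iff, Metric.eventually_nhds_iff] at h1
    obtain ⟨δ, hδ, h1⟩ := h1
    set r := min (δ / 2) (1 / ((j : ℝ) + 1)) with hr
    have hr0 : 0 < r := lt_min (by linarith) hε
    have hrδ : r < δ := lt_of_le_of_lt (min_le_left _ _) (by linarith)
    have h2 := @h1 r (by rw [Real.dist_eq, sub_zero, abs_of_pos hr0]; exact hrδ) hr0.le
    obtain ⟨ξ, hξ, h3⟩ := exists_deriv_eq_slope v hr0
      (hc.mono Set.Icc_subset_Ici_self)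
      (fun y hy => (hd y hy.1).differentiableAt.differentiableWithinAt)
    refine ⟨ξ, hξ.1, hξ.2.le.trans (min_le_right _ _), ?_⟩
    rw [h3, abs_div, sub_zero, abs_of_pos hr0, div_le_iff₀ hr0]
    simpa [abs_of_pos hr0] using h2
  choose x hx1 hx2 hx3 using key
  have ht := tendsto_one_div_add_atTop_nhds_zero_nat (𝕜 := ℝ)
  refine ⟨x, hx1, squeeze_zero (fun j => (hx1 j).le) hx2 ht, ?_⟩
  exact squeeze_zero_norm (fun j => by simpa using hx3 j) ht

lemma aux_ode (N m α β : ℝ) (hN : 1 < N) (hm : 0 < m) (v : ℝ → ℝ)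
    (hp : ∀ r : ℝ, 0 < r → 0 < v r)
    (hd : ∀ r : ℝ, 0 < r → HasDerivAt v (deriv v r) r)
    (hd2 : ∀ r : ℝ, 0 < r → HasDerivAt (deriv v) (deriv (deriv v) r) r)
    (r : ℝ) (hr : 0 < r)
    (ho : ((N - 1) / m) * (deriv (deriv (fun s => v s ^ m)) r
      + ((N - 1) / r) * deriv (fun s => v s ^ m) r)
    + α * v r + β * r * deriv v r = 0) :
    deriv (deriv v) r = -(m - 1) * deriv v r ^ 2 / v r - (N - 1) / r * deriv v r
      - (α * v r + β * r * deriv v r) / ((N - 1) * v r ^ (m - 1)) := by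
  have e1 : ∀ s : ℝ, 0 < s → deriv (fun s => v s ^ m) s = deriv v s * m * v s ^ (m - 1) :=
    fun s hs => ((hd s hs).rpow_const (Or.inl (hp s hs).ne')).deriv
  have e2 : deriv (fun s => v s ^ m) =ᶠ[nhds r] fun s => deriv v s * m * v s ^ (m - 1) := by
    filter_upwards [Ioi_mem_nhds hr] with s hs using e1 s hs
  have e3 := (((hd2 r hr).mul_const m).mul
    ((hd r hr).rpow_const (p := m - 1) (Or.inl (hp r hr).ne'))).deriv
  have e4 : deriv (deriv (fun s => v s ^ m)) r = _ := e2.deriv_eq.trans e3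
  have hv := hp r hr
  have hX : 0 < v r ^ (m - 1) := Real.rpow_pos_of_pos hv _
  have hX2 : v r ^ (m - 1 - 1) = v r ^ (m - 1) / v r := Real.rpow_sub_one hv.ne' _
  rw [e4, e1 r hr, hX2] at ho
  have hN' : N - 1 ≠ 0 := by linarith
  set X := v r ^ (m - 1)
  field_simp at ho ⊢
  linear_combination ho

lemma aux_prim (A : ℝ → ℝ) (hA : ContinuousOn A (Set.Ioi (0:ℝ))) :
    ∃ F : ℝ → ℝ, ∀ r : ℝ, 0 < r → HasDerivAt F (A r) r := by
  refine ⟨fun r => ∫ t in (1:ℝ)..r, A t, fun r hr => ?_⟩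
  apply intervalIntegral.integral_hasDerivAt_right
  · apply ContinuousOn.intervalIntegrable
    apply hA.mono
    intro y hy
    exact lt_of_lt_of_le (lt_min one_pos hr) hy.1
  · exact hA.stronglyMeasurableAtFilter isOpen_Ioi _ hr
  · exact hA.continuousAt (Ioi_mem_nhds hr)

theorem stmt14 (n : ℕ) (hn : 3 ≤ n) (m α β η : ℝ) (hη : 0 < η)
    (hm : 0 < m) (hm' : m ≤ ((n : ℝ) - 2) / n)
    (hβ : 0 < β) (hα : 0 < α) (hαβ : α ≤ β * ((n : ℝ) - 2) / m)
    (v : ℝ → ℝ) (hv : IsRadialSol n m α β η v) :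
    StrictAntiOn v (Set.Ioi (0:ℝ)) ∧
    (∀ r : ℝ, 0 ≤ r → 0 < v r ∧ v r ≤ η) ∧
    (∀ r₀ : ℝ, 0 < r₀ → ∀ r : ℝ, r₀ ≤ r →
      (r₀ ^ 2 * v r₀ ^ (2 * (β / α)) / r ^ 2) ^ (1 / (2 * (β / α))) ≤ v r) := by
  obtain ⟨hpos, hc, hC2, h0, hv0, hode⟩ := hv
  have hp : ∀ r : ℝ, 0 < r → 0 < v r := fun r hr => hpos r hr.le
  have hd : ∀ r : ℝ, 0 < r → HasDerivAt v (deriv v r) r := fun r hr =>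
    ((hC2.contDiffAt (Ioi_mem_nhds hr)).differentiableAt (by norm_num)).hasDerivAt
  have hC1 : ContDiffOn ℝ 1 (deriv v) (Set.Ioi (0:ℝ)) :=
    ((contDiffOn_succ_iff_deriv_of_isOpen (n := 1) isOpen_Ioi).1
      (by simpa [one_add_one_eq_two] using hC2)).2.2
  have hd2 : ∀ r : ℝ, 0 < r → HasDerivAt (deriv v) (deriv (deriv v) r) r := fun r hr =>
    ((hC1.contDiffAt (Ioi_mem_nhds hr)).differentiableAt (by norm_num)).hasDerivAt
  obtain ⟨x, hx0, hxt, hxd⟩ := aux_seq v hc hd h0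
  have hxv : Tendsto (fun j => v (x j)) atTop (nhds η) := by
    have h1 : Tendsto v (nhdsWithin 0 (Set.Ici 0)) (nhds (v 0)) := hc 0 Set.self_mem_Ici
    rw [hv0] at h1
    exact h1.comp (tendsto_nhdsWithin_iff.2 ⟨hxt, Eventually.of_forall fun j => (hx0 j).le⟩)
  have hn3 : (3 : ℝ) ≤ n := by exact_mod_cast hn
  have hvv : ∀ r : ℝ, 0 < r → _ := fun r hr =>
    aux_ode n m α β (by linarith) hm v hp hd hd2 r hr (hode r hr)
  -- lower barrier
  have ha : 0 < α / β := by positivity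
  have haβ : β * (α / β) = α := by field_simp
  have ham : 0 ≤ (n : ℝ) - 2 - m * (α / β) := by
    rw [le_div_iff₀ hm] at hαβ
    have : m * (α / β) ≤ n - 2 := by
      rw [mul_div_assoc', div_le_iff₀ hβ]; linarith
    linarith
  set a := α / β with hadef
  have hlow : ∀ r : ℝ, 0 < r → 0 < r * deriv v r / v r + a := by
    have hvc : ContinuousOn v (Set.Ioi 0) := hc.mono Set.Ioi_subset_Ici_self
    have hdc : ContinuousOn (deriv v) (Set.Ioi 0) := hC1.continuousOn
    obtain ⟨F, hF⟩ := aux_prim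
      (fun r => (-m * (r * deriv v r / v r) + m * a - (n - 2)) / r
        - β * r / ((n - 1) * v r ^ (m - 1))) (by
        have hXc : ContinuousOn (fun r => v r ^ (m - 1)) (Set.Ioi 0) :=
          hvc.rpow_const fun r hr => Or.inl (hp r hr).ne'
        refine ContinuousOn.sub (ContinuousOn.div ?_ continuousOn_id fun r hr => ne_of_gt hr)
          (ContinuousOn.div (by fun_prop) (by fun_prop) fun r hr => ?_)
        · have := ((continuousOn_id.mul hdc).div hvc fun r hr => (hp r hr).ne')
          exact ((continuousOn_const.mul this).add continuousOn_const).sub continuousOn_const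
        · have := Real.rpow_pos_of_pos (hp r hr) (m - 1)
          have h2 : (0:ℝ) < n - 1 := by linarith
          positivity)
    have hG : ∀ r : ℝ, 0 < r → HasDerivAt
        (fun r => (r * deriv v r / v r + a) * Real.exp (-F r))
        (a * (n - 2 - m * a) / r * Real.exp (-F r)) r := by
      intro r hr
      have h1 := (((((hasDerivAt_id r).mul (hd2 r hr)).div (hd r hr) (hp r hr).ne').add_const a).mul
        (hF r hr).neg.exp)
      refine h1.congr_deriv ?_
      have hX := Real.rpow_pos_of_pos (hp r hr) (m - 1)
      have h2 : (n:ℝ) - 1 ≠ 0 := by linarith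
      have hv1 := hp r hr
      simp only [id, Pi.mul_apply, Pi.div_apply]
      rw [hvv r hr, ← haβ]
      generalize v r ^ (m - 1) = X at *
      generalize Real.exp (-F r) = E at *
      clear_value a
      field_simp
      ring
    have hmono : MonotoneOn (fun r => (r * deriv v r / v r + a) * Real.exp (-F r)) (Set.Ioi 0) := by
      apply monotoneOn_of_deriv_nonneg (convex_Ioi 0)
      · exact fun r hr => (hG r hr).continuousAt.continuousWithinAt
      · rw [interior_Ioi]
        exact fun r hr => (hG r hr).differentiableAt.differentiableWithinAt
      · rw [interior_Ioi]
        intro r hr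
        rw [(hG r hr).deriv]
        have : 0 < r := hr
        positivity
    intro r hr
    have ht : Tendsto (fun j => x j * deriv v (x j) / v (x j) + a) atTop (nhds (0 * 0 / η + a)) :=
      ((hxt.mul hxd).div hxv hη.ne').add_const a
    simp only [mul_zero, zero_div, zero_add] at ht
    obtain ⟨j, hj1, hj2⟩ := ((ht.eventually (lt_mem_nhds ha)).and
      (hxt.eventually (gt_mem_nhds hr))).exists
    have h3 := hmono (hx0 j) hr hj2.le
    have h4 : 0 < (r * deriv v r / v r + a) * Real.exp (-F r) :=
      lt_of_lt_of_le (mul_pos hj1 (Real.exp_pos _)) h3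
    exact pos_of_mul_pos_left h4 (Real.exp_pos _).le
  -- upper barrier
  have hup : ∀ r : ℝ, 0 < r → deriv v r < 0 := by
    obtain ⟨k, rfl⟩ : ∃ k, n = k + 3 := ⟨n - 3, by omega⟩
    have hP : ∀ r : ℝ, 0 < r → HasDerivAt
        (fun r => r ^ (k + 2) * (deriv v r * v r ^ (m - 1)))
        (-(r ^ (k + 2) * (β * v r * (r * deriv v r / v r + a)) / (k + 2))) r := by
      intro r hr
      have h1 := (hasDerivAt_pow (k + 2) r).mul ((hd2 r hr).mul
        ((hd r hr).rpow_const (p := m - 1) (Or.inl (hp r hr).ne')))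
      refine h1.congr_deriv ?_
      have hX := Real.rpow_pos_of_pos (hp r hr) (m - 1)
      have hv1 := hp r hr
      have h2 : (k : ℝ) + 2 ≠ 0 := by positivity
      have h3 : ((k + 3 : ℕ) : ℝ) - 1 = k + 2 := by push_cast; ring
      simp only [Pi.mul_apply]
      rw [hvv r hr, Real.rpow_sub_one hv1.ne' (m - 1), ← haβ, h3]
      generalize v r ^ (m - 1) = X at *
      clear_value a
      simp only [Nat.add_sub_cancel, show k + 2 - 1 = k + 1 from rfl]
      push_cast
      field_simp
      ring
    have hanti : StrictAntiOn (fun r => r ^ (k + 2) * (deriv v r * v r ^ (m - 1))) (Set.Ioi 0) := by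
      apply strictAntiOn_of_deriv_neg (convex_Ioi 0)
      · exact fun r hr => (hP r hr).continuousAt.continuousWithinAt
      · rw [interior_Ioi]
        intro r hr
        rw [(hP r hr).deriv]
        have h1 : 0 < r := hr
        have h2 := hlow r hr
        have h3 := hp r hr
        have : 0 < r ^ (k + 2) * (β * v r * (r * deriv v r / v r + a)) / ((k:ℝ) + 2) := by positivity
        linarith
    intro r hr
    have ht : Tendsto (fun j => x j ^ (k + 2) * (deriv v (x j) * v (x j) ^ (m - 1))) atTop
        (nhds (0 ^ (k + 2) * (0 * η ^ (m - 1)))) :=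
      (hxt.pow _).mul (hxd.mul (hxv.rpow_const (Or.inl hη.ne')))
    simp only [zero_mul, mul_zero] at ht
    have h5 : (r / 2) ^ (k + 2) * (deriv v (r / 2) * v (r / 2) ^ (m - 1)) ≤ 0 := by
      refine ge_of_tendsto ht ?_
      filter_upwards [hxt.eventually (gt_mem_nhds (half_pos hr))] with j hj
      exact (hanti (hx0 j) (half_pos hr) hj).le
    have h6 := lt_of_lt_of_le (hanti (half_pos hr) hr (half_lt_self hr)) h5
    have hX := Real.rpow_pos_of_pos (hp r hr) (m - 1)
    by_contra hcon
    push Not at hcon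
    have : 0 ≤ r ^ (k + 2) * (deriv v r * v r ^ (m - 1)) := by positivity
    exact absurd h6 (not_lt.2 this)
  have hsa : StrictAntiOn v (Set.Ici 0) := by
    apply strictAntiOn_of_deriv_neg (convex_Ici 0) hc
    rw [interior_Ici]
    exact hup
  refine ⟨hsa.mono Set.Ioi_subset_Ici_self, fun r hr => ⟨hpos r hr, ?_⟩, ?_⟩
  · rw [← hv0]
    exact hsa.antitoneOn Set.self_mem_Ici hr hr
  · have hL : ∀ r : ℝ, 0 < r → HasDerivAt (fun r => Real.log (v r) + a * Real.log r)
        ((r * deriv v r / v r + a) / r) r := by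
      intro r hr
      refine (((hd r hr).log (hp r hr).ne').add
        ((Real.hasDerivAt_log hr.ne').const_mul a)).congr_deriv ?_
      have := hp r hr
      field_simp
    have hmono : MonotoneOn (fun r => Real.log (v r) + a * Real.log r) (Set.Ioi 0) := by
      apply monotoneOn_of_deriv_nonneg (convex_Ioi 0)
      · exact fun r hr => (hL r hr).continuousAt.continuousWithinAt
      · rw [interior_Ioi]
        exact fun r hr => (hL r hr).differentiableAt.differentiableWithinAt
      · rw [interior_Ioi]
        intro r hr
        rw [(hL r hr).deriv]
        exact div_nonneg (hlow r hr).le (le_of_lt hr)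
    intro r₀ hr₀ r hrr
    have hr : 0 < r := lt_of_lt_of_le hr₀ hrr
    have h1 := hmono hr₀ hr hrr
    simp only at h1
    have hv1 := hp r₀ hr₀
    have hY := Real.rpow_pos_of_pos hv1 (2 * (β / α))
    rw [← Real.log_le_log_iff (by positivity) (hp r hr), Real.log_rpow (by positivity),
      Real.log_div (by positivity) (by positivity), Real.log_mul (by positivity) (by positivity),
      Real.log_pow, Real.log_pow, Real.log_rpow hv1]
    have : 1 / (2 * (β / α)) * (((2:ℕ):ℝ) * Real.log r₀ + 2 * (β / α) * Real.log (v r₀)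
        - ((2:ℕ):ℝ) * Real.log r) = Real.log (v r₀) + a * Real.log r₀ - a * Real.log r := by
      rw [hadef]; push_cast; field_simp; ring
    rw [this]
    linarith
end

section
/- Let n ≥ 3 be an integer, let η > 0, and let m, α, β satisfy 0 < m ≤ (n−2)/n, β > 0, and α < 0. Let v be a radial solution of (E) on [0,∞). Then 0 < v'(r) ≤ (|α|/β)·v(r)/r for all r > 0, and consequently for every r₀ > 0 and all r ≥ r₀, v(r₀) ≤ v(r) ≤ v(r₀)·(r/r₀)^{|α|/β}. -/
open Real Set Filter

lemma radial_phi_deriv (n : ℕ) (m α β η : ℝ) (hm : 0 < m) (hn : 3 ≤ n)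
    (v : ℝ → ℝ) (hv : IsRadialSol n m α β η v) (r : ℝ) (hr : 0 < r) :
    HasDerivAt v (deriv v r) r ∧
    ∃ d : ℝ, HasDerivAt (fun s => s * deriv v s / v s) d r ∧
      ∀ c : ℝ, r * deriv v r / v r = c →
        ((n : ℝ) - 1) * (r * d) = ((n : ℝ) - 1) * (-((n : ℝ) - 2) * c - m * c ^ 2)
          + r ^ 2 * (-α - β * c) * (v r) ^ (1 - m) := by
  obtain ⟨hpos, hcont, hC2, h0, hv0, heq⟩ := hv
  have hvd : ∀ s : ℝ, 0 < s → HasDerivAt v (deriv v s) s := fun s hs =>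
    ((hC2.differentiableOn (by norm_num)).differentiableAt
      (isOpen_Ioi.mem_nhds hs)).hasDerivAt
  have hC1 : ContDiffOn ℝ 1 (deriv v) (Set.Ioi (0:ℝ)) :=
    ((contDiffOn_succ_iff_deriv_of_isOpen (n := 1) isOpen_Ioi).1
      (by norm_num; exact hC2)).2.2
  have hvdd : HasDerivAt (deriv v) (deriv (deriv v) r) r :=
    ((hC1.differentiableOn (by norm_num)).differentiableAt
      (isOpen_Ioi.mem_nhds hr)).hasDerivAt
  have hvr : 0 < v r := hpos r hr.le
  have hw : ∀ s : ℝ, 0 < s → HasDerivAt (fun s => v s ^ m) (deriv v s * m * v s ^ (m - 1)) s :=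
    fun s hs => (hvd s hs).rpow_const (Or.inl (hpos s hs.le).ne')
  have hw2 : HasDerivAt (deriv (fun s => v s ^ m))
      (deriv (deriv v) r * m * v r ^ (m - 1)
        + deriv v r * m * (deriv v r * (m - 1) * v r ^ (m - 1 - 1))) r := by
    have := (hvdd.mul_const m).mul
      ((hvd r hr).rpow_const (p := m - 1) (Or.inl hvr.ne'))
    refine this.congr_of_eventuallyEq ?_
    filter_upwards [isOpen_Ioi.mem_nhds hr] with s hs
    exact (hw s hs).deriv
  have he := heq r hr
  rw [hw2.deriv, (hw r hr).deriv] at he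
  refine ⟨hvd r hr, _, ((hasDerivAt_id r).mul hvdd).div (hvd r hr) hvr.ne', ?_⟩
  intro c hc
  have hv' : deriv v r = c * v r / r := by
    rw [← hc]; field_simp
  have e1 : v r ^ (m - 1) = v r ^ m / v r := by rw [rpow_sub_one hvr.ne']
  have e2 : v r ^ (m - 1 - 1) = v r ^ m / v r / v r := by
    rw [rpow_sub_one hvr.ne', rpow_sub_one hvr.ne']
  have e3 : v r ^ (1 - m) = v r / v r ^ m := by rw [rpow_sub hvr, rpow_one]
  have hp : 0 < v r ^ m := rpow_pos_of_pos hvr m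
  rw [e1, e2, hv'] at he
  simp only [id, Pi.mul_apply]
  rw [e3, hv']
  generalize deriv (deriv v) r = z at *
  generalize v r ^ m = P at *
  generalize v r = V at *
  field_simp at he ⊢
  linear_combination he

lemma radial_small (n : ℕ) (m α β η : ℝ) (hη : 0 < η)
    (v : ℝ → ℝ) (hv : IsRadialSol n m α β η v)
    (hvd : ∀ r : ℝ, 0 < r → HasDerivAt v (deriv v r) r)
    (r δ : ℝ) (hr : 0 < r) (hδ : 0 < δ) :
    ∃ x : ℝ, 0 < x ∧ x < r ∧ |x * deriv v x / v x| < δ := by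
  obtain ⟨hpos, hcont, hC2, h0, hv0, heq⟩ := hv
  have h1 := hasDerivWithinAt_iff_tendsto_slope.1 h0
  rw [show Set.Ici (0:ℝ) \ {0} = Set.Ioi 0 from Set.Ici_sdiff_left] at h1
  have h2 := h1.eventually (Metric.ball_mem_nhds (0:ℝ) (show 0 < δ * (η / 2) by positivity))
  have h3 : ∀ᶠ x in nhdsWithin (0:ℝ) (Set.Ici 0), η / 2 < v x := by
    apply (hcont 0 (by simp)).eventually
    apply lt_mem_nhds
    rw [hv0]; linarith
  obtain ⟨ε, hε, h3⟩ := Metric.mem_nhdsWithin_iff.1 h3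
  have h4 : ∀ᶠ x in nhdsWithin (0:ℝ) (Set.Ioi 0), x < min r (min 1 ε) :=
    nhdsWithin_le_nhds (gt_mem_nhds (by positivity))
  obtain ⟨y, ⟨hy2, hy4⟩, hy0⟩ := ((h2.and h4).and self_mem_nhdsWithin).exists
  have hy0 : 0 < y := hy0
  simp only [lt_min_iff] at hy4
  obtain ⟨x, ⟨hx0, hxy⟩, hx⟩ := exists_deriv_eq_slope v hy0
    (hcont.mono Icc_subset_Ici_self)
    (fun z hz => (hvd z hz.1).differentiableAt.differentiableWithinAt)
  refine ⟨x, hx0, by linarith, ?_⟩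
  have hb : |deriv v x| < δ * (η / 2) := by
    rw [hx]
    simpa [slope_def_field, abs_div] using hy2
  have hvx : η / 2 < v x := h3 ⟨by simp [abs_of_pos hx0]; linarith, hx0.le⟩
  have hvp : 0 < v x := by linarith
  rw [abs_div, abs_mul, abs_of_pos hx0, abs_of_pos hvp, div_lt_iff₀ hvp]
  have : x * |deriv v x| ≤ 1 * |deriv v x| :=
    mul_le_mul_of_nonneg_right (by linarith) (abs_nonneg _)
  have : δ * (η / 2) < δ * v x := mul_lt_mul_of_pos_left hvx hδ
  linarith

theorem stmt15 (n : ℕ) (hn : 3 ≤ n) (m α β η : ℝ) (hη : 0 < η)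
    (hm : 0 < m) (hm' : m ≤ ((n : ℝ) - 2) / n)
    (hβ : 0 < β) (hα : α < 0)
    (v : ℝ → ℝ) (hv : IsRadialSol n m α β η v) :
    (∀ r : ℝ, 0 < r →
      0 < deriv v r ∧ deriv v r ≤ (|α| / β) * v r / r) ∧
    (∀ r₀ : ℝ, 0 < r₀ → ∀ r : ℝ, r₀ ≤ r →
      v r₀ ≤ v r ∧ v r ≤ v r₀ * (r / r₀) ^ (|α| / β)) := by
  have hD := radial_phi_deriv n m α β η hm hn v hv
  have hvd : ∀ r : ℝ, 0 < r → HasDerivAt v (deriv v r) r := fun r hr => (hD r hr).1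
  have hS := radial_small n m α β η hη v hv hvd
  have hpos := hv.1
  have hn3 : (3:ℝ) ≤ n := by exact_mod_cast hn
  rw [abs_of_neg hα]
  set φ : ℝ → ℝ := fun s => s * deriv v s / v s with hφ
  have hφd : ∀ r : ℝ, 0 < r → HasDerivAt φ (deriv φ r) r := fun r hr => by
    obtain ⟨_, d, hd, _⟩ := hD r hr
    exact hd.differentiableAt.hasDerivAt
  have hφe : ∀ r : ℝ, 0 < r → ∀ c : ℝ, φ r = c →
        ((n : ℝ) - 1) * (r * deriv φ r) = ((n : ℝ) - 1) * (-((n : ℝ) - 2) * c - m * c ^ 2)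
          + r ^ 2 * (-α - β * c) * (v r) ^ (1 - m) := fun r hr => by
    obtain ⟨_, d, hd, h⟩ := hD r hr
    rw [hd.deriv]; exact h
  clear_value φ
  have hk : 0 < -α / β := div_pos (by linarith) hβ
  have hup : ∀ r : ℝ, 0 < r → φ r ≤ -α / β := by
    intro r hr
    obtain ⟨x, hx0, hxr, hx⟩ := hS r (-α / β) hr hk
    have hx' : φ x ≤ -α / β := by rw [hφ]; exact (abs_lt.1 hx).2.le
    refine image_le_of_deriv_right_lt_deriv_boundary' (f := φ) (f' := deriv φ) (a := x) (b := r)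
      (B := fun _ => -α / β) (B' := fun _ => 0) ?_ ?_ hx' continuousOn_const ?_ ?_
      (right_mem_Icc.2 hxr.le)
    · exact fun y hy => (hφd y (hx0.trans_le hy.1)).continuousAt.continuousWithinAt
    · exact fun y hy => (hφd y (hx0.trans_le hy.1)).hasDerivWithinAt
    · exact fun y hy => hasDerivWithinAt_const _ _ _
    · intro y hy hyk
      have hy0 : 0 < y := hx0.trans_le hy.1
      have h := hφe y hy0 _ hyk
      have e : -α - β * (-α / β) = 0 := by field_simp; ring
      rw [e] at h
      generalize -α / β = k at *
      have h1 : ((n:ℝ) - 1) * (-((n : ℝ) - 2) * k - m * k ^ 2) < 0 := by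
        apply mul_neg_of_pos_of_neg (by linarith)
        have : 0 < ((n:ℝ) - 2) * k := mul_pos (by linarith) hk
        have : 0 < m * k ^ 2 := by positivity
        linarith
      by_contra hc
      have : 0 ≤ ((n:ℝ) - 1) * (y * deriv φ y) :=
        mul_nonneg (by linarith) (mul_nonneg hy0.le (not_lt.1 hc))
      linarith
  have hlow : ∀ r : ℝ, 0 < r → ∀ ε : ℝ, 0 < ε → m * ε < 1 → -ε ≤ φ r := by
    intro r hr ε hε hmε
    obtain ⟨x, hx0, hxr, hx⟩ := hS r ε hr hε
    have hx' : -φ x ≤ ε := by rw [hφ]; linarith [(abs_lt.1 hx).1]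
    suffices -φ r ≤ ε by linarith
    refine image_le_of_deriv_right_lt_deriv_boundary' (f := fun s => -φ s)
      (f' := fun s => -deriv φ s) (a := x) (b := r)
      (B := fun _ => ε) (B' := fun _ => 0) ?_ ?_ hx' continuousOn_const ?_ ?_
      (right_mem_Icc.2 hxr.le)
    · exact fun y hy => (hφd y (hx0.trans_le hy.1)).neg.continuousAt.continuousWithinAt
    · exact fun y hy => (hφd y (hx0.trans_le hy.1)).neg.hasDerivWithinAt
    · exact fun y hy => hasDerivWithinAt_const _ _ _
    · intro y hy hyk
      have hy0 : 0 < y := hx0.trans_le hy.1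
      have h := hφe y hy0 (-ε) (by linarith)
      have hvp : 0 < v y ^ (1 - m) := rpow_pos_of_pos (hpos y hy0.le) _
      have h1 : 0 < ((n:ℝ) - 1) * (-((n : ℝ) - 2) * (-ε) - m * (-ε) ^ 2) := by
        apply mul_pos (by linarith)
        have : 0 < (((n:ℝ) - 2) - m * ε) * ε := mul_pos (by linarith) hε
        linarith
      have h2 : 0 < y ^ 2 * (-α - β * (-ε)) * v y ^ (1 - m) := by
        have : 0 < -α - β * (-ε) := by
          have := mul_pos hβ hε
          linarith
        positivity
      by_contra hc
      have : ((n:ℝ) - 1) * (y * deriv φ y) ≤ 0 :=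
        mul_nonpos_of_nonneg_of_nonpos (by linarith)
          (mul_nonpos_of_nonneg_of_nonpos hy0.le (by linarith [not_lt.1 hc]))
      linarith
  have hnn : ∀ r : ℝ, 0 < r → 0 ≤ φ r := by
    intro r hr
    by_contra hc
    push Not at hc
    have hm2 : 0 < 1 / (2 * m) := by positivity
    have h := hlow r hr (min (-φ r / 2) (1 / (2 * m))) (lt_min (by linarith) hm2) (by
      calc m * min (-φ r / 2) (1 / (2 * m)) ≤ m * (1 / (2 * m)) :=
            mul_le_mul_of_nonneg_left (min_le_right _ _) hm.le
        _ < 1 := by field_simp; norm_num)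
    have := min_le_left (-φ r / 2) (1 / (2 * m))
    linarith
  have hposφ : ∀ r : ℝ, 0 < r → 0 < φ r := by
    intro r hr
    rcases (hnn r hr).lt_or_eq with h | h
    · exact h
    exfalso
    have hmin : IsLocalMin φ r := by
      filter_upwards [isOpen_Ioi.mem_nhds hr] with s hs
      rw [← h]; exact hnn s hs
    have hd := hmin.deriv_eq_zero
    have he := hφe r hr 0 h.symm
    rw [hd] at he
    have hvp : 0 < v r ^ (1 - m) := rpow_pos_of_pos (hpos r hr.le) _
    have : 0 < r ^ 2 * (-α) * v r ^ (1 - m) := by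
      have : 0 < -α := by linarith
      positivity
    have h0 : r ^ 2 * (-α) * v r ^ (1 - m) = 0 := by linear_combination -he
    linarith
  have hmain : ∀ r : ℝ, 0 < r → 0 < deriv v r ∧ deriv v r ≤ (-α / β) * v r / r := by
    intro r hr
    have hvr := hpos r hr.le
    have h1 := hposφ r hr
    have h2 := hup r hr
    rw [hφ] at h1 h2
    simp only at h1 h2
    rw [div_le_iff₀ hvr] at h2
    constructor
    · have := (div_pos_iff_of_pos_right hvr).1 h1
      exact (mul_pos_iff_of_pos_left hr).1 this
    · rw [le_div_iff₀ hr]; linarith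
  refine ⟨hmain, ?_⟩
  intro r₀ hr₀ r hr
  have hr0 : 0 < r := hr₀.trans_le hr
  have hI : interior (Set.Icc r₀ r) = Set.Ioo r₀ r := interior_Icc
  constructor
  · refine monotoneOn_of_deriv_nonneg (convex_Icc r₀ r) ?_ ?_ ?_ (left_mem_Icc.2 hr)
      (right_mem_Icc.2 hr) hr
    · exact fun y hy => (hvd y (hr₀.trans_le hy.1)).continuousAt.continuousWithinAt
    · rw [hI]; exact fun y hy => (hvd y (hr₀.trans hy.1)).differentiableAt.differentiableWithinAt
    · rw [hI]; exact fun y hy => (hmain y (hr₀.trans hy.1)).1.le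
  · have hL : ∀ y : ℝ, 0 < y → HasDerivAt (fun s => Real.log (v s) - (-α / β) * Real.log s)
        (deriv v y / v y - (-α / β) * y⁻¹) y := fun y hy =>
      ((hvd y hy).log (hpos y hy.le).ne').sub ((hasDerivAt_log hy.ne').const_mul _)
    have hA : Real.log (v r) - (-α / β) * Real.log r
        ≤ Real.log (v r₀) - (-α / β) * Real.log r₀ := by
      refine antitoneOn_of_deriv_nonpos (f := fun s => Real.log (v s) - (-α / β) * Real.log s)
        (convex_Icc r₀ r) ?_ ?_ ?_ (left_mem_Icc.2 hr) (right_mem_Icc.2 hr) hr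
      · exact fun y hy => (hL y (hr₀.trans_le hy.1)).continuousAt.continuousWithinAt
      · rw [hI]
        exact fun y hy => (hL y (hr₀.trans hy.1)).differentiableAt.differentiableWithinAt
      · rw [hI]
        intro y hy
        have hy0 := hr₀.trans hy.1
        rw [(hL y hy0).deriv, sub_nonpos, div_le_iff₀ (hpos y hy0.le)]
        calc deriv v y ≤ (-α / β) * v y / y := (hmain y hy0).2
          _ = _ := by ring
    have hv0 := hpos r₀ hr₀.le
    have hq : 0 < r / r₀ := div_pos hr0 hr₀
    rw [← Real.log_le_log_iff (hpos r hr0.le) (mul_pos hv0 (rpow_pos_of_pos hq _)),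
      Real.log_mul hv0.ne' (rpow_pos_of_pos hq _).ne', Real.log_rpow hq,
      Real.log_div hr0.ne' hr₀.ne']
    linarith
end

section
/- Let n ≥ 3 be an integer, let η > 0, let m ∈ (0,1), let ρ₁ and β be real numbers, and let α = (2β + ρ₁)/(1−m). Let v be a radial solution of (E) on [0,∞), and define w : ℝ → ℝ by w(s) = e^{2s}·v(e^{s})^{1−m}. Then w is positive, twice continuously differentiable, and satisfies for all s ∈ ℝ: w''(s) = ((1−2m)/(1−m))·w'(s)²/w(s) − ((n−2−(n+2)m)/(1−m))·w'(s) − (β/(n−1))·w(s)·w'(s) − (ρ₁/(n−1))·w(s)² + (2(n−2−nm)/(1−m))·w(s). -/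
open Real Set Filter

theorem stmt16 (n : ℕ) (hn : 3 ≤ n) (m α β η ρ₁ : ℝ) (hη : 0 < η)
    (hm : 0 < m) (hm1 : m < 1) (hα : α = (2 * β + ρ₁) / (1 - m))
    (v : ℝ → ℝ) (hv : IsRadialSol n m α β η v)
    (w : ℝ → ℝ)
    (hw : ∀ s : ℝ, w s = Real.exp (2 * s) * v (Real.exp s) ^ (1 - m)) :
    (∀ s : ℝ, 0 < w s) ∧
    ContDiff ℝ 2 w ∧
    (∀ s : ℝ, deriv (deriv w) s
      = ((1 - 2 * m) / (1 - m)) * (deriv w s) ^ 2 / w s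
        - (((n : ℝ) - 2 - ((n : ℝ) + 2) * m) / (1 - m)) * deriv w s
        - (β / ((n : ℝ) - 1)) * w s * deriv w s
        - (ρ₁ / ((n : ℝ) - 1)) * (w s) ^ 2
        + (2 * ((n : ℝ) - 2 - (n : ℝ) * m) / (1 - m)) * w s) := by
  obtain ⟨hpos, -, hC, -, -, hode⟩ := hv
  have hvp : ∀ r : ℝ, 0 < r → 0 < v r := fun r hr => hpos r hr.le
  have hCA : ∀ r : ℝ, 0 < r → ContDiffAt ℝ 2 v r := fun r hr =>
    hC.contDiffAt (isOpen_Ioi.mem_nhds hr)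
  have hd1 : ∀ r : ℝ, 0 < r → HasDerivAt v (deriv v r) r := fun r hr =>
    ((hCA r hr).differentiableAt (by norm_num)).hasDerivAt
  have hC1 : ContDiffOn ℝ 1 (deriv v) (Set.Ioi (0:ℝ)) :=
    ((contDiffOn_succ_iff_deriv_of_isOpen (n := 1) isOpen_Ioi).1 hC).2.2
  have hd2 : ∀ r : ℝ, 0 < r → HasDerivAt (deriv v) (deriv (deriv v) r) r := fun r hr =>
    ((hC1.contDiffAt (isOpen_Ioi.mem_nhds hr)).differentiableAt (by norm_num)).hasDerivAt
  have hwpos : ∀ s : ℝ, 0 < w s := fun s => by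
    rw [hw]
    exact mul_pos (Real.exp_pos _) (Real.rpow_pos_of_pos (hvp _ (Real.exp_pos _)) _)
  have hwfun : w = fun s => Real.exp (2 * s) * v (Real.exp s) ^ (1 - m) := funext hw
  refine ⟨hwpos, ?_, ?_⟩
  · rw [contDiff_iff_contDiffAt]
    intro s
    rw [hwfun]
    have h1 : ContDiffAt ℝ 2 (fun s => v (Real.exp s)) s :=
      ContDiffAt.comp s (hCA _ (Real.exp_pos s)) Real.contDiff_exp.contDiffAt
    have h2 : ContDiffAt ℝ 2 (fun s : ℝ => Real.exp (2 * s)) s := by fun_prop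
    exact h2.mul (h1.rpow_const_of_ne (hvp _ (Real.exp_pos s)).ne')
  have hm_d1 : ∀ r : ℝ, 0 < r →
      HasDerivAt (fun s => v s ^ m) (deriv v r * m * v r ^ (m - 1)) r := fun r hr =>
    (hd1 r hr).rpow_const (Or.inl (hvp r hr).ne')
  have hm_d2 : ∀ r : ℝ, 0 < r → deriv (deriv (fun s => v s ^ m)) r =
      deriv (deriv v) r * m * v r ^ (m - 1)
        + deriv v r * m * (deriv v r * (m - 1) * v r ^ (m - 1 - 1)) := by
    intro r hr
    have he : deriv (fun s => v s ^ m) =ᶠ[nhds r]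
        fun r => deriv v r * m * v r ^ (m - 1) := by
      filter_upwards [isOpen_Ioi.mem_nhds hr] with x hx
      exact (hm_d1 x hx).deriv
    rw [he.deriv_eq]
    exact (((hd2 r hr).mul_const m).mul
      ((hd1 r hr).rpow_const (Or.inl (hvp r hr).ne'))).deriv
  have hz : ∀ s : ℝ, HasDerivAt (fun s => Real.exp s * deriv v (Real.exp s) / v (Real.exp s))
      (((Real.exp s * deriv v (Real.exp s)
          + Real.exp s * (deriv (deriv v) (Real.exp s) * Real.exp s)) * v (Real.exp s)
        - Real.exp s * deriv v (Real.exp s) * (deriv v (Real.exp s) * Real.exp s))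
        / v (Real.exp s) ^ 2) s := by
    intro s
    have hE := Real.hasDerivAt_exp s
    have a1 : HasDerivAt (fun s => v (Real.exp s)) (deriv v (Real.exp s) * Real.exp s) s :=
      (hd1 _ (Real.exp_pos s)).comp s hE
    have a2 : HasDerivAt (fun s => deriv v (Real.exp s))
        (deriv (deriv v) (Real.exp s) * Real.exp s) s :=
      (hd2 _ (Real.exp_pos s)).comp s hE
    exact (hE.mul a2).div a1 (hvp _ (Real.exp_pos s)).ne'
  have hw1 : ∀ s : ℝ, HasDerivAt w
      (w s * (2 + (1 - m) * (Real.exp s * deriv v (Real.exp s) / v (Real.exp s)))) s := by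
    intro s
    have hE := Real.hasDerivAt_exp s
    have a1 : HasDerivAt (fun s => v (Real.exp s)) (deriv v (Real.exp s) * Real.exp s) s :=
      (hd1 _ (Real.exp_pos s)).comp s hE
    have hV := hvp _ (Real.exp_pos s)
    have a3 : HasDerivAt (fun s : ℝ => Real.exp (2 * s)) (Real.exp (2 * s) * (2 * 1)) s :=
      ((hasDerivAt_id s).const_mul 2).exp
    have a4 := a3.mul (a1.rpow_const (p := 1 - m) (Or.inl hV.ne'))
    rw [hwfun]
    refine a4.congr_deriv ?_
    rw [Real.rpow_sub_one hV.ne']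
    field_simp
    try ring
  have hwd : deriv w = fun s =>
      w s * (2 + (1 - m) * (Real.exp s * deriv v (Real.exp s) / v (Real.exp s))) :=
    funext fun s => (hw1 s).deriv
  intro s
  have hw2 := ((hw1 s).mul (((hz s).const_mul (1 - m)).const_add 2)).deriv
  have hw2' := (congrArg (fun f => deriv f s) hwd).trans hw2
  beta_reduce at hw2'
  rw [hw2', hwd]
  have hr := Real.exp_pos s
  have hV := hvp _ hr
  have ho := hode _ hr
  rw [hm_d2 _ hr, (hm_d1 _ hr).deriv] at ho
  have hws : w s * v (Real.exp s) ^ (m - 1) = Real.exp s ^ 2 := by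
    rw [hw, mul_assoc, ← Real.rpow_add hV, two_mul, Real.exp_add]
    simp [sq]
  have hW := hwpos s
  rw [Real.rpow_sub_one hV.ne' (m - 1)] at ho
  clear hw2 hw2'
  have hn1 : (n : ℝ) - 1 ≠ 0 := by
    have : (3 : ℝ) ≤ n := by exact_mod_cast hn
    linarith
  have hmm : 1 - m ≠ 0 := by linarith
  have hA := Real.rpow_pos_of_pos hV (m - 1)
  beta_reduce
  clear hode hpos hC hvp hCA hd1 hC1 hd2 hm_d1 hm_d2 hz hw1 hwd hwpos hwfun hw
  generalize Real.exp s = r at *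
  generalize deriv (deriv v) r = q at *
  generalize deriv v r = p at *
  generalize v r ^ (m - 1) = A at *
  generalize v r = V at *
  generalize w s = W at *
  clear hn
  generalize (n : ℝ) = N at *
  have key : q = -((m - 1) * p ^ 2 / V + (N - 1) * p / r)
      - (α * V + β * r * p) * W / (r ^ 2 * (N - 1)) := by
    have hAe : A = r ^ 2 / W := by
      rw [← hws]; field_simp
    rw [hAe] at ho
    field_simp at ho ⊢
    linear_combination ho
  rw [key, hα]
  field_simp
  ring
end
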